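/- Let p be an odd prime. If p ≡ 1 (mod 4), write p = x^2 + 4y^2 with integers x, y; then (−1)^{⌊p/4⌋}·Σ_{k=0}^{p−1} k^2·C(2k,k)^3/(−512)^k ≡ x^2/27 − p/18 + p^2/(216x^2) (mod p^3) and (−1)^{⌊p/4⌋}·Σ_{k=0}^{p−1} k^3·C(2k,k)^3/(−512)^k ≡ −x^2/162 − p/216 − p^2/(1296x^2) (mod p^3). If p ≡ 3 (mod 4) and p ≠ 3, then (−1)^{⌊p/4⌋}·Σ_{k=0}^{p−1} k^2·C(2k,k)^3/(−512)^k ≡ −(1/18)R_1(p) − p/27 (mod p^2) and (−1)^{⌊p/4⌋}·Σ_{k=0}^{p−1} k^3·C(2k,k)^3/(−512)^k ≡ (1/108)R_1(p) − (5/648)p (mod p^2). -/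

import Mathlib

/-- `a ≡ b (mod p^r)` for rationals: the numerator of `a - b` in lowest terms
is divisible by `p^r`. -/
def ratCongr (p r : ℕ) (a b : ℚ) : Prop := (p : ℤ)^r ∣ (a - b).num
/-- `R_1(p) = (2p + 2 - 2^(p-1)) * C((p-1)/2, ⌊p/4⌋)^2`. -/
def R1 (p : ℕ) : ℚ :=
  (2*(p:ℚ) + 2 - 2^(p-1)) * (((p-1)/2).choose (p/4) : ℚ)^2


section ModM1

/-- `QRed N q z`: the rational `q` has denominator prime to `N` and reduces to `z`. -/
def QRed (N : ℕ) (q : ℚ) (z : ZMod N) : Prop :=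
  ∃ a b : ℤ, IsUnit (b : ZMod N) ∧ b ≠ 0 ∧ q * b = a ∧ z * b = a

namespace QRed
variable {N : ℕ} {q r : ℚ} {z w : ZMod N}

theorem int (a : ℤ) : QRed N (a : ℚ) (a : ZMod N) := ⟨a, 1, by simp, by simp, by simp, by simp⟩

theorem nat (a : ℕ) : QRed N (a : ℚ) (a : ZMod N) := by
  simpa using int (N := N) (a : ℤ)

theorem one : QRed N 1 1 := by simpa using nat (N := N) 1
theorem zero : QRed N 0 0 := by simpa using nat (N := N) 0
theorem ofNat (a : ℕ) [a.AtLeastTwo] : QRed N (OfNat.ofNat a) (OfNat.ofNat a) := by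
  have := nat (N := N) (OfNat.ofNat a)
  rwa [Nat.cast_ofNat, Nat.cast_ofNat] at this

theorem add (h : QRed N q z) (h' : QRed N r w) : QRed N (q + r) (z + w) := by
  obtain ⟨a, b, hb, b0, h1, h2⟩ := h
  obtain ⟨c, d, hd, d0, h3, h4⟩ := h'
  refine ⟨a * d + c * b, b * d, by push_cast; exact hb.mul hd, mul_ne_zero b0 d0, ?_, ?_⟩
  · push_cast; linear_combination (d:ℚ) * h1 + (b:ℚ) * h3
  · push_cast; linear_combination (d:ZMod N) * h2 + (b:ZMod N) * h4

theorem mul (h : QRed N q z) (h' : QRed N r w) : QRed N (q * r) (z * w) := by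
  obtain ⟨a, b, hb, b0, h1, h2⟩ := h
  obtain ⟨c, d, hd, d0, h3, h4⟩ := h'
  refine ⟨a * c, b * d, by push_cast; exact hb.mul hd, mul_ne_zero b0 d0, ?_, ?_⟩
  · push_cast; linear_combination (r * d:ℚ) * h1 + (a:ℚ) * h3
  · push_cast; linear_combination (w * d:ZMod N) * h2 + (a:ZMod N) * h4

theorem neg (h : QRed N q z) : QRed N (-q) (-z) := by
  have := (int (N := N) (-1)).mul h
  simpa using this

theorem sub (h : QRed N q z) (h' : QRed N r w) : QRed N (q - r) (z - w) := by
  simpa [sub_eq_add_neg] using h.add h'.neg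

theorem pow (h : QRed N q z) (k : ℕ) : QRed N (q ^ k) (z ^ k) := by
  induction k with
  | zero => simpa using one
  | succ k ih => rw [pow_succ, pow_succ]; exact ih.mul h

theorem sum {ι : Type*} (s : Finset ι) {f : ι → ℚ} {g : ι → ZMod N}
    (h : ∀ i ∈ s, QRed N (f i) (g i)) : QRed N (∑ i ∈ s, f i) (∑ i ∈ s, g i) := by
  classical
  induction s using Finset.induction_on with
  | empty => simpa using zero
  | insert a s ha ih =>
    rw [Finset.sum_insert ha, Finset.sum_insert ha]
    exact (h a (by simp)).add (ih fun i hi => h i (by simp [hi]))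

theorem prod {ι : Type*} (s : Finset ι) {f : ι → ℚ} {g : ι → ZMod N}
    (h : ∀ i ∈ s, QRed N (f i) (g i)) : QRed N (∏ i ∈ s, f i) (∏ i ∈ s, g i) := by
  classical
  induction s using Finset.induction_on with
  | empty => simpa using one
  | insert a s ha ih =>
    rw [Finset.prod_insert ha, Finset.prod_insert ha]
    exact (h a (by simp)).mul (ih fun i hi => h i (by simp [hi]))

theorem uniq (h : QRed N q z) (h' : QRed N q w) : z = w := by
  obtain ⟨a, b, hb, b0, h1, h2⟩ := h
  obtain ⟨c, d, hd, d0, h3, h4⟩ := h'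
  have : (a * d : ℤ) = c * b := by
    have : (a * d : ℚ) = c * b := by rw [← h1, ← h3]; ring
    exact_mod_cast this
  have h5 : (a * d : ZMod N) = c * b := by exact_mod_cast congrArg (Int.cast : ℤ → ZMod N) this
  apply (hb.mul hd).mul_right_cancel
  linear_combination d * h2 - b * h4 + h5

theorem inv (h : QRed N q z) (hN : N ≠ 1) (hz : IsUnit z) : QRed N q⁻¹ z⁻¹ := by
  obtain ⟨a, b, hb, b0, h1, h2⟩ := h
  have hz' := ZMod.mul_inv_of_unit z hz
  have ha : IsUnit (a : ZMod N) := h2 ▸ hz.mul hb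
  have a0 : a ≠ 0 := by
    rintro rfl
    simp only [Int.cast_zero, isUnit_zero_iff] at ha
    apply hN
    have := (ZMod.one_eq_zero_iff (n := N)).1 ha.symm
    exact this
  have hq : q ≠ 0 := by
    rintro rfl
    apply a0
    have : (a : ℚ) = 0 := by rw [← h1]; simp
    exact_mod_cast this
  refine ⟨b, a, ha, a0, ?_, ?_⟩
  · rw [← h1]; field_simp
  · rw [← h2]; linear_combination (b : ZMod N) * hz'

theorem div (h : QRed N q z) (h' : QRed N r w) (hN : N ≠ 1) (hw : IsUnit w) :
    QRed N (q / r) (z * w⁻¹) := by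
  rw [div_eq_mul_inv]; exact h.mul (h'.inv hN hw)

theorem dvd_num (h : QRed N q 0) : (N : ℤ) ∣ q.num := by
  obtain ⟨a, b, hb, b0, h1, h2⟩ := h
  have h3 : (N : ℤ) ∣ a := by
    rw [← ZMod.intCast_zmod_eq_zero_iff_dvd, ← h2]; simp
  have h4 : q.num * b = a * q.den := by
    have : (q.num * b : ℚ) = a * q.den := by
      rw [← h1]; nth_rw 2 [← Rat.num_div_den q]; field_simp
    exact_mod_cast this
  have hc : IsCoprime (N : ℤ) b := by
    rwa [← ZMod.coe_int_isUnit_iff_isCoprime]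
  exact hc.dvd_of_dvd_mul_right (h4 ▸ h3.mul_right _)

end QRed

end ModM1

section ModM2

def rr (u : ℚ) (k : ℕ) : ℚ :=
  (1/2+3*u+k)*(1/2+u+k)*(1/2-u+k)/((1+k)*(1+2*u+k)*(1+u+k))*(-1/8)
def tt (u : ℚ) (k : ℕ) : ℚ := ∏ j ∈ Finset.range k, rr u j
def rb (u : ℚ) (k : ℕ) : ℚ :=
  (1/2+3*u+k)*(1/2+u+k)*(-1/2-u+k)/((1+k)*(3+2*u+k)*(2+u+k))*(-1/8)
def bb (u : ℚ) (k : ℕ) : ℚ := ∏ j ∈ Finset.range k, rb u j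

def TX (u : ℚ) (K : ℕ) : ℚ := ∑ k ∈ Finset.range K, tt u k
def TQ (u : ℚ) (K : ℕ) : ℚ := ∑ k ∈ Finset.range K, (k + (u+1/6)) * tt u k
def TY (u : ℚ) (K : ℕ) : ℚ :=
  ∑ k ∈ Finset.range K, ((k:ℚ)^2 + (2*u+2/9)*k + (2*u+1)*(6*u+1)/36) * tt u k

theorem tt_succ (u : ℚ) (k : ℕ) : tt u (k+1) = tt u k * rr u k := Finset.prod_range_succ _ _
theorem bb_succ (u : ℚ) (k : ℕ) : bb u (k+1) = bb u k * rb u k := Finset.prod_range_succ _ _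

theorem tt_zero_of {u : ℚ} {n k : ℕ} (h : (1/2+3*u+n)*(1/2+u+n)*(1/2-u+n) = 0) (hk : n < k) :
    tt u k = 0 :=
  Finset.prod_eq_zero (Finset.mem_range.2 hk) (by simp only [rr, h]; simp)

theorem sum_stable {u : ℚ} {n K : ℕ} (h : (1/2+3*u+n)*(1/2+u+n)*(1/2-u+n) = 0) (hK : n + 1 ≤ K)
    (f : ℕ → ℚ) :
    ∑ k ∈ Finset.range K, f k * tt u k = ∑ k ∈ Finset.range (n+1), f k * tt u k := by
  symm
  apply Finset.sum_subset
  · intro x; simp only [Finset.mem_range]; omega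
  · intro x _ hx
    simp only [Finset.mem_range, not_lt] at hx
    rw [tt_zero_of h (by omega), mul_zero]

theorem TX_stable {u : ℚ} {n K : ℕ} (h : (1/2+3*u+n)*(1/2+u+n)*(1/2-u+n) = 0) (hK : n + 1 ≤ K) :
    TX u K = TX u (n+1) := by
  have := sum_stable h hK (fun _ => 1)
  simpa [TX] using this
theorem TQ_stable {u : ℚ} {n K : ℕ} (h : (1/2+3*u+n)*(1/2+u+n)*(1/2-u+n) = 0) (hK : n + 1 ≤ K) :
    TQ u K = TQ u (n+1) := sum_stable h hK _
theorem TY_stable {u : ℚ} {n K : ℕ} (h : (1/2+3*u+n)*(1/2+u+n)*(1/2-u+n) = 0) (hK : n + 1 ≤ K) :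
    TY u K = TY u (n+1) := sum_stable h hK _

/-- Conditions for one contiguity step. -/
structure StepOK (u : ℚ) (K : ℕ) : Prop where
  h1 : ∀ j, j + 1 < K → 1+2*u+(j:ℚ) ≠ 0
  h2 : ∀ j, j + 1 < K → 1+u+(j:ℚ) ≠ 0
  h3 : ∀ j, j + 1 < K → 3+2*u+(j:ℚ) ≠ 0
  h4 : ∀ j, j + 1 < K → 2+u+(j:ℚ) ≠ 0
  a1 : 1+2*u ≠ 0
  a2 : 1+u ≠ 0
  b1 : 6*u+1 ≠ 0
  b3 : 6*u+5 ≠ 0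
  K0 : 0 < K
  hK : (1/2+3*u+(K-1:ℕ))*(1/2+u+(K-1:ℕ))*(-1/2-u+(K-1:ℕ)) = 0

namespace StepOK
variable {u : ℚ} {K : ℕ}

theorem bK (h : StepOK u K) : bb u K = 0 :=
  Finset.prod_eq_zero (Finset.mem_range.2 (Nat.sub_lt h.K0 Nat.one_pos))
    (by simp only [rb, h.hK]; simp)

theorem brec (h : StepOK u K) {k : ℕ} (hk : k < K) :
    (k+1)*(k+3+2*u)*(k+2+u) * bb u (k+1) =
      -(1/8)*(1/2+3*u+k)*(1/2+u+k)*(k-1/2-u) * bb u k := by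
  rw [bb_succ, rb]
  by_cases hk' : k + 1 < K
  · have := h.h3 k hk'
    have := h.h4 k hk'
    have : (1+k:ℚ) ≠ 0 := by positivity
    field_simp
    ring
  · have hh := h.hK
    have : K - 1 = k := by omega
    rw [this] at hh
    rw [hh]
    linear_combination (1/8) * bb u k * hh

theorem tk (h : StepOK u K) {k : ℕ} (hk : k < K) :
    tt u k = bb u k * ((1+2*u+k)*(2+2*u+k)*(1+u+k)*(k-1/2-u)) /
      (-(1+2*u)^2*(1+u)^2) := by
  have a1 := h.a1
  have a2 := h.a2
  induction k with
  | zero =>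
    simp only [tt, bb, Finset.range_zero, Finset.prod_empty]
    rw [eq_div_iff (by simp [a1, a2])]; push_cast; ring
  | succ k ih =>
    rw [tt_succ, bb_succ, ih (by omega), rr, rb]
    have := h.h1 k hk
    have := h.h2 k hk
    have := h.h3 k hk
    have := h.h4 k hk
    have : (1+k:ℚ) ≠ 0 := by positivity
    push_cast
    field_simp
    ring

theorem sk (h : StepOK u K) {k : ℕ} (hk : k < K) :
    tt (u+1) k = bb u k * ((1/2+3*u+k)*(3/2+3*u+k)*(5/2+3*u+k)*(1/2+u+k)) /
      (3/16*(6*u+1)*(6*u+5)*(1+2*u)^2) := by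
  have a1 := h.a1
  have b1 := h.b1
  have b3 := h.b3
  induction k with
  | zero =>
    simp only [tt, bb, Finset.range_zero, Finset.prod_empty]
    rw [eq_div_iff (by positivity)]; push_cast; ring
  | succ k ih =>
    rw [tt_succ, bb_succ, ih (by omega), rr, rb]
    have := h.h3 k hk
    have := h.h4 k hk
    have : (1+k:ℚ) ≠ 0 := by positivity
    have : 1+2*(u+1)+k ≠ 0 := by convert h.h3 k hk using 1; ring
    have : 1+(u+1)+k ≠ 0 := by convert h.h4 k hk using 1; ring
    push_cast
    field_simp
    ring

theorem tele (h : StepOK u K) (q : ℚ → ℚ) (f g : ℕ → ℚ) 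
    (hf : ∀ k : ℕ, f k * ((1/2+3*u+k)*(3/2+3*u+k)*(5/2+3*u+k)*(1/2+u+k)) * (-(1+2*u)^2*(1+u)^2)
      - g k * ((1+2*u+k)*(2+2*u+k)*(1+u+k)*(k-1/2-u)) * (3/16*(6*u+1)*(6*u+5)*(1+2*u)^2) =
      (-(1/8)*q (k+1)*(1/2+3*u+k)*(1/2+u+k)*(k-1/2-u) - q k*k*(k+2+2*u)*(k+1+u))
      * (-(1+2*u)^2*(1+u)^2) * (3/16*(6*u+1)*(6*u+5)*(1+2*u)^2)) :
    ∑ k ∈ Finset.range K, f k * tt (u+1) k = ∑ k ∈ Finset.range K, g k * tt u k := by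
  rw [← sub_eq_zero, ← Finset.sum_sub_distrib]
  obtain ⟨G, hG⟩ : ∃ G : ℕ → ℚ, ∀ k, G k = q k*k*(k+2+2*u)*(k+1+u)*bb u k := ⟨_, fun _ => rfl⟩
  have : ∀ k ∈ Finset.range K, f k * tt (u+1) k - g k * tt u k = G (k+1) - G k := by
    intro k hk
    rw [Finset.mem_range] at hk
    rw [h.tk hk, h.sk hk, hG, hG]
    have h1 := h.brec hk
    have h2 := hf k
    push_cast
    have e1 : -(1+2*u)^2*(1+u)^2 ≠ 0 := by have := h.a1; have := h.a2; simp [*]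
    have e2 : 3/16*(6*u+1)*(6*u+5)*(1+2*u)^2 ≠ 0 := by
      have := h.a1; have := h.b1; have := h.b3; positivity
    apply mul_right_cancel₀ (mul_ne_zero e1 e2)
    rw [← mul_div_assoc, ← mul_div_assoc, div_sub_div _ _ e2 e1, div_mul_eq_mul_div, div_eq_iff (mul_ne_zero e2 e1)]
    linear_combination bb u k * h2 * (-(1+2*u)^2*(1+u)^2) * (3/16*(6*u+1)*(6*u+5)*(1+2*u)^2)  - q (k+1) * h1 * (-(1+2*u)^2*(1+u)^2)^2 * (3/16*(6*u+1)*(6*u+5)*(1+2*u)^2)^2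
  rw [Finset.sum_congr rfl this, Finset.sum_range_sub, hG, hG]
  simp [h.bK]

set_option maxHeartbeats 4000000 in
theorem rel1 (h : StepOK u K) : TX (u+1) K = (2304*(1+u)^2/((6*u+1)^2*(6*u+5)^2)) * TY u K := by
  have a1 := h.a1
  have b1 := h.b1
  have b3 := h.b3
  have := h.tele (fun k => ((960)+(19968)*u^1+(93696)*u^2+(165888)*u^3+(101376)*u^4)+((7296)+(25344)*u^1+(7680)*u^2+(-27648)*u^3)*k^1+((-12288)+(-79872)*u^1+(-110592)*u^2)*k^2+((-18432)+(-36864)*u^1)*k^3)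
    (fun _ => ((6*u+1)^2*(3*(1+2*u))^2*(6*u+5)^2*(1+2*u))*1) (fun k => (2304*(1+u)^2*(9*(1+2*u)^3))*((k:ℚ)^2 + (2*u+2/9)*k + (2*u+1)*(6*u+1)/36))
    (by intro k; ring)
  simp only [mul_assoc _ _ (tt _ _)] at this
  simp only [← Finset.mul_sum, one_mul] at this
  simp only [TX, TY, TQ]
  rw [div_mul_eq_mul_div, eq_div_iff (by positivity)]
  apply mul_right_cancel₀ (show (9*(1+2*u)^3) ≠ 0 by positivity)
  linear_combination this

set_option maxHeartbeats 4000000 in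
theorem rel2 (h : StepOK u K) : TY (u+1) K = 64/81*(1+u)^2 * TX u K := by
  have a1 := h.a1
  have b1 := h.b1
  have b3 := h.b3
  have := h.tele (fun k => ((-1840/3)+(-95744/9)*u^1+(-636224/9)*u^2+(-2072576/9)*u^3+(-1177856/3)*u^4+(-335872)*u^5+(-113664)*u^6)+((-11360/9)+(-164032/9)*u^1+(-285440/3)*u^2+(-225792)*u^3+(-247296)*u^4+(-101376)*u^5)*k^1+((-8000/9)+(-90880/9)*u^1+(-36864)*u^2+(-54272)*u^3+(-27648)*u^4)*k^2+((-640/3)+(-5888/3)*u^1+(-4608)*u^2+(-3072)*u^3)*k^3)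
    (fun k => ((6*u+1)^2*(3*(1+2*u))^2*(6*u+5)^2*(1+2*u))*((k:ℚ)^2 + (2*(u+1)+2/9)*k + (2*(u+1)+1)*(6*(u+1)+1)/36)) (fun _ => (64/81*(1+u)^2*((6*u+1)^2*(3*(1+2*u))^2*(6*u+5)^2*(1+2*u)))*1)
    (by intro k; ring)
  simp only [mul_assoc _ _ (tt _ _)] at this
  simp only [← Finset.mul_sum, one_mul] at this
  simp only [TX, TY, TQ]
  apply mul_right_cancel₀ (show ((6*u+1)^2*(3*(1+2*u))^2*(6*u+5)^2*(1+2*u)) ≠ 0 by positivity)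
  linear_combination this

set_option maxHeartbeats 4000000 in
theorem rel3 (h : StepOK u K) : TQ (u+1) K = (128*(1+u)^2/(3*((6*u+1)*(6*u+5)))) * TQ u K := by
  have a1 := h.a1
  have b1 := h.b1
  have b3 := h.b3
  have := h.tele (fun k => ((160)+(192)*u^1+(-11520)*u^2+(-54784)*u^3+(-87552)*u^4+(-46080)*u^5)+((-1920)+(-22784)*u^1+(-88576)*u^2+(-138240)*u^3+(-73728)*u^4)*k^1+((-1920)+(-17664)*u^1+(-41472)*u^2+(-27648)*u^3)*k^2+((0))*k^3)
    (fun k => ((6*u+1)^2*(3*(1+2*u))^2*(6*u+5)^2*(1+2*u))*((k:ℚ)+((u+1)+1/6))) (fun k => (128*(1+u)^2*(3*(1+2*u)^3*(6*u+1)*(6*u+5)))*((k:ℚ)+(u+1/6)))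
    (by intro k; ring)
  simp only [mul_assoc _ _ (tt _ _)] at this
  simp only [← Finset.mul_sum, one_mul] at this
  simp only [TX, TY, TQ]
  rw [div_mul_eq_mul_div, eq_div_iff (by positivity)]
  apply mul_right_cancel₀ (show (3*(1+2*u)^3*(6*u+1)*(6*u+5)) ≠ 0 by positivity)
  linear_combination this

end StepOK

end ModM2

section ModM3

theorem stepA (n : ℕ) : StepOK ((n:ℚ)+1/2) (n+2) where
  h1 j _ := by positivity
  h2 j _ := by positivity
  h3 j _ := by positivity
  h4 j _ := by positivity
  a1 := by positivity
  a2 := by positivity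
  b1 := by positivity
  b3 := by positivity
  K0 := by omega
  hK := by
    have : n + 2 - 1 = n + 1 := by omega
    rw [this]; push_cast; ring

theorem termA (n : ℕ) : (1/2+3*((n:ℚ)+1/2)+n)*(1/2+((n:ℚ)+1/2)+n)*(1/2-((n:ℚ)+1/2)+n) = 0 := by ring
theorem termB (n : ℕ) : (1/2+3*(-(n:ℚ)-1/2)+n)*(1/2+(-(n:ℚ)-1/2)+n)*(1/2-(-(n:ℚ)-1/2)+n) = 0 := by ring
theorem termC (n : ℕ) : (1/2+3*(-(2*(n:ℚ)+1)/6)+n)*(1/2+(-(2*(n:ℚ)+1)/6)+n)*(1/2-(-(2*(n:ℚ)+1)/6)+n) = 0 := by ring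

def XA (n : ℕ) := TX ((n:ℚ)+1/2) (n+1)
def YA (n : ℕ) := TY ((n:ℚ)+1/2) (n+1)
def QA (n : ℕ) := TQ ((n:ℚ)+1/2) (n+1)
def XB (n : ℕ) := TX (-(n:ℚ)-1/2) (n+1)
def YB (n : ℕ) := TY (-(n:ℚ)-1/2) (n+1)
def QB (n : ℕ) := TQ (-(n:ℚ)-1/2) (n+1)
def XC (n : ℕ) := TX (-(2*(n:ℚ)+1)/6) (n+1)
def YC (n : ℕ) := TY (-(2*(n:ℚ)+1)/6) (n+1)
def QC (n : ℕ) := TQ (-(2*(n:ℚ)+1)/6) (n+1)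

theorem XA_succ (n : ℕ) : XA (n+1) = (6*(2*n+3)/((3*n+2)*(3*n+4)))^2 * YA n := by
  have h := (stepA n).rel1
  rw [TY_stable (termA n) (by omega)] at h
  have e : ((n+1:ℕ):ℚ)+1/2 = (n+1/2)+1 := by push_cast; ring
  rw [XA, YA, e, h]
  congr 1
  field_simp
  ring
theorem YA_succ (n : ℕ) : YA (n+1) = (4*(2*n+3)/9)^2 * XA n := by
  have h := (stepA n).rel2
  rw [TX_stable (termA n) (by omega)] at h
  have e : ((n+1:ℕ):ℚ)+1/2 = (n+1/2)+1 := by push_cast; ring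
  rw [XA, YA, e, h]
  congr 1
  field_simp
  ring
theorem QA_succ (n : ℕ) : QA (n+1) = (8*(2*n+3)^2/(3*((3*n+2)*(3*n+4)))) * QA n := by
  have h := (stepA n).rel3
  rw [TQ_stable (termA n) (by omega)] at h
  have e : ((n+1:ℕ):ℚ)+1/2 = (n+1/2)+1 := by push_cast; ring
  rw [QA, QA, e, h]
  congr 1
  field_simp
  ring

theorem stepB (n : ℕ) : StepOK (-((n+1+1:ℕ):ℚ)-1/2) (n+1+2) where
  h1 j hj := by
    have : (j:ℚ) + 1 < n+1+2 := by exact_mod_cast hj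
    push_cast; apply ne_of_lt; nlinarith [(Nat.cast_nonneg n : (0:ℚ) ≤ n)]
  h2 j _ := by
    intro h; push_cast at h
    have : (2*(j:ℤ) + 1 - 2*n - 4 : ℚ) = 0 := by push_cast; linarith
    have : (2*(j:ℤ) + 1 - 2*n - 4) = 0 := by exact_mod_cast this
    omega
  h3 j hj := by
    have : (j:ℚ) + 1 < n+1+2 := by exact_mod_cast hj
    intro h; push_cast at h
    have : ((j:ℤ) - 2 * n - 2 : ℚ) = 0 := by push_cast; linarith
    have : ((j:ℤ) - 2 * n - 2) = 0 := by exact_mod_cast this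
    omega
  h4 j _ := by
    intro h; push_cast at h
    have : (2*(j:ℤ) + 1 - 2*n - 2 : ℚ) = 0 := by push_cast; linarith
    have : (2*(j:ℤ) + 1 - 2*n - 2) = 0 := by exact_mod_cast this
    omega
  a1 := by push_cast; apply ne_of_lt; nlinarith [(Nat.cast_nonneg n : (0:ℚ) ≤ n)]
  a2 := by push_cast; apply ne_of_lt; nlinarith [(Nat.cast_nonneg n : (0:ℚ) ≤ n)]
  b1 := by push_cast; apply ne_of_lt; nlinarith [(Nat.cast_nonneg n : (0:ℚ) ≤ n)]
  b3 := by push_cast; apply ne_of_lt; nlinarith [(Nat.cast_nonneg n : (0:ℚ) ≤ n)]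
  K0 := by omega
  hK := by
    have : n + 1 + 2 - 1 = n + 2 := by omega
    rw [this]; push_cast; ring

theorem XB0 : XB 0 = 1 := by simp [XB, TX, tt]
theorem YB0 : YB 0 = 0 := by simp [YB, TY, tt] <;> norm_num
theorem QB0 : QB 0 = -1/3 := by simp [QB, TQ, tt]; norm_num
theorem XB1 : XB 1 = 0 := by simp [XB, TX, tt, Finset.sum_range_succ, Finset.prod_range_succ, rr]; norm_num
theorem YB1 : YB 1 = 16/9 := by simp [YB, TY, tt, Finset.sum_range_succ, Finset.prod_range_succ, rr]; norm_num
theorem QB1 : QB 1 = -1 := by simp [QB, TQ, tt, Finset.sum_range_succ, Finset.prod_range_succ, rr]; norm_num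

theorem YB_succ (n : ℕ) : YB (n+1) = ((3*n+4)*(3*n+2)/(6*(2*n+1)))^2 * XB n := by
  rcases n with _ | n
  · rw [YB1, XB0]; norm_num
  have h := (stepB n).rel1
  have e : -((n+1+1:ℕ):ℚ)-1/2 + 1 = -((n+1:ℕ):ℚ)-1/2 := by push_cast; ring
  rw [e, TX_stable (termB (n+1)) (by omega)] at h
  rw [XB, YB, h, ← mul_assoc]
  symm
  convert one_mul _ using 2
  push_cast
  rw [show 1 + (-((n:ℚ)+1+1)-1/2) = -(2*n+3)/2 by ring, show 6*(-((n:ℚ)+1+1)-1/2)+1 = -(2*(3*n+7)) by ring,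
    show 6*(-((n:ℚ)+1+1)-1/2)+5 = -(2*(3*n+5)) by ring]
  field_simp
  ring
theorem XB_succ (n : ℕ) : XB (n+1) = (9/(4*(2*n+1)))^2 * YB n := by
  rcases n with _ | n
  · rw [XB1, YB0]; norm_num
  have h := (stepB n).rel2
  have e : -((n+1+1:ℕ):ℚ)-1/2 + 1 = -((n+1:ℕ):ℚ)-1/2 := by push_cast; ring
  rw [e, TY_stable (termB (n+1)) (by omega)] at h
  rw [XB, YB, h, ← mul_assoc]
  symm
  convert one_mul _ using 2
  push_cast
  rw [show 1 + (-((n:ℚ)+1+1)-1/2) = -(2*n+3)/2 by ring]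
  field_simp
  ring
theorem QB_succ (n : ℕ) : QB (n+1) = (3*((3*n+4)*(3*n+2))/(8*(2*n+1)^2)) * QB n := by
  rcases n with _ | n
  · rw [QB1, QB0]; norm_num
  have h := (stepB n).rel3
  have e : -((n+1+1:ℕ):ℚ)-1/2 + 1 = -((n+1:ℕ):ℚ)-1/2 := by push_cast; ring
  rw [e, TQ_stable (termB (n+1)) (by omega)] at h
  rw [QB, QB, h, ← mul_assoc]
  symm
  convert one_mul _ using 2
  push_cast
  rw [show 1 + (-((n:ℚ)+1+1)-1/2) = -(2*n+3)/2 by ring, show 6*(-((n:ℚ)+1+1)-1/2)+1 = -(2*(3*n+7)) by ring,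
    show 6*(-((n:ℚ)+1+1)-1/2)+5 = -(2*(3*n+5)) by ring]
  field_simp
  ring

theorem stepC (n : ℕ) (hn : n % 3 ≠ 1) : StepOK (-(2*((n+3:ℕ):ℚ)+1)/6) (n+4) where
  h1 j hj := by
    intro h; push_cast at h
    have : (3*(j:ℤ) -2 * n - 4 : ℚ) = 0 := by push_cast; linarith
    have : (3*(j:ℤ) -2 * n - 4) = 0 := by exact_mod_cast this
    omega
  h2 j _ := by
    intro h; push_cast at h
    have : (6*(j:ℤ) - 2*n - 1 : ℚ) = 0 := by push_cast; linarith
    have : (6*(j:ℤ) - 2*n - 1) = 0 := by exact_mod_cast this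
    omega
  h3 j hj := by
    intro h; push_cast at h
    have : (3*(j:ℤ) -2 * n + 2 : ℚ) = 0 := by push_cast; linarith
    have : (3*(j:ℤ) -2 * n + 2) = 0 := by exact_mod_cast this
    omega
  h4 j _ := by
    intro h; push_cast at h
    have : (6*(j:ℤ) - 2*n + 5 : ℚ) = 0 := by push_cast; linarith
    have : (6*(j:ℤ) - 2*n + 5) = 0 := by exact_mod_cast this
    omega
  a1 := by push_cast; apply ne_of_lt; nlinarith [(Nat.cast_nonneg n : (0:ℚ) ≤ n)]
  a2 := by push_cast; apply ne_of_lt; nlinarith [(Nat.cast_nonneg n : (0:ℚ) ≤ n)]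
  b1 := by push_cast; apply ne_of_lt; nlinarith [(Nat.cast_nonneg n : (0:ℚ) ≤ n)]
  b3 := by push_cast; apply ne_of_lt; nlinarith [(Nat.cast_nonneg n : (0:ℚ) ≤ n)]
  K0 := by omega
  hK := by
    have : n + 4 - 1 = n + 3 := by omega
    rw [this]; push_cast; ring

theorem XC0 : XC 0 = 1 := by simp [XC, TX, tt]
theorem YC0 : YC 0 = 0 := by simp [YC, TY, tt]; norm_num
theorem QC0 : QC 0 = 0 := by simp [QC, TQ, tt]; norm_num
theorem XC2 : XC 2 = 9/4 := by simp [XC, TX, tt, Finset.sum_range_succ, Finset.prod_range_succ, rr]; norm_num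
theorem YC2 : YC 2 = 0 := by simp [YC, TY, tt, Finset.sum_range_succ, Finset.prod_range_succ, rr]; norm_num
theorem QC2 : QC 2 = 0 := by simp [QC, TQ, tt, Finset.sum_range_succ, Finset.prod_range_succ, rr]; norm_num

theorem YC_succ (n : ℕ) (hn : n % 3 ≠ 1) : YC (n+3) = ((n+3)*(n+1)/(2*(2*n+1)))^2 * XC n := by
  have h := (stepC n hn).rel1
  have e : -(2*((n+3:ℕ):ℚ)+1)/6 + 1 = -(2*(n:ℚ)+1)/6 := by push_cast; ring
  rw [e, TX_stable (termC n) (by omega)] at h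
  rw [XC, YC, h, ← mul_assoc]
  symm
  convert one_mul _ using 2
  push_cast
  rw [show 1 + -(2*((n:ℚ)+3)+1)/6 = -(2*n+1)/6 by ring, show 6*(-(2*((n:ℚ)+3)+1)/6)+1 = -(2*(n+3)) by ring,
    show 6*(-(2*((n:ℚ)+3)+1)/6)+5 = -(2*(n+1)) by ring]
  field_simp
  ring
theorem XC_succ (n : ℕ) (hn : n % 3 ≠ 1) : XC (n+3) = (27/(4*(2*n+1)))^2 * YC n := by
  have h := (stepC n hn).rel2
  have e : -(2*((n+3:ℕ):ℚ)+1)/6 + 1 = -(2*(n:ℚ)+1)/6 := by push_cast; ring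
  rw [e, TY_stable (termC n) (by omega)] at h
  rw [XC, YC, h, ← mul_assoc]
  symm
  convert one_mul _ using 2
  push_cast
  rw [show 1 + -(2*((n:ℚ)+3)+1)/6 = -(2*n+1)/6 by ring]
  field_simp
  ring
theorem QC_succ (n : ℕ) (hn : n % 3 ≠ 1) : QC n = (8*(2*n+1)^2/(27*((n+3)*(n+1)))) * QC (n+3) := by
  have h := (stepC n hn).rel3
  have e : -(2*((n+3:ℕ):ℚ)+1)/6 + 1 = -(2*(n:ℚ)+1)/6 := by push_cast; ring
  rw [e, TQ_stable (termC n) (by omega)] at h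
  rw [QC, QC, h]
  congr 1
  push_cast
  rw [show 1 + -(2*((n:ℚ)+3)+1)/6 = -(2*n+1)/6 by ring, show 6*(-(2*((n:ℚ)+3)+1)/6)+1 = -(2*(n+3)) by ring,
    show 6*(-(2*((n:ℚ)+3)+1)/6)+5 = -(2*(n+1)) by ring]
  field_simp
  ring

theorem XA0 : XA 0 = 1 := by simp [XA, TX, tt]
theorem YA0 : YA 0 = 2/9 := by simp [YA, TY, tt]; norm_num
theorem QA0 : QA 0 = 2/3 := by simp [QA, TQ, tt]; norm_num

section closed
open Finset

theorem chain_closed (f : ℕ → ℚ) (c : ℕ → ℚ) (h : ∀ i, f (i+1) = (c i)^2 * f i) (m : ℕ) :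
    f m = (∏ i ∈ range m, c i)^2 * f 0 := by
  induction m with
  | zero => simp
  | succ m ih => rw [h, ih, prod_range_succ]; ring

theorem XA_even (m : ℕ) : XA (2*m) = (∏ i ∈ range m, (8*(4*i+5)*(4*i+3)/(3*(6*i+5)*(6*i+7)) : ℚ))^2 := by
  have := chain_closed (fun m => XA (2*m)) (fun i => (8*(4*i+5)*(4*i+3)/(3*(6*i+5)*(6*i+7)) : ℚ)) ?_ m
  · simpa [XA0] using this
  · intro i
    have : 2*(i+1) = 2*i+1+1 := by ring
    simp only [this]
    rw [XA_succ, YA_succ]; push_cast; field_simp; ring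
theorem YA_even (m : ℕ) : YA (2*m) = (∏ i ∈ range m, (8*(4*i+5)*(4*i+3)/(3*(6*i+2)*(6*i+4)) : ℚ))^2 * (2/9) := by
  have := chain_closed (fun m => YA (2*m)) (fun i => (8*(4*i+5)*(4*i+3)/(3*(6*i+2)*(6*i+4)) : ℚ)) ?_ m
  · simpa [YA0] using this
  · intro i
    have : 2*(i+1) = 2*i+1+1 := by ring
    simp only [this]
    rw [YA_succ, XA_succ]; push_cast; field_simp; ring
theorem XA_odd (m : ℕ) : XA (2*m+1) = (∏ i ∈ range m, (8*(4*i+7)*(4*i+5)/(3*(6*i+8)*(6*i+10)) : ℚ))^2 * (9/8) := by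
  have := chain_closed (fun m => XA (2*m+1)) (fun i => (8*(4*i+7)*(4*i+5)/(3*(6*i+8)*(6*i+10)) : ℚ)) ?_ m
  · have e : XA (2*0+1) = 9/8 := by rw [XA_succ, YA0]; norm_num
    rw [e] at this
    exact this
  · intro i
    have : 2*(i+1)+1 = 2*i+1+1+1 := by ring
    simp only [this]
    rw [XA_succ, YA_succ]; push_cast; field_simp; ring
theorem YA_odd (m : ℕ) : YA (2*m+1) = (∏ i ∈ range m, (8*(4*i+7)*(4*i+5)/(3*(6*i+5)*(6*i+7)) : ℚ))^2 * (16/9) := by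
  have := chain_closed (fun m => YA (2*m+1)) (fun i => (8*(4*i+7)*(4*i+5)/(3*(6*i+5)*(6*i+7)) : ℚ)) ?_ m
  · have e : YA (2*0+1) = 16/9 := by rw [YA_succ, XA0]; norm_num
    rw [e] at this
    exact this
  · intro i
    have : 2*(i+1)+1 = 2*i+1+1+1 := by ring
    simp only [this]
    rw [YA_succ, XA_succ]; push_cast; field_simp; ring
theorem XB_even (m : ℕ) : XB (2*m) = (∏ i ∈ range m, (3*(6*i+4)*(6*i+2)/(8*(4*i+3)*(4*i+1)) : ℚ))^2 := by
  have := chain_closed (fun m => XB (2*m)) (fun i => (3*(6*i+4)*(6*i+2)/(8*(4*i+3)*(4*i+1)) : ℚ)) ?_ m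
  · simpa [XB0] using this
  · intro i
    have : 2*(i+1) = 2*i+1+1 := by ring
    simp only [this]
    rw [XB_succ, YB_succ]; push_cast; field_simp; ring
theorem YB_even (m : ℕ) : YB (2*m) = 0 := by
  have := chain_closed (fun m => YB (2*m)) (fun i => (3*(6*i+7)*(6*i+5)/(8*(4*i+3)*(4*i+1)) : ℚ)) ?_ m
  · simpa [YB0] using this
  · intro i
    have : 2*(i+1) = 2*i+1+1 := by ring
    simp only [this]
    rw [YB_succ, XB_succ]; push_cast; field_simp; ring
theorem XB_odd (m : ℕ) : XB (2*m+1) = 0 := by rw [XB_succ, YB_even, mul_zero]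
theorem YB_odd (m : ℕ) : YB (2*m+1) = (∏ i ∈ range m, (3*(6*i+10)*(6*i+8)/(8*(4*i+5)*(4*i+3)) : ℚ))^2 * (16/9) := by
  have := chain_closed (fun m => YB (2*m+1)) (fun i => (3*(6*i+10)*(6*i+8)/(8*(4*i+5)*(4*i+3)) : ℚ)) ?_ m
  · simpa [YB1] using this
  · intro i
    have : 2*(i+1)+1 = 2*i+1+1+1 := by ring
    simp only [this]
    rw [YB_succ, XB_succ]; push_cast; field_simp; ring
theorem XC_six (s : ℕ) : XC (6*s) = (∏ i ∈ range s, (27*(6*i+3)*(6*i+1)/(8*(12*i+7)*(12*i+1)) : ℚ))^2 := by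
  have := chain_closed (fun m => XC (6*m)) (fun i => (27*(6*i+3)*(6*i+1)/(8*(12*i+7)*(12*i+1)) : ℚ)) ?_ s
  · simpa [XC0] using this
  · intro i
    have : 6*(i+1) = 6*i+3+3 := by ring
    simp only [this]
    rw [XC_succ _ (by omega), YC_succ _ (by omega)]; push_cast; field_simp; ring
theorem YC_six (s : ℕ) : YC (6*s) = 0 := by
  induction s with
  | zero => exact YC0
  | succ s ih =>
    have : 6*(s+1) = 6*s+3+3 := by ring
    rw [this, YC_succ _ (by omega), XC_succ _ (by omega), ih]; simp
theorem QC_three {n : ℕ} (hn : n % 3 ≠ 1) (h : QC n = 0) : QC (n+3) = 0 := by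
  rw [QC_succ n hn] at h
  rcases mul_eq_zero.1 h with h | h
  · exfalso; revert h; positivity
  · exact h
theorem QC_six (s : ℕ) : QC (6*s) = 0 := by
  induction s with
  | zero => exact QC0
  | succ s ih =>
    have : 6*(s+1) = 6*s+3+3 := by ring
    rw [this]; exact QC_three (by omega) (QC_three (by omega) ih)
theorem XC_six2 (s : ℕ) : XC (6*s+2) = (∏ i ∈ range s, (27*(6*i+5)*(6*i+3)/(8*(12*i+11)*(12*i+5)) : ℚ))^2*(9/4) := by
  have := chain_closed (fun m => XC (6*m+2)) (fun i => (27*(6*i+5)*(6*i+3)/(8*(12*i+11)*(12*i+5)) : ℚ)) ?_ s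
  · simpa [XC2] using this
  · intro i
    have : 6*(i+1)+2 = 6*i+2+3+3 := by ring
    simp only [this]
    rw [XC_succ _ (by omega), YC_succ _ (by omega)]; push_cast; field_simp; ring
theorem YC_six2 (s : ℕ) : YC (6*s+2) = 0 := by
  induction s with
  | zero => exact YC2
  | succ s ih =>
    have : 6*(s+1)+2 = 6*s+2+3+3 := by ring
    rw [this, YC_succ _ (by omega), XC_succ _ (by omega), ih]; simp
theorem QC_six2 (s : ℕ) : QC (6*s+2) = 0 := by
  induction s with
  | zero => exact QC2
  | succ s ih =>
    have : 6*(s+1)+2 = 6*s+2+3+3 := by ring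
    rw [this]; exact QC_three (by omega) (QC_three (by omega) ih)
theorem QA_closed (n : ℕ) : QA n = (∏ i ∈ range n, (8*(2*i+3)^2/(3*((3*i+2)*(3*i+4))) : ℚ)) * (2/3) := by
  induction n with
  | zero => simp [QA0]
  | succ n ih => rw [QA_succ, ih, prod_range_succ]; ring
theorem QB_closed (n : ℕ) : QB n = (∏ i ∈ range n, (3*((3*i+4)*(3*i+2))/(8*(2*i+1)^2) : ℚ)) * (-1/3) := by
  induction n with
  | zero => simp [QB0]
  | succ n ih => rw [QB_succ, ih, prod_range_succ]; ring

end closed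

end ModM3

section ModM4

/-- quadratic functions in `p y` -/
def Quad {R : Type*} [CommRing R] (P : R) (f : R → R) : Prop :=
  ∃ c a b : R, ∀ y, f y = c + a * P * y + b * P^2 * y^2

namespace Quad
variable {R : Type*} [CommRing R] {P : R} {f g : R → R}

theorem lin (P c a : R) : Quad P (fun y => c + a * P * y) := ⟨c, a, 0, fun y => by ring⟩
theorem const (P c : R) : Quad P (fun _ => c) := ⟨c, 0, 0, fun y => by ring⟩
theorem add (hf : Quad P f) (hg : Quad P g) : Quad P (fun y => f y + g y) := by
  obtain ⟨c, a, b, h⟩ := hf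
  obtain ⟨c', a', b', h'⟩ := hg
  exact ⟨c + c', a + a', b + b', fun y => by beta_reduce; rw [h, h']; ring⟩
theorem mul (hP : P^3 = 0) (hf : Quad P f) (hg : Quad P g) : Quad P (fun y => f y * g y) := by
  obtain ⟨c, a, b, h⟩ := hf
  obtain ⟨c', a', b', h'⟩ := hg
  refine ⟨c * c', a * c' + c * a', b * c' + a * a' + c * b', fun y => ?_⟩
  beta_reduce
  rw [h, h']
  linear_combination (a * b' * y^3 + b * a' * y^3 + b * b' * P * y^4) * hP
theorem pow (hP : P^3 = 0) (hf : Quad P f) (k : ℕ) : Quad P (fun y => f y ^ k) := by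
  induction k with
  | zero => simpa using const P 1
  | succ k ih => simpa [pow_succ] using ih.mul hP hf
theorem sum {ι : Type*} (s : Finset ι) {f : ι → R → R} (h : ∀ i ∈ s, Quad P (f i)) :
    Quad P (fun y => ∑ i ∈ s, f i y) := by
  classical
  induction s using Finset.induction_on with
  | empty => simpa using const P 0
  | insert a s ha ih =>
    simp only [Finset.sum_insert ha]
    exact (h a (by simp)).add (ih fun i hi => h i (by simp [hi]))
theorem prod (hP : P^3 = 0) {ι : Type*} (s : Finset ι) {f : ι → R → R} (h : ∀ i ∈ s, Quad P (f i)) :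
    Quad P (fun y => ∏ i ∈ s, f i y) := by
  classical
  induction s using Finset.induction_on with
  | empty => simpa using const P 1
  | insert a s ha ih =>
    simp only [Finset.prod_insert ha]
    exact (h a (by simp)).mul hP (ih fun i hi => h i (by simp [hi]))
theorem comp (hf : Quad P f) (k : R) : Quad P (fun y => f (k * y)) := by
  obtain ⟨c, a, b, h⟩ := hf
  exact ⟨c, a * k, b * k^2, fun y => by beta_reduce; rw [h]; ring⟩
/-- inverse up to product -/
theorem exists_inv (hP : P^3 = 0) (hf : Quad P f) (h0 : IsUnit (f 0)) :
    ∃ g, Quad P g ∧ ∀ y, f y * g y = 1 := by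
  obtain ⟨c, a, b, h⟩ := hf
  have : f 0 = c := by rw [h]; ring
  rw [this] at h0
  obtain ⟨d, hd⟩ := h0.exists_right_inv
  refine ⟨fun y => d + (-a*d^2) * P * y + (a^2*d^3 - b*d^2)*P^2*y^2, ⟨_, _, _, fun y => rfl⟩, fun y => ?_⟩
  rw [h]
  have h2 : c*d - 1 = 0 := by rw [hd]; ring
  linear_combination (1 - a*d*P*y + a^2*d^2*P^2*y^2 - b*d*P^2*y^2) * hd  + (a*(a^2*d^3-b*d^2)*y^3 - a*d^2*b*y^3 + b*(a^2*d^3-b*d^2)*P*y^4) * hP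

theorem lagrange3 (hP : P^3 = 0) (hf : Quad P f) {h g : R} (hh : 2 * h = 1) (hg : 6 * g = 1) :
    8 * f 0 = f h - 2 * f (-h) + 9 * f (-g) := by
  obtain ⟨c, a, b, e⟩ := hf
  have h3 : h = 3 * g := by
    have : 3 * g * (2 * h) = h * (6 * g) := by ring
    rw [hh, hg] at this; linear_combination -this
  rw [e, e, e, e, h3]
  ring
theorem lagrange2 (hP : P^2 = 0) (hf : Quad P f) (h : R) :
    2 * f 0 = f h + f (-h) := by
  obtain ⟨c, a, b, e⟩ := hf
  rw [e, e, e]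
  linear_combination (-2*b*h^2) * hP
end Quad

section ZM
variable {p r : ℕ}

theorem natUnit (hp : p.Prime) (r : ℕ) {a : ℕ} (h : ¬ p ∣ a) : IsUnit (a : ZMod (p^r)) := by
  rw [ZMod.isUnit_iff_coprime]
  exact ((Nat.Prime.coprime_iff_not_dvd hp).2 h).symm.pow_right r

theorem natUnit_lt (hp : p.Prime) (r : ℕ) {a : ℕ} (h0 : 0 < a) (h : a < p) : IsUnit (a : ZMod (p^r)) :=
  natUnit hp r (Nat.not_dvd_of_pos_of_lt h0 h)

theorem pcube : (p : ZMod (p^3))^3 = 0 := by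
  rw [← Nat.cast_pow]; exact ZMod.natCast_self _
theorem psq : (p : ZMod (p^2))^2 = 0 := by
  rw [← Nat.cast_pow]; exact ZMod.natCast_self _

theorem unit_add_nil {R : Type*} [CommRing R] {P c : R} (hP : P^3 = 0) (hc : IsUnit c) (a : R) : IsUnit (c + a * P) := by
  have : IsNilpotent (a * P) := ⟨3, by rw [mul_pow, hP, mul_zero]⟩
  rw [add_comm]
  exact this.isUnit_add_right_of_commute hc (Commute.all _ _)

theorem inv_eq_of_mul {N : ℕ} {a b : ZMod N} (h : a * b = 1) : a⁻¹ = b := by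
  have ha : IsUnit a := IsUnit.of_mul_eq_one _ h
  have := ZMod.inv_mul_of_unit a ha
  calc a⁻¹ = a⁻¹ * (a * b) := by rw [h, mul_one]
    _ = b := by rw [← mul_assoc, this, one_mul]

theorem Quad.inv {N : ℕ} {P : ZMod N} (hP : P^3 = 0) {f : ZMod N → ZMod N} (hf : Quad P f) (h0 : IsUnit (f 0)) :
    Quad P (fun y => (f y)⁻¹) := by
  obtain ⟨g, hg, h⟩ := hf.exists_inv hP h0
  have : (fun y => (f y)⁻¹) = g := funext fun y => inv_eq_of_mul (h y)
  rwa [this]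
theorem Quad.isUnit {R : Type*} [CommRing R] {P : R} (hP : P^3 = 0) {f : R → R} (hf : Quad P f) (h0 : IsUnit (f 0)) (y : R) :
    IsUnit (f y) := by
  obtain ⟨g, hg, h⟩ := hf.exists_inv hP h0
  exact IsUnit.of_mul_eq_one _ (h y)

/-- A family of p-integral rationals `F (p y)` reducing to a quadratic function -/
def QFam (p N : ℕ) (F : ℚ → ℚ) : Prop :=
  ∃ f : ZMod N → ZMod N, Quad (p : ZMod N) f ∧ ∀ yq y, QRed N yq y → QRed N (F (p * yq)) (f y)

namespace QFam
variable {N : ℕ} {F G : ℚ → ℚ}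
theorem const {c : ℚ} {z : ZMod N} (h : QRed N c z) : QFam p N (fun _ => c) :=
  ⟨fun _ => z, Quad.const _ _, fun _ _ _ => h⟩
theorem add (hF : QFam p N F) (hG : QFam p N G) : QFam p N (fun u => F u + G u) := by
  obtain ⟨f, hf, h⟩ := hF
  obtain ⟨g, hg, h'⟩ := hG
  exact ⟨_, hf.add hg, fun yq y hy => (h _ _ hy).add (h' _ _ hy)⟩
theorem mul (hP : (p : ZMod N)^3 = 0) (hF : QFam p N F) (hG : QFam p N G) : QFam p N (fun u => F u * G u) := by
  obtain ⟨f, hf, h⟩ := hF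
  obtain ⟨g, hg, h'⟩ := hG
  exact ⟨_, hf.mul hP hg, fun yq y hy => (h _ _ hy).mul (h' _ _ hy)⟩
theorem sum {ι : Type*} (s : Finset ι) {f : ι → ℚ → ℚ} (h : ∀ i ∈ s, QFam p N (f i)) :
    QFam p N (fun y => ∑ i ∈ s, f i y) := by
  classical
  induction s using Finset.induction_on with
  | empty => simpa using const (p := p) (QRed.zero (N := N))
  | insert a s ha ih =>
    simp only [Finset.sum_insert ha]
    exact (h a (by simp)).add (ih fun i hi => h i (by simp [hi]))
theorem prod (hP : (p : ZMod N)^3 = 0) {ι : Type*} (s : Finset ι) {f : ι → ℚ → ℚ} (h : ∀ i ∈ s, QFam p N (f i)) :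
    QFam p N (fun y => ∏ i ∈ s, f i y) := by
  classical
  induction s using Finset.induction_on with
  | empty => simpa using const (p := p) (QRed.one (N := N))
  | insert a s ha ih =>
    simp only [Finset.prod_insert ha]
    exact (h a (by simp)).mul hP (ih fun i hi => h i (by simp [hi]))
theorem lin {c a : ℚ} {z w : ZMod N} (h : QRed N c z) (h' : QRed N a w) : QFam p N (fun u => c + a * u) :=
  ⟨_, Quad.lin (p : ZMod N) z w, fun yq y hy => by
    rw [mul_assoc w]
    exact h.add (h'.mul ((QRed.nat p).mul hy))⟩
theorem inv_lin (hP : (p : ZMod N)^3 = 0) (hN : N ≠ 1) {c a : ℚ} {z w : ZMod N} (h : QRed N c z) (h' : QRed N a w)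
    (hz : IsUnit z) : QFam p N (fun u => (c + a * u)⁻¹) :=
  ⟨fun y => (z + w * p * y)⁻¹, (Quad.lin (p : ZMod N) z w).inv hP (by simpa using hz), fun yq y hy => by
    apply QRed.inv _ hN
    · have := (Quad.lin (p : ZMod N) z w).isUnit hP (by simpa using hz) y
      exact this
    · rw [mul_assoc w]
      exact h.add (h'.mul ((QRed.nat p).mul hy))⟩
end QFam

theorem QRed.half {N : ℕ} (hN : N ≠ 1) {a : ℕ} (h : IsUnit (a : ZMod N)) : QRed N (1/(a:ℚ)) ((a : ZMod N)⁻¹) := by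
  rw [one_div]; exact (QRed.nat a).inv hN h

theorem rr_fam {N : ℕ} (hP : (p : ZMod N)^3 = 0) (hN : N ≠ 1) (h2 : IsUnit ((2:ℕ) : ZMod N)) (k : ℕ)
    (hk : IsUnit ((k+1 : ℕ) : ZMod N)) : QFam p N (fun u => rr u k) := by
  have hh : QRed N (1/2 + k) (((2:ℕ):ZMod N)⁻¹ + k) := by
    have := (QRed.half hN h2).add (QRed.nat k)
    simpa using this
  have h1 : QRed N (1+k) ((k+1 : ℕ) : ZMod N) := by
    have := QRed.nat (N := N) (k+1)
    convert this using 1; push_cast; ring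
  have h8 : QRed N (-1/8) (-((8:ℕ):ZMod N)⁻¹) := by
    have : IsUnit ((8:ℕ) : ZMod N) := by
      have e : ((8:ℕ) : ZMod N) = ((2:ℕ) : ZMod N)^3 := by norm_num
      rw [e]; exact h2.pow 3
    have := (QRed.half hN this).neg
    convert this using 1; norm_num
  have f1 := QFam.lin (p := p) hh (QRed.ofNat 3)
  have f2 := QFam.lin (p := p) hh QRed.one
  have f3 := QFam.lin (p := p) hh QRed.one.neg
  have g1 := QFam.const (p := p) (h1.inv hN hk)
  have g2 := QFam.inv_lin hP hN h1 (QRed.ofNat 2) hk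
  have g3 := QFam.inv_lin hP hN h1 QRed.one hk
  have := ((((((f1.mul hP f2).mul hP f3).mul hP g1).mul hP g2).mul hP g3).mul hP (QFam.const h8))
  convert this using 2 with u
  rw [rr, div_eq_mul_inv, mul_inv, mul_inv]
  rw [show 1 + 2*u+(k:ℚ) = 1 + k + 2 * u by ring, show 1 + u+(k:ℚ) = 1 + k + 1 * u by ring]
  ring

theorem tt_fam {N : ℕ} (hP : (p : ZMod N)^3 = 0) (hN : N ≠ 1) (h2 : IsUnit ((2:ℕ) : ZMod N)) (n : ℕ)
    (hk : ∀ k < n, IsUnit ((k+1 : ℕ) : ZMod N)) : QFam p N (fun u => tt u n) := by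
  apply QFam.prod hP
  intro i hi
  exact rr_fam hP hN h2 i (hk i (Finset.mem_range.1 hi))

theorem TXQY_fam {N : ℕ} (hP : (p : ZMod N)^3 = 0) (hN : N ≠ 1) (h2 : IsUnit ((2:ℕ) : ZMod N))
    (h3 : IsUnit ((3:ℕ) : ZMod N)) (n : ℕ)
    (hk : ∀ k < n, IsUnit ((k+1 : ℕ) : ZMod N)) :
    QFam p N (fun u => TX u (n+1)) ∧ QFam p N (fun u => TQ u (n+1)) ∧ QFam p N (fun u => TY u (n+1)) := by
  have ht : ∀ i ∈ Finset.range (n+1), QFam p N (fun u => tt u i) := fun i hi =>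
    tt_fam hP hN h2 i (fun k hk' => hk k (by have := Finset.mem_range.1 hi; omega))
  have h6 : QRed N (1/6) (((6:ℕ):ZMod N)⁻¹) := by
    have : IsUnit ((6:ℕ) : ZMod N) := by
      have e : ((6:ℕ) : ZMod N) = ((2:ℕ) : ZMod N) * ((3:ℕ) : ZMod N) := by norm_num
      rw [e]; exact h2.mul h3
    exact_mod_cast (QRed.half hN this)
  have h9 : QRed N (1/9) (((9:ℕ):ZMod N)⁻¹) := by
    have : IsUnit ((9:ℕ) : ZMod N) := by
      have e : ((9:ℕ) : ZMod N) = ((3:ℕ) : ZMod N) * ((3:ℕ) : ZMod N) := by norm_num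
      rw [e]; exact h3.mul h3
    exact_mod_cast (QRed.half hN this)
  refine ⟨QFam.sum _ ht, QFam.sum _ fun i hi => ?_, QFam.sum _ fun i hi => ?_⟩
  · refine QFam.mul hP ?_ (ht i hi)
    have := (QFam.lin (p := p) ((QRed.nat i).add h6) QRed.one)
    convert this using 2
    ring
  · refine QFam.mul hP ?_ (ht i hi)
    have e1 := QFam.const (p := p) ((QRed.nat (N := N) i).pow 2)
    have e2 := QFam.lin (p := p) (h9.mul (QRed.ofNat 2)) (QRed.ofNat 2)
    have e3 := QFam.lin (p := p) QRed.one (QRed.ofNat (N := N) 2)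
    have e4 := QFam.lin (p := p) QRed.one (QRed.ofNat (N := N) 6)
    have := (e1.add (e2.mul hP (QFam.const (QRed.nat i)))).add
      ((e3.mul hP e4).mul hP (QFam.const (h6.mul h6)))
    convert this using 2
    ring
end ZM

end ModM4

section ModM5

def SS (p j : ℕ) : ℚ := ∑ k ∈ Finset.range p, (k:ℚ)^j * ((2*k).choose k : ℚ)^3 / (-512)^k

theorem tt0 (k : ℕ) : tt 0 k = ((2*k).choose k : ℚ)^3 / (-512)^k := by
  induction k with
  | zero => simp [tt]
  | succ k ih =>
    rw [tt_succ, ih, rr]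
    have h := Nat.succ_mul_centralBinom_succ k
    simp only [Nat.centralBinom] at h
    have h' : ((k:ℚ)+1) * ((2*(k+1)).choose (k+1) : ℚ) = 2 * (2*k+1) * ((2*k).choose k : ℚ) := by
      exact_mod_cast h
    have h0 : ((k:ℚ)+1) ≠ 0 := by positivity
    have : ((2*(k+1)).choose (k+1) : ℚ) = 2 * (2*k+1) * ((2*k).choose k : ℚ) / ((k:ℚ)+1) := by
      rw [eq_div_iff h0, ← h']; ring
    rw [this, pow_succ (-512:ℚ)]
    have h5 : (-512:ℚ)^k ≠ 0 := by simp
    field_simp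
    ring

theorem SS_eq (p j : ℕ) : SS p j = ∑ k ∈ Finset.range p, (k:ℚ)^j * tt 0 k := by
  unfold SS
  refine Finset.sum_congr rfl fun k _ => ?_
  rw [tt0, mul_div_assoc]

theorem unit512 {p r : ℕ} (hp : p.Prime) (h3 : 3 < p) : IsUnit ((-512 : ℤ) : ZMod (p^r)) := by
  have h2 : IsUnit ((2:ℕ) : ZMod (p^r)) := natUnit_lt hp r (by omega) (by omega)
  have : ((-512 : ℤ) : ZMod (p^r)) = -((2:ℕ) : ZMod (p^r))^9 := by push_cast; norm_num
  rw [this]; exact (h2.pow 9).neg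

theorem tt0_int {p r : ℕ} (hp : p.Prime) (h3 : 3 < p) (hr : r ≠ 0) (k : ℕ) :
    ∃ w, QRed (p^r) (tt 0 k) (((2*k).choose k : ZMod (p^r))^3 * w) := by
  rw [tt0]
  have hN : p^r ≠ 1 := by
    intro h; rw [Nat.pow_eq_one] at h; omega
  have := ((QRed.nat (N := p^r) ((2*k).choose k)).pow 3).div ((QRed.int (-512)).pow k) hN ((unit512 hp h3).pow k)
  push_cast at this
  exact ⟨_, this⟩

theorem tt0_vanish {p r : ℕ} (hp : p.Prime) (h3 : 3 < p) (hr : r ≠ 0) (hr3 : r ≤ 3) {k : ℕ} (hk : (p-1)/2 < k)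
    (hkp : k < p) : QRed (p^r) (tt 0 k) 0 := by
  obtain ⟨w, hw⟩ := tt0_int (r := r) hp h3 hr k
  convert hw using 1
  have : p ∣ (2*k).choose k := by
    have h := hp.two_le
    have hodd := hp.eq_two_or_odd
    have e : 2 * k = k + k := by ring
    rw [e]
    exact hp.dvd_choose_add hkp hkp (by omega)
  obtain ⟨c, hc⟩ := this
  rw [hc]
  have hP : (p : ZMod (p^r))^3 = 0 := by
    have : (p : ZMod (p^r))^r = 0 := by rw [← Nat.cast_pow]; exact ZMod.natCast_self _
    rw [show 3 = r + (3 - r) by omega, pow_add, this, zero_mul]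
  push_cast
  rw [mul_pow, hP]; ring

theorem pcube' {p r : ℕ} (hr3 : r ≤ 3) : (p : ZMod (p^r))^3 = 0 := by
  have : (p : ZMod (p^r))^r = 0 := by rw [← Nat.cast_pow]; exact ZMod.natCast_self _
  rw [show 3 = r + (3 - r) by omega, pow_add, this, zero_mul]

theorem tele3 (K : ℕ) : ∑ k ∈ Finset.range K, (72*(k:ℚ)^3+12*(k:ℚ)^2+6*k+1) * tt 0 k = -64 * (K:ℚ)^3 * tt 0 K := by
  induction K with
  | zero => simp
  | succ K ih =>
    rw [Finset.sum_range_succ, ih, tt_succ, rr]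
    have h0 : (1+(K:ℚ)) ≠ 0 := by positivity
    push_cast
    field_simp
    ring

theorem S23 {p r : ℕ} (hp : p.Prime) (h3 : 3 < p) (hr : r ≠ 0) (hr3 : r ≤ 3) (x0 q0 y0 : ZMod (p^r))
    (hX : QRed (p^r) (TX 0 ((p-1)/2+1)) x0) (hQ : QRed (p^r) (TQ 0 ((p-1)/2+1)) q0)
    (hY : QRed (p^r) (TY 0 ((p-1)/2+1)) y0) :
    ∃ s2 s3, QRed (p^r) (SS p 2) s2 ∧ QRed (p^r) (SS p 3) s3 ∧
      108 * s2 = 108 * y0 - 24 * q0 + x0 ∧ 72 * s3 = -12 * s2 - 6 * q0 := by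
  have hS : ∀ j, ∃ s, QRed (p^r) (SS p j) s ∧ QRed (p^r) (∑ k ∈ Finset.range ((p-1)/2+1), (k:ℚ)^j * tt 0 k) s := by
    intro j
    choose w hw using tt0_int (r := r) hp h3 hr
    have h1 := QRed.sum (N := p^r) (Finset.range ((p-1)/2+1)) (f := fun k => (k:ℚ)^j * tt 0 k)
      (fun k _ => ((QRed.nat k).pow j).mul (hw k))
    refine ⟨_, ?_, h1⟩
    rw [SS_eq]
    have hp2 := hp.two_le
    have e : Finset.range p = Finset.range ((p-1)/2+1) ∪ Finset.Ico ((p-1)/2+1) p := by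
      ext x; simp only [Finset.mem_union, Finset.mem_range, Finset.mem_Ico]; omega
    have hd : Disjoint (Finset.range ((p-1)/2+1)) (Finset.Ico ((p-1)/2+1) p) := by
      rw [Finset.disjoint_left]; intro x; simp only [Finset.mem_range, Finset.mem_Ico]; omega
    rw [e, Finset.sum_union hd]
    have h2 := QRed.sum (N := p^r) (Finset.Ico ((p-1)/2+1) p) (f := fun k => (k:ℚ)^j * tt 0 k) (g := fun _ => 0)
      (fun k hk => by
        rw [Finset.mem_Ico] at hk
        have := ((QRed.nat k).pow j).mul (tt0_vanish (r := r) hp h3 hr hr3 (k := k) (by omega) hk.2)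
        simpa using this)
    have := h1.add h2
    simpa using this
  obtain ⟨s0, h0, h0'⟩ := hS 0
  obtain ⟨s1, h1, h1'⟩ := hS 1
  obtain ⟨s2, h2, h2'⟩ := hS 2
  obtain ⟨s3, h3', _⟩ := hS 3
  refine ⟨s2, s3, h2, h3', ?_, ?_⟩
  all_goals
    have e1 : s0 = x0 := by
      apply h0'.uniq
      convert hX using 1
      simp [TX]
    have e2 : 6 * q0 = 6 * s1 + s0 := by
      apply QRed.uniq ((QRed.ofNat 6).mul hQ)
      convert ((QRed.ofNat 6).mul h1').add h0' using 1
      rw [TQ, Finset.mul_sum, Finset.mul_sum, ← Finset.sum_add_distrib]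
      refine Finset.sum_congr rfl fun k _ => ?_
      ring
  · have e3 : 36 * y0 = 36 * s2 + 8 * s1 + s0 := by
      apply QRed.uniq ((QRed.ofNat 36).mul hY)
      convert (((QRed.ofNat 36).mul h2').add ((QRed.ofNat 8).mul h1')).add h0' using 1
      rw [TY, Finset.mul_sum, Finset.mul_sum, Finset.mul_sum, ← Finset.sum_add_distrib, ← Finset.sum_add_distrib]
      refine Finset.sum_congr rfl fun k _ => ?_
      ring
    linear_combination -3 * e3 + 4 * e2 + e1
  · have e4 : 72 * s3 + 12 * s2 + 6 * s1 + s0 = 0 := by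
      have hh := ((((QRed.ofNat 72).mul h3').add ((QRed.ofNat 12).mul h2)).add ((QRed.ofNat 6).mul h1)).add h0
      apply hh.uniq
      obtain ⟨w, hw⟩ := tt0_int (r := r) hp h3 hr p
      have := ((QRed.int (-64)).mul ((QRed.nat p).pow 3)).mul hw
      rw [pcube' hr3] at this
      simp only [mul_zero, zero_mul] at this
      convert this using 1
      have ht := tele3 p
      push_cast
      rw [← ht, SS_eq, SS_eq, SS_eq, SS_eq, Finset.mul_sum, Finset.mul_sum, Finset.mul_sum, ← Finset.sum_add_distrib, ← Finset.sum_add_distrib, ← Finset.sum_add_distrib]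
      refine Finset.sum_congr rfl fun k _ => ?_
      ring
    linear_combination e4 + e2

end ModM5

section ModM6
open Finset

theorem fam_at {p N : ℕ} {F : ℚ → ℚ} {f : ZMod N → ZMod N}
    (h : ∀ yq y, QRed N yq y → QRed N (F (p * yq)) (f y)) {u yq : ℚ} {y z : ZMod N} (hy : QRed N yq y)
    (hu : u = p * yq) (hz : QRed N (F u) z) : f y = z := by
  subst hu; exact (h _ _ hy).uniq hz

theorem fam_unit {p : ℕ} (hp : p.Prime) (h3 : 3 < p) (r : ℕ) (hr : r ≠ 0) (hr3 : r ≤ 3) {n : ℕ} (hn : p = 2*n+1) :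
    QFam p (p^r) (fun u => TX u (n+1)) ∧ QFam p (p^r) (fun u => TQ u (n+1)) ∧ QFam p (p^r) (fun u => TY u (n+1)) := by
  refine TXQY_fam (pcube' hr3) ?_ (natUnit_lt hp r (by omega) (by omega)) (natUnit_lt hp r (by omega) (by omega)) n ?_
  · intro h; rw [Nat.pow_eq_one] at h; omega
  · intro k hk; exact natUnit_lt hp r (by omega) (by omega)

theorem pr_ne {p r : ℕ} (hp : p.Prime) (hr : r ≠ 0) : p^r ≠ 1 := by
  intro h; rw [Nat.pow_eq_one] at h; have := hp.two_le; omega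

theorem interp2 {p n : ℕ} (hp : p.Prime) (h3 : 3 < p) (hn : p = 2*n+1) {F : ℚ → ℚ} (hF : QFam p (p^2) F)
    {za zb : ZMod (p^2)} (ha : QRed (p^2) (F ((n:ℚ)+1/2)) za) (hb : QRed (p^2) (F (-(n:ℚ)-1/2)) zb) :
    ∃ z0, QRed (p^2) (F 0) z0 ∧ 2 * z0 = za + zb := by
  obtain ⟨f, hf, h⟩ := hF
  have h2 : IsUnit ((2:ℕ) : ZMod (p^2)) := natUnit_lt hp 2 (by omega) (by omega)
  have hh := QRed.half (pr_ne hp (by norm_num)) h2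
  refine ⟨f 0, ?_, ?_⟩
  · have := h 0 0 QRed.zero
    simpa using this
  · rw [hf.lagrange2 psq ((2:ℕ) : ZMod (p^2))⁻¹,
      fam_at h hh (by rw [hn]; push_cast; ring) ha, fam_at h hh.neg (by rw [hn]; push_cast; ring) hb]

theorem interp3 {p n : ℕ} (hp : p.Prime) (h3 : 3 < p) (hn : p = 2*n+1) {F : ℚ → ℚ} (hF : QFam p (p^3) F)
    {za zb zc : ZMod (p^3)} (ha : QRed (p^3) (F ((n:ℚ)+1/2)) za) (hb : QRed (p^3) (F (-(n:ℚ)-1/2)) zb)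
    (hc : QRed (p^3) (F (-(2*(n:ℚ)+1)/6)) zc) :
    ∃ z0, QRed (p^3) (F 0) z0 ∧ 8 * z0 = za - 2 * zb + 9 * zc := by
  obtain ⟨f, hf, h⟩ := hF
  have h2 : IsUnit ((2:ℕ) : ZMod (p^3)) := natUnit_lt hp 3 (by omega) (by omega)
  have h3 : IsUnit ((3:ℕ) : ZMod (p^3)) := natUnit_lt hp 3 (by omega) (by omega)
  have h6 : IsUnit ((6:ℕ) : ZMod (p^3)) := by
    have e : ((6:ℕ) : ZMod (p^3)) = ((2:ℕ) : ZMod (p^3)) * ((3:ℕ) : ZMod (p^3)) := by norm_num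
    rw [e]; exact h2.mul h3
  have hh := QRed.half (pr_ne hp (by norm_num)) h2
  have hg := QRed.half (pr_ne hp (by norm_num)) h6
  refine ⟨f 0, ?_, ?_⟩
  · have := h 0 0 QRed.zero
    simpa using this
  · rw [hf.lagrange3 pcube (h := ((2:ℕ):ZMod (p^3))⁻¹) (g := ((6:ℕ):ZMod (p^3))⁻¹) (by exact_mod_cast ZMod.mul_inv_of_unit _ h2) (by exact_mod_cast ZMod.mul_inv_of_unit _ h6),
      fam_at h hh (by rw [hn]; push_cast; ring) ha, fam_at h hh.neg (by rw [hn]; push_cast; ring) hb,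
      fam_at h hg.neg (by rw [hn]; push_cast; ring) hc]

theorem fact_up {K : Type*} [CommRing K] (a k : ℕ) : ((a+k).factorial : K) = a.factorial * ∏ i ∈ range k, ((a:K) + (i+1)) := by
  induction k with
  | zero => simp
  | succ k ih => rw [← add_assoc, Nat.factorial_succ, prod_range_succ]; push_cast; rw [ih]; ring

theorem fact_down {K : Type*} [CommRing K] (b k : ℕ) : ((b+k).factorial : K) = b.factorial * ∏ i ∈ range k, (((b+k+1 : ℕ):K) - (i+1)) := by
  induction k with
  | zero => simp
  | succ k ih =>
    rw [← add_assoc, Nat.factorial_succ, prod_range_succ']; push_cast; rw [ih]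
    have : ∀ i ∈ range k, (((b+k+1 : ℕ):K) - (i+1)) = (b:K) + (k+1)+1 - ((i+1)+1) := by
      intro i _; push_cast; ring
    rw [prod_congr rfl this]; ring

theorem QA_fact (n : ℕ) : QA n = 2/3 * 2^n * ((2*n+1).factorial:ℚ)^2 / (n.factorial * (3*n+1).factorial) := by
  induction n with
  | zero => rw [QA0]; norm_num
  | succ n ih =>
    rw [QA_succ, ih]
    have e1 : 2*(n+1)+1 = 2*n+1+1+1 := by ring
    have e2 : 3*(n+1)+1 = 3*n+1+1+1+1 := by ring
    rw [e1, e2]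
    simp only [Nat.factorial_succ]
    have h1 := Nat.factorial_ne_zero n
    have h2 := Nat.factorial_ne_zero (3*n+1)
    push_cast
    field_simp
    ring
theorem QB_fact (n : ℕ) : QB n = -1/3 * ((3*n+1).factorial * n.factorial:ℚ) / (2^n * ((2*n).factorial)^2) := by
  induction n with
  | zero => rw [QB0]; norm_num
  | succ n ih =>
    rw [QB_succ, ih]
    have e1 : 2*(n+1) = 2*n+1+1 := by ring
    have e2 : 3*(n+1)+1 = 3*n+1+1+1+1 := by ring
    rw [e1, e2]
    simp only [Nat.factorial_succ]
    have h1 := Nat.factorial_ne_zero n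
    have h2 := Nat.factorial_ne_zero (2*n)
    push_cast
    field_simp
    ring

theorem QA_pform {p n : ℕ} (hn : p = 2*n+1) :
    QA n = 2/3 * 2^n * p * (∏ i ∈ range n, ((p:ℚ) - (i+1))) * (∏ i ∈ range n, ((p:ℚ) + (i+1)))⁻¹ := by
  have h1 : ((3*n+1).factorial : ℚ) = _ := (by rw [show 3*n+1 = 2*n+1+n by ring] : ((3*n+1).factorial : ℚ) = (2*n+1+n).factorial).trans (fact_up (2*n+1) n)
  have h2 : ((2*n).factorial : ℚ) = _ := (by rw [show 2*n = n+n by ring] : ((2*n).factorial : ℚ) = (n+n).factorial).trans (fact_down n n)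
  rw [QA_fact, h1, pow_two, Nat.factorial_succ, Nat.cast_mul, h2]
  rw [show n+n+1 = p by omega, show 2*n+1 = p by omega]
  have f0 : ∏ i ∈ range n, ((p:ℚ) + (i+1)) ≠ 0 := by rw [prod_ne_zero_iff]; intro i _; positivity
  have f1 : ∏ i ∈ range n, ((p:ℚ) - (i+1)) ≠ 0 := by
    rw [show p = n+n+1 by omega]
    intro h; rw [h] at h2; simp at h2; exact Nat.factorial_ne_zero _ h2
  have f2 := Nat.factorial_ne_zero n
  have f3 : (p:ℚ) ≠ 0 := by rw [hn]; positivity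
  field_simp

theorem QB_pform {p n : ℕ} (hn : p = 2*n+1) :
    QB n = -1/3 * (2^n)⁻¹ * p * (∏ i ∈ range n, ((p:ℚ) + (i+1))) * (∏ i ∈ range n, ((p:ℚ) - (i+1)))⁻¹ := by
  have h1 : ((3*n+1).factorial : ℚ) = _ := (by rw [show 3*n+1 = 2*n+1+n by ring] : ((3*n+1).factorial : ℚ) = (2*n+1+n).factorial).trans (fact_up (2*n+1) n)
  have h2 : ((2*n).factorial : ℚ) = _ := (by rw [show 2*n = n+n by ring] : ((2*n).factorial : ℚ) = (n+n).factorial).trans (fact_down n n)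
  rw [QB_fact, h1, pow_two, Nat.factorial_succ, Nat.cast_mul, h2]
  rw [show n+n+1 = p by omega, show 2*n+1 = p by omega]
  have f1 : ∏ i ∈ range n, ((p:ℚ) - (i+1)) ≠ 0 := by
    rw [show p = n+n+1 by omega]
    intro h; rw [h] at h2; simp at h2; exact Nat.factorial_ne_zero _ h2
  have f2 := Nat.factorial_ne_zero n
  field_simp

end ModM6

section ModM6b
open Finset

theorem euler2 {p n : ℕ} (hp : p.Prime) (hn : p = 2*n+1) :
    (p:ℤ) ∣ 2^n - (-1)^((n+1)/2) := by
  haveI := Fact.mk hp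
  have h := legendreSym.at_two (p := p) (by omega)
  have h' := legendreSym.eq_pow p 2
  rw [h, ZMod.χ₈_nat_eq_if_mod_eight, show p/2 = n by omega] at h'
  rw [← ZMod.intCast_zmod_eq_zero_iff_dvd]
  push_cast at h' ⊢
  rw [← h']
  rw [if_neg (by omega)]
  split_ifs with h8
  · have : Even ((n+1)/2) := by rw [Nat.even_iff]; omega
    rw [this.neg_one_pow]; ring
  · have : Odd ((n+1)/2) := by rw [Nat.odd_iff]; omega
    rw [this.neg_one_pow]; ring

theorem euler2Z {p n : ℕ} (hp : p.Prime) (hn : p = 2*n+1) (r : ℕ) :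
    ∃ w : ZMod (p^r), 2^n = (-1)^((n+1)/2) + p * w := by
  obtain ⟨c, hc⟩ := euler2 hp hn
  refine ⟨c, ?_⟩
  have := congrArg (Int.cast : ℤ → ZMod (p^r)) hc
  push_cast at this
  linear_combination this

theorem dvd_prod_sub {R ι : Type*} [CommRing R] {P : R} (s : Finset ι) {f g : ι → R} (h : ∀ i ∈ s, P ∣ f i - g i) :
    P ∣ ∏ i ∈ s, f i - ∏ i ∈ s, g i := by
  classical
  induction s using Finset.induction_on with
  | empty => simp
  | insert a s ha ih =>
    rw [prod_insert ha, prod_insert ha]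
    have h1 := h a (mem_insert_self _ _)
    have h2 := ih (fun i hi => h i (mem_insert_of_mem hi))
    have e : f a * ∏ i ∈ s, f i - g a * ∏ i ∈ s, g i = (f a - g a) * ∏ i ∈ s, f i + g a * (∏ i ∈ s, f i - ∏ i ∈ s, g i) := by ring
    rw [e]
    exact dvd_add (h1.mul_right _) (h2.mul_left _)

/-- representation of the two `Q` node values -/
theorem Q_nodes {p n : ℕ} (hp : p.Prime) (h3 : 3 < p) (hn : p = 2*n+1) {r : ℕ} (hr : r ≠ 0) (hr3 : r ≤ 3) :
    ∃ qa qb z z' w : ZMod (p^r), QRed (p^r) (QA n) qa ∧ QRed (p^r) (QB n) qb ∧ 3 * qa = 2 * p * z ∧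
      3 * qb = - (p * z') ∧ z * z' = 1 ∧ z = (-1)^n * (-1)^((n+1)/2) + p * w := by
  have hN := pr_ne hp hr
  have h3u : IsUnit ((3:ℕ) : ZMod (p^r)) := natUnit_lt hp r (by omega) (by omega)
  have h2u : IsUnit ((2:ℕ) : ZMod (p^r)) := natUnit_lt hp r (by omega) (by omega)
  set A : ZMod (p^r) := ∏ i ∈ range n, ((p:ZMod (p^r)) - (i+1)) with hA
  set B : ZMod (p^r) := ∏ i ∈ range n, ((p:ZMod (p^r)) + (i+1)) with hB
  have rA : QRed (p^r) (∏ i ∈ range n, ((p:ℚ) - (i+1))) A :=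
    QRed.prod _ (fun i _ => (QRed.nat p).sub ((QRed.nat i).add QRed.one))
  have rB : QRed (p^r) (∏ i ∈ range n, ((p:ℚ) + (i+1))) B :=
    QRed.prod _ (fun i _ => (QRed.nat p).add ((QRed.nat i).add QRed.one))
  have hi : ∀ i ∈ range n, IsUnit ((i:ZMod (p^r)) + 1) := by
    intro i hi
    rw [mem_range] at hi
    have := natUnit_lt (a := i+1) hp r (by omega) (by omega)
    push_cast at this; exact this
  have uB : IsUnit B := by
    rw [hB]
    apply IsUnit.prod_iff.2
    intro i hi'
    have := unit_add_nil (pcube' hr3) (hi i hi') (1 : ZMod (p^r))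
    rw [one_mul, add_comm] at this
    exact this
  have uA : IsUnit A := by
    rw [hA]
    apply IsUnit.prod_iff.2
    intro i hi'
    have := unit_add_nil (pcube' hr3) (hi i hi').neg (1 : ZMod (p^r))
    have e : (p:ZMod (p^r)) - (i+1) = -((i:ZMod (p^r)) + 1) + 1 * p := by ring
    rw [e]
    exact this
  have ue : IsUnit ((2:ZMod (p^r))^n) := by
    have := h2u.pow n; push_cast at this; exact this
  have r2 : QRed (p^r) ((2:ℚ)^n) (2^n) := (QRed.nat 2).pow n
  have rt : QRed (p^r) ((1:ℚ)/3) ((3:ℕ):ZMod (p^r))⁻¹ := QRed.half hN h3u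
  have qa : QRed (p^r) (QA n) (((2:ℕ):ZMod (p^r)) * ((3:ℕ):ZMod (p^r))⁻¹ * 2^n * p * A * B⁻¹) := by
    rw [QA_pform hn, show (2:ℚ)/3 = 2 * (1/3) by norm_num]
    exact (((((QRed.nat 2).mul rt).mul r2).mul (QRed.nat p)).mul rA).mul (rB.inv hN uB)
  have qb : QRed (p^r) (QB n) (-((3:ℕ):ZMod (p^r))⁻¹ * (2^n)⁻¹ * p * B * A⁻¹) := by
    rw [QB_pform hn, show (-1:ℚ)/3 = - (1/3) by norm_num]
    exact ((((rt.neg).mul (r2.inv hN ue)).mul (QRed.nat p)).mul rB).mul (rA.inv hN uA)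
  have t3 : (3:ZMod (p^r)) * ((3:ℕ):ZMod (p^r))⁻¹ = 1 := by
    have := ZMod.mul_inv_of_unit _ h3u; exact_mod_cast this
  have tB := ZMod.mul_inv_of_unit _ uB
  have tA := ZMod.mul_inv_of_unit _ uA
  have te := ZMod.mul_inv_of_unit _ ue
  have hd : (p:ZMod (p^r)) ∣ A - ∏ i ∈ range n, (-((p:ZMod (p^r)) + (i+1))) := by
    apply dvd_prod_sub
    intro i _
    exact ⟨2, by ring⟩
  rw [prod_neg, card_range, ← hB] at hd
  obtain ⟨v, hv⟩ := hd
  obtain ⟨w, hw⟩ := euler2Z hp hn r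
  refine ⟨_, _, 2^n * A * B⁻¹, (2^n)⁻¹ * B * A⁻¹, v * 2^n * B⁻¹ + (-1)^n * w, qa, qb, ?_, ?_, ?_, ?_⟩
  · push_cast at *
    linear_combination (2 * 2^n * p * A * B⁻¹) * t3
  · push_cast at *
    linear_combination (- (2^n)⁻¹ * p * B * A⁻¹) * t3
  · calc 2^n * A * B⁻¹ * ((2^n)⁻¹ * B * A⁻¹) = (2^n * (2^n)⁻¹) * (A * A⁻¹) * (B * B⁻¹) := by ring
      _ = 1 := by rw [te, tA, tB]; ring
  · linear_combination (2^n * B⁻¹) * hv + (-1)^n * hw + ((-1)^n * 2^n) * tB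

theorem nodeA_eq (n : ℕ) : QA n = TQ ((n:ℚ)+1/2) (n+1) := rfl
theorem nodeB_eq (n : ℕ) : QB n = TQ (-(n:ℚ)-1/2) (n+1) := rfl
theorem nodeC_eq (n : ℕ) : QC n = TQ (-(2*(n:ℚ)+1)/6) (n+1) := rfl

theorem cancelN {p r : ℕ} (hp : p.Prime) {a : ℕ} (h0 : ¬ p ∣ a) {x y : ZMod (p^r)}
    (h : (a : ZMod (p^r)) * x = a * y) : x = y := (natUnit hp r h0).mul_left_cancel h

theorem Q_three {p m : ℕ} (hp : p.Prime) (h3 : 3 < p) (hm : p = 4*m+3) :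
    ∃ q0, QRed (p^2) (TQ 0 ((2*m+1)+1)) q0 ∧ 6 * q0 = (-1)^m * p := by
  obtain ⟨qa, qb, z, z', w, hqa, hqb, ha, hb, hz, hw⟩ := Q_nodes (n := 2*m+1) hp h3 (by omega) (r := 2) (by norm_num) (by norm_num)
  obtain ⟨q0, hq, h⟩ := interp2 (n := 2*m+1) hp h3 (by omega) (fam_unit hp h3 2 (by norm_num) (by norm_num) (n := 2*m+1) (by omega)).2.1 hqa hqb
  refine ⟨q0, hq, ?_⟩
  have e : (-1:ZMod (p^2))^(2*m+1) * (-1)^((2*m+1+1)/2) = (-1)^m := by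
    rw [show (2*m+1+1)/2 = m+1 by omega, pow_add, pow_mul, pow_succ _ m]; simp
  rw [e] at hw
  have hs : ((-1:ZMod (p^2))^m)^2 = 1 := by rw [← pow_mul, mul_comm, pow_mul]; simp
  set ζ := (-1:ZMod (p^2))^m
  have P2 := psq (p := p)
  linear_combination 3 * h + ha + hb + (p * z' * (2*z+ζ)) * hw + p*z'* hs - p*(2*z-ζ)*hz + (z' * (2*z+ζ) * w) * P2

theorem Q_one {p m : ℕ} (hp : p.Prime) (h3 : 3 < p) (hm : p = 4*m+1) (hC : QC (2*m) = 0) :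
    ∃ q0, QRed (p^3) (TQ 0 (2*m+1)) q0 ∧ 6 * q0 = (-1)^m * p := by
  obtain ⟨qa, qb, z, z', w, hqa, hqb, ha, hb, hz, hw⟩ := Q_nodes (n := 2*m) hp h3 (by omega) (r := 3) (by norm_num) (by norm_num)
  have hqc : QRed (p^3) (QC (2*m)) 0 := by rw [hC]; exact QRed.zero
  obtain ⟨q0, hq, h⟩ := interp3 (n := 2*m) hp h3 (by omega) (fam_unit hp h3 3 (by norm_num) (by norm_num) (n := 2*m) (by omega)).2.1 hqa hqb hqc
  refine ⟨q0, hq, ?_⟩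
  have e : (-1:ZMod (p^3))^(2*m) * (-1)^((2*m+1)/2) = (-1)^m := by
    rw [show (2*m+1)/2 = m by omega, pow_mul]; simp
  rw [e] at hw
  have hs : ((-1:ZMod (p^3))^m)^2 = 1 := by rw [← pow_mul, mul_comm, pow_mul]; simp
  set ζ := (-1:ZMod (p^3))^m
  have P3 := pcube (p := p)
  apply cancelN hp (a := 4) (r := 3)
  · intro h; have := Nat.le_of_dvd (by norm_num) h; have : p = 4 := by omega
    rw [this] at hp; revert hp; norm_num
  push_cast
  linear_combination 3 * h + ha - 2 * hb + (2*p * z' * (z-ζ + p * w)) * hw - 2*p*z'* hs - 2*p*(z-2*ζ)*hz + (2*z' * w^2) * P3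

end ModM6b

section ModM7
open Finset

theorem QRed.congr_z {N : ℕ} {q : ℚ} {z w : ZMod N} (h : QRed N q z) (e : z = w) : QRed N q w := e ▸ h

theorem QRed.finish {p r : ℕ} (hp : p.Prime) (hr : r ≠ 0) {a b : ℚ} {α β : ZMod (p^r)} (k : ℕ) (hk0 : k ≠ 0) (hk : ¬ p ∣ k)
    (ha : QRed (p^r) a α) (hb : QRed (p^r) (k * b) β) (h : k * α = β) : (p:ℤ)^r ∣ (a - b).num := by
  have hu := natUnit hp r hk
  have e : b = 1/(k:ℚ) * (k * b) := by field_simp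
  have hb' : QRed (p^r) b ((k:ZMod (p^r))⁻¹ * β) := by rw [e]; exact (QRed.half (pr_ne hp hr) hu).mul hb
  have := (ha.sub hb').congr_z (w := 0) (by
    rw [← h, ← mul_assoc, ZMod.inv_mul_of_unit _ hu]; ring)
  have := this.dvd_num
  exact_mod_cast this

theorem prime_not_dvd_mul {p a b : ℕ} (hp : p.Prime) (ha : ¬ p ∣ a) (hb : ¬ p ∣ b) : ¬ p ∣ a * b := by
  rw [hp.dvd_mul]; tauto

theorem not_dvd_lt {p a : ℕ} (h0 : 0 < a) (h : a < p) : ¬ p ∣ a := Nat.not_dvd_of_pos_of_lt h0 h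
theorem not_dvd_2lt {p a : ℕ} (h0 : 0 < a) (h1 : a ≠ p) (h : a < 2*p) : ¬ p ∣ a := by
  rintro ⟨c, rfl⟩
  have : c < 2 := by by_contra hc; push Not at hc; nlinarith
  interval_cases c
  · simp at h0
  · simp at h1

theorem natRatio {p r : ℕ} (hp : p.Prime) (hr : r ≠ 0) (a b : ℕ) (hb : ¬ p ∣ b) :
    QRed (p^r) ((a:ℚ)/b) ((a : ZMod (p^r)) * (b : ZMod (p^r))⁻¹) :=
  (QRed.nat a).div (QRed.nat b) (pr_ne hp hr) (natUnit hp r hb)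

theorem X_three {p m : ℕ} (hp : p.Prime) (h3 : 3 < p) (hm : p = 4*m+3) :
    ∃ x0, QRed (p^2) (TX 0 ((2*m+1)+1)) x0 ∧ x0 = 0 := by
  have hb : QRed (p^2) (XB (2*m+1)) 0 := by rw [XB_odd]; exact QRed.zero
  obtain ⟨k, rfl⟩ : ∃ k, m = k+1 := ⟨m-1, by omega⟩
  have ha : QRed (p^2) (XA (2*(k+1)+1)) 0 := by
    have h1 : ∀ i ∈ range k, QRed (p^2) (8*(4*i+7)*(4*i+5)/(3*(6*i+8)*(6*i+10)) : ℚ) _ := fun i hi => by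
      rw [mem_range] at hi
      have := natRatio (r := 2) hp two_ne_zero (8*(4*i+7)*(4*i+5)) (3*(6*i+8)*(6*i+10)) (prime_not_dvd_mul hp (prime_not_dvd_mul hp (not_dvd_lt (by norm_num) h3) (not_dvd_2lt (by omega) (by omega) (by omega)))
        (not_dvd_2lt (by omega) (by omega) (by omega)))
      push_cast at this
      exact this
    have h2 := natRatio (r := 2) hp two_ne_zero (8*(4*k+5)) (3*(6*k+8)*(6*k+10)) (prime_not_dvd_mul hp (prime_not_dvd_mul hp (not_dvd_lt (by norm_num) h3) (not_dvd_2lt (by omega) (by omega) (by omega)))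
        (not_dvd_2lt (by omega) (by omega) (by omega)))
    have e : XA (2*(k+1)+1) = ((p:ℚ)^2) * ((∏ i ∈ range k, (8*(4*i+7)*(4*i+5)/(3*(6*i+8)*(6*i+10)) : ℚ)) * (((8*(4*k+5) : ℕ):ℚ)/((3*(6*k+8)*(6*k+10) : ℕ):ℚ)))^2 * ((9:ℕ)/(8:ℕ)) := by
      rw [XA_odd, prod_range_succ, hm]; push_cast; ring
    rw [e]
    have h8 := natRatio (r := 2) hp two_ne_zero 9 8 (by
      rw [show 8 = 2*2*2 by rfl]
      exact prime_not_dvd_mul hp (prime_not_dvd_mul hp (not_dvd_lt (by norm_num) (by omega)) (not_dvd_lt (by norm_num) (by omega))) (not_dvd_lt (by norm_num) (by omega)))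
    refine ((((QRed.nat p).pow 2).mul (((QRed.prod _ h1).mul h2).pow 2)).mul h8).congr_z ?_
    rw [psq]; ring
  obtain ⟨x0, hx, h⟩ := interp2 (n := 2*(k+1)+1) hp h3 (by omega) (fam_unit hp h3 2 (by norm_num) (by norm_num) (n := 2*(k+1)+1) (by omega)).1 ha hb
  refine ⟨x0, hx, ?_⟩
  apply cancelN hp (a := 2) (r := 2) (not_dvd_lt (by norm_num) (by omega))
  push_cast; rw [h]; ring

theorem odd_prod_shift (m : ℕ) : (∏ i ∈ range (m+1), ((4*m+9:ℚ) + 2*i)) * ((4*m+5)*(4*m+7))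
    = (∏ i ∈ range m, ((4*m+5:ℚ) + 2*i)) * ((6*m+5)*(6*m+7)*(6*m+9)) := by
  have h1 : ∏ i ∈ range (m+1+1+1), ((4*m+5:ℚ) + 2*i) = (∏ i ∈ range m, ((4*m+5:ℚ) + 2*i)) * ((6*m+5)*(6*m+7)*(6*m+9)) := by
    rw [prod_range_succ, prod_range_succ, prod_range_succ]; push_cast; ring
  rw [← h1, prod_range_succ' _ (m+1+1), prod_range_succ' _ (m+1)]
  have : ∀ i ∈ range (m+1), ((4*m+5:ℚ) + 2*((i+1+1 : ℕ):ℚ)) = (4*m+9:ℚ) + 2*i := by intro i _; push_cast; ring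
  rw [prod_congr rfl this]; push_cast; ring

theorem DA_closed (m : ℕ) : (∏ i ∈ range m, (8*(4*i+7)*(4*i+5)/(3*(6*i+5)*(6*i+7)) : ℚ)) * (∏ i ∈ range m, ((4*m+5:ℚ) + 2*i)) * m.factorial
    = 4^m * (2*m+1).factorial := by
  induction m with
  | zero => simp
  | succ m ih =>
    have h := odd_prod_shift m
    have e : ∀ i ∈ range (m+1), ((4*((m+1:ℕ):ℚ)+5) + 2*(i:ℚ)) = (4*m+9:ℚ) + 2*i := by intro i _; push_cast; ring
    rw [prod_congr rfl e, prod_range_succ, show 2*(m+1)+1 = 2*m+1+1+1 by ring]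
    simp only [Nat.factorial_succ (2*m+1+1), Nat.factorial_succ (2*m+1), Nat.factorial_succ m]
    push_cast
    set D := ∏ i ∈ range m, (8*(4*i+7)*(4*i+5)/(3*(6*i+5)*(6*i+7)) : ℚ)
    set F := ∏ i ∈ range m, ((4*m+5:ℚ) + 2*i)
    set F' := ∏ i ∈ range (m+1), ((4*m+9:ℚ) + 2*i)
    have hF : F' = F * ((6*m+5)*(6*m+7)*(6*m+9)) / ((4*m+5)*(4*m+7)) := by
      rw [eq_div_iff (by positivity)]; exact h
    rw [hF]
    have : D * (8*(4*m+7)*(4*m+5)/(3*(6*m+5)*(6*m+7)) : ℚ) * (F * ((6*m+5)*(6*m+7)*(6*m+9)) / ((4*m+5)*(4*m+7))) * ((m+1) * m.factorial)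
      = (D * F * m.factorial) * (8 * (2*m+3) * (m+1)) := by field_simp; ring
    rw [this, ih]; ring

theorem EB_closed0 (m : ℕ) : (∏ i ∈ range m, (3*(6*i+10)*(6*i+8)/(8*(4*i+5)*(4*i+3)) : ℚ)) * ((4*m+2).factorial * m.factorial)
    = 2^m * (2*m+1).factorial * (3*m+2).factorial := by
  induction m with
  | zero => simp
  | succ m ih =>
    rw [prod_range_succ, show 2*(m+1)+1 = 2*m+1+1+1 by ring, show 4*(m+1)+2 = 4*m+2+1+1+1+1 by ring, show 3*(m+1)+2 = 3*m+2+1+1+1 by ring]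
    simp only [Nat.factorial_succ (2*m+1+1), Nat.factorial_succ (2*m+1), Nat.factorial_succ m, Nat.factorial_succ (4*m+2+1+1+1), Nat.factorial_succ (4*m+2+1+1), Nat.factorial_succ (4*m+2+1), Nat.factorial_succ (4*m+2), Nat.factorial_succ (3*m+2+1+1), Nat.factorial_succ (3*m+2+1), Nat.factorial_succ (3*m+2)]
    push_cast
    set D := ∏ i ∈ range m, (3*(6*i+10)*(6*i+8)/(8*(4*i+5)*(4*i+3)) : ℚ)
    have : D * (3*(6*m+10)*(6*m+8)/(8*(4*m+5)*(4*m+3)) : ℚ) * ((4*m+2+1+1+1+1)*((4*m+2+1+1+1)*((4*m+2+1+1)*((4*m+2+1)*(4*m+2).factorial))) * ((m+1)*m.factorial))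
      = D * ((4*m+2).factorial * m.factorial) * (12 * (3*m+5)*(3*m+4)*(2*m+3)*(m+1)*(m+1)) := by field_simp; ring
    rw [this, ih]; ring

theorem EB_closed (m : ℕ) : (∏ i ∈ range m, (3*(6*i+10)*(6*i+8)/(8*(4*i+5)*(4*i+3)) : ℚ)) * (∏ i ∈ range m, (((4*m+3 : ℕ):ℚ) - (i+1))) * m.factorial
    = 2^m * (2*m+1).factorial := by
  have h := EB_closed0 m
  have h2 : ((4*m+2).factorial : ℚ) = (3*m+2).factorial * ∏ i ∈ range m, (((4*m+3 : ℕ):ℚ) - (i+1)) := by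
    have := fact_down (K := ℚ) (3*m+2) m
    rw [show 3*m+2+m = 4*m+2 by ring] at this; exact this
  rw [h2] at h
  have h3 : ((3*m+2).factorial : ℚ) ≠ 0 := by exact_mod_cast Nat.factorial_ne_zero _
  apply mul_left_cancel₀ h3
  linear_combination h

/-- first-order expansion of products -/
theorem prod_first {R : Type*} [CommRing R] {P t : R} (hP : P^2 = 0) (ht : 2 * t = 1) (k : ℕ) (a : ℕ → R) (ha : ∀ i < k, IsUnit (a i)) :
    ∃ h, (∀ c, ∏ i ∈ range k, (c * P + 2 * a i) = 2^k * (∏ i ∈ range k, a i) * (1 + c * P * h)) ∧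
      (∀ c, ∏ i ∈ range k, (c * P + a i) = (∏ i ∈ range k, a i) * (1 + 2 * c * P * h)) := by
  induction k with
  | zero => exact ⟨0, by simp, by simp⟩
  | succ k ih =>
    obtain ⟨h, h1, h2⟩ := ih (fun i hi => ha i (by omega))
    obtain ⟨b, hb⟩ := (ha k (by omega)).exists_right_inv
    refine ⟨h + t * b, fun c => ?_, fun c => ?_⟩
    · rw [prod_range_succ, h1, prod_range_succ, pow_succ]
      linear_combination (2^k * (∏ i ∈ range k, a i) * c^2 * h) * hP - (2^k * (∏ i ∈ range k, a i) * 2 * c * P * t) * hb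
        - (2^k * (∏ i ∈ range k, a i) * c * P) * ht
    · rw [prod_range_succ, h2, prod_range_succ]
      linear_combination ((∏ i ∈ range k, a i) * 2 * c^2 * h) * hP - ((∏ i ∈ range k, a i) * 2 * c * P * t) * hb
        - ((∏ i ∈ range k, a i) * c * P) * ht

theorem odd_fact {K : Type*} [CommRing K] (n : ℕ) : (2:K)^n * n.factorial * ∏ i ∈ range n, (2*(i:K)+1) = (2*n).factorial := by
  induction n with
  | zero => simp
  | succ n ih =>
    rw [prod_range_succ, show 2*(n+1) = 2*n+1+1 by ring, Nat.factorial_succ, Nat.factorial_succ, Nat.factorial_succ]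
    push_cast; rw [← ih]; ring

end ModM7

section ModM7b
open Finset

theorem prod_fact_Z {N : ℕ} (m : ℕ) : ∏ i ∈ range m, ((i:ZMod N)+1) = ((m.factorial : ℕ) : ZMod N) := by
  have := fact_up (K := ZMod N) 0 m
  simp at this; exact this.symm

/-- the key identity for p equal to 3 mod 4, modulo `p^2` -/
theorem key_three {p m : ℕ} (hp : p.Prime) (h3 : 3 < p) (hm : p = 4*m+3) :
    ∃ h : ZMod (p^2), (∀ c : ZMod (p^2), ∏ i ∈ range m, (c * (p:ZMod (p^2)) + 2 * ((i:ZMod (p^2))+1)) = 2^m * ((m.factorial : ℕ) : ZMod (p^2)) * (1 + c * (p:ZMod (p^2)) * h)) ∧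
      (∀ c : ZMod (p^2), ∏ i ∈ range m, (c * (p:ZMod (p^2)) + ((i:ZMod (p^2))+1)) = ((m.factorial : ℕ) : ZMod (p^2)) * (1 + 2 * c * (p:ZMod (p^2)) * h)) ∧
      (-1 : ZMod (p^2))^m * 2^(2*m+1) * (1 + 2 * (p:ZMod (p^2))) * (1 + (p:ZMod (p^2)) * h) = (2^(2*m+1))^2 - 2 - 2 * (p:ZMod (p^2)) := by
  have h2u : IsUnit ((2:ℕ) : ZMod (p^2)) := natUnit_lt hp 2 (by omega) (by omega)
  have P2 := psq (p := p)
  obtain ⟨t, ht⟩ := h2u.exists_right_inv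
  push_cast at ht
  have hu : ∀ i, i + 1 < p → IsUnit ((i:ZMod (p^2))+1) := by
    intro i hi
    have := natUnit_lt (a := i+1) hp 2 (by omega) (by omega)
    push_cast at this; exact this
  obtain ⟨h, h1, h2⟩ := prod_first P2 ht m (fun i => (i:ZMod (p^2))+1) (fun i hi => hu i (by omega))
  obtain ⟨h', h1', h2'⟩ := prod_first P2 ht (m+1) (fun i => ((m+i : ℕ):ZMod (p^2))+1) (fun i hi => hu (m+i) (by omega))
  have hM := prod_fact_Z (N := p^2) m
  have hMn : (m.factorial : ZMod (p^2)) * ∏ i ∈ range (m+1), (((m+i : ℕ):ZMod (p^2))+1) = (((2*m+1).factorial : ℕ) : ZMod (p^2)) := by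
    rw [← hM, ← prod_fact_Z (N := p^2) (2*m+1), show 2*m+1 = m+(m+1) by ring, prod_range_add _ m (m+1)]
  simp only [hM] at h1 h2
  set M : ZMod (p^2) := ((m.factorial : ℕ) : ZMod (p^2)) with hMd
  set L : ZMod (p^2) := ∏ i ∈ range (m+1), (((m+i : ℕ):ZMod (p^2))+1) with hL
  have uM : IsUnit M := natUnit hp 2 (by
    rw [hp.dvd_factorial]; omega)
  have un : IsUnit (((2*m+1).factorial:ℕ): ZMod (p^2)) := natUnit hp 2 (by
    rw [hp.dvd_factorial]; omega)
  have hpc : (p:ZMod (p^2)) = 4*m+3 := by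
    have := congrArg (Nat.cast : ℕ → ZMod (p^2)) hm
    push_cast at this; exact this
  have u2 : IsUnit ((2:ZMod (p^2))^(2*m+1)) := by have := h2u.pow (2*m+1); push_cast at this; exact this
  -- (a)
  have ha : (-1)^(m+1) * 2^(2*m+1) * (1 - p * h') = (1 : ZMod (p^2)) := by
    have o : (2:ZMod (p^2))^m * M * ∏ i ∈ range (m+1), (2*(i:ZMod (p^2))+1) = (((2*m+1).factorial : ℕ) : ZMod (p^2)) := by
      rw [prod_range_succ, ← mul_assoc, odd_fact, Nat.factorial_succ]; push_cast; ring
    rw [← prod_range_reflect] at o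
    have e : ∀ j ∈ range (m+1), (2*((m+1-1-j : ℕ):ZMod (p^2))+1) = - ((-1) * p + 2 * (((m+j : ℕ):ZMod (p^2))+1)) := by
      intro j hj
      rw [mem_range] at hj
      rw [show m+1-1-j = m - j by omega, Nat.cast_sub (by omega), hpc]; push_cast; ring
    rw [prod_congr rfl e, prod_neg, h1', card_range, ← hMn] at o
    have uL : IsUnit (M * L) := by rw [hMn]; exact un
    apply uL.mul_left_cancel
    linear_combination o
  -- (b)
  have hb : (2^(2*m+1))^2 * (1 - p * (h + h')) = (1 : ZMod (p^2)) - 2 * p * (h + h') := by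
    have o := odd_fact (K := ZMod (p^2)) (2*m+1)
    have o' := fact_down (K := ZMod (p^2)) (2*m+1) (2*m+1)
    rw [show 2*m+1+(2*m+1) = 2*(2*m+1) by ring, ← o, show 2*(2*m+1)+1 = p by omega] at o'
    rw [← prod_range_reflect] at o'
    have e : ∀ j ∈ range (2*m+1), (2*((2*m+1-1-j : ℕ):ZMod (p^2))+1) = - ((-1) * p + 2 * ((j:ZMod (p^2))+1)) := by
      intro j hj
      rw [mem_range] at hj
      rw [show 2*m+1-1-j = 2*m - j by omega, Nat.cast_sub (by omega), hpc]; push_cast; ring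
    have e2 : ∀ j ∈ range (2*m+1), ((p:ZMod (p^2)) - (j+1)) = - ((-1) * p + ((j:ZMod (p^2))+1)) := by
      intro j hj; ring
    rw [prod_congr rfl e, prod_neg, prod_congr rfl e2, prod_neg, card_range] at o'
    have q1 : ∏ j ∈ range (2*m+1), ((-1) * (p:ZMod (p^2)) + 2 * ((j:ZMod (p^2))+1)) = 2^(2*m+1) * (M * L) * (1 - p * h) * (1 - p * h') := by
      rw [show range (2*m+1) = range (m+(m+1)) by congr 1; ring, prod_range_add _ m (m+1), h1, h1', show 2*m+1 = m+(m+1) by ring, pow_add 2 m]; ring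
    have q2 : ∏ j ∈ range (2*m+1), ((-1) * (p:ZMod (p^2)) + ((j:ZMod (p^2))+1)) = (M * L) * (1 - 2 * p * h) * (1 - 2 * p * h') := by
      rw [show range (2*m+1) = range (m+(m+1)) by congr 1; ring, prod_range_add _ m (m+1), h2, h2']; ring
    rw [q1, q2, hMn] at o'
    apply un.mul_left_cancel
    apply un.mul_left_cancel
    have s1 : ((-1:ZMod (p^2))^(2*m+1)) = -1 := Odd.neg_one_pow ⟨m, rfl⟩
    rw [s1] at o'
    linear_combination (-1) * o' + (((2*m+1).factorial:ℕ): ZMod (p^2))^2 * (h * h') * (4 - (2^(2*m+1))^2) * P2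
  refine ⟨h, h1, h2, ?_⟩
  have hs : ((-1:ZMod (p^2))^m)^2 = 1 := by rw [← pow_mul, mul_comm, pow_mul]; simp
  rw [pow_succ (-1 : ZMod (p^2)) m] at ha
  set ζ := (-1:ZMod (p^2))^m
  set e := (2:ZMod (p^2))^(2*m+1)
  set P := (p:ZMod (p^2))
  obtain ⟨ε, hε⟩ : ∃ ε, ε = ζ * (-1) * e := ⟨_, rfl⟩
  have e1 : ε = 1 + P * h' := by
    rw [← hε] at ha
    linear_combination (1 + P * h') * ha + ε * h'^2 * P2
  have e2 : e^2 = 1 + 2 * P * h' := by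
    have : e^2 = ε^2 := by rw [hε]; linear_combination (-e^2) * hs
    rw [this, e1]; linear_combination h'^2 * P2
  rw [e2] at hb
  have e3 : P * h = - 3 * (P * h') := by linear_combination hb + (2 * h' * (h+h')) * P2
  have e4 : ζ * e = -(1 + P * h') := by rw [← e1, hε]; ring
  rw [e4, e2, e3]
  linear_combination (2*h' + 6 * h' + 3 *h'^2 + 6 * P * h'^2 - 4 * h') * P2

end ModM7b

section ModM7c
open Finset

theorem rep_of_mul {p r : ℕ} (hp : p.Prime) (hr : r ≠ 0) {a b c : ℚ} {β γ : ZMod (p^r)} (hb : QRed (p^r) b β) (hc : QRed (p^r) c γ)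
    (hu : IsUnit β) (hb0 : b ≠ 0) (h : a * b = c) : ∃ α, QRed (p^r) a α ∧ α * β = γ := by
  have e : a = c / b := by rw [← h]; field_simp
  refine ⟨γ * β⁻¹, ?_, ?_⟩
  · rw [e]; exact hc.div hb (pr_ne hp hr) hu
  · rw [mul_assoc, ZMod.inv_mul_of_unit _ hu, mul_one]

theorem Y_three {p m : ℕ} (hp : p.Prime) (h3 : 3 < p) (hm : p = 4*m+3) :
    ∃ y0, QRed (p^2) (TY 0 ((2*m+1)+1)) y0 ∧
      18 * ((-1)^m * y0) = -((2 * (p:ZMod (p^2)) + 2 - (2^(2*m+1))^2) * ((2*m+1).choose m : ZMod (p^2))^2) := by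
  obtain ⟨h, h1, h2, hkey⟩ := key_three hp h3 hm
  have P2 := psq (p := p)
  have h2u : IsUnit ((2:ℕ) : ZMod (p^2)) := natUnit_lt hp 2 (by omega) (by omega)
  have u2 : IsUnit ((2:ZMod (p^2))^m) := by have := h2u.pow m; push_cast at this; exact this
  have uM : IsUnit ((m.factorial : ℕ) : ZMod (p^2)) := natUnit hp 2 (by
    rw [hp.dvd_factorial]; omega)
  have hpq : (p:ℚ) = 4*m+3 := by rw [hm]; push_cast; ring
  have hpc : (p:ZMod (p^2)) = 4*m+3 := by
    have := congrArg (Nat.cast : ℕ → ZMod (p^2)) hm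
    push_cast at this; exact this
  set M : ZMod (p^2) := ((m.factorial : ℕ) : ZMod (p^2)) with hM
  set C : ZMod (p^2) := ((2*m+1).choose m : ZMod (p^2)) with hC
  have hfac : (2*m+1).factorial = (2*m+1).choose m * (m+1) * m.factorial * m.factorial := by
    have := Nat.choose_mul_factorial_mul_factorial (show m ≤ 2*m+1 by omega)
    rw [← this, show 2*m+1-m = m+1 by omega, Nat.factorial_succ]; ring
  -- node A
  obtain ⟨D, hD, eD⟩ : ∃ D, QRed (p^2) (∏ i ∈ range m, (8*(4*i+7)*(4*i+5)/(3*(6*i+5)*(6*i+7)) : ℚ)) D ∧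
      D = 2^m * C * ((m:ZMod (p^2))+1) * (1 - (p:ZMod (p^2)) * h) := by
    have hcl := DA_closed m
    have e : ∀ i ∈ range m, ((4*m+5:ℚ) + 2*i) = 1 * p + 2 * ((i:ℚ)+1) := by intro i _; rw [hpq]; ring
    rw [prod_congr rfl e, mul_assoc, hfac] at hcl
    have hb : QRed (p^2) ((∏ i ∈ range m, (1 * (p:ℚ) + 2 * ((i:ℚ)+1))) * (m.factorial:ℚ)) (2^m * M * (1 + 1 * (p:ZMod (p^2)) * h) * M) := by
      rw [← h1]
      exact (QRed.prod _ (fun i _ => (QRed.one.mul (QRed.nat p)).add ((QRed.nat 2).mul ((QRed.nat i).add QRed.one)))).mul (QRed.nat _)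
    have hc : QRed (p^2) ((4:ℚ)^m * (((2*m+1).choose m * (m+1) * m.factorial * m.factorial : ℕ):ℚ)) _ := ((QRed.nat 4).pow m).mul (QRed.nat _)
    have uh : IsUnit (1 + 1 * (p:ZMod (p^2)) * h) := IsUnit.of_mul_eq_one (1 - p * h) (by linear_combination (-h^2) * P2)
    obtain ⟨D, hD, e⟩ := rep_of_mul hp two_ne_zero hb hc (((u2.mul uM).mul uh).mul uM) (by
      apply mul_ne_zero
      · rw [prod_ne_zero_iff]; intro i _; positivity
      · positivity) hcl
    refine ⟨D, hD, ?_⟩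
    push_cast at e
    apply ((u2.mul uM).mul uM).mul_left_cancel
    have e4 : (4:ZMod (p^2))^m = 2^m * 2^m := by rw [← mul_pow]; norm_num
    rw [e4] at e
    linear_combination (1 - p * h) * e + (2^m * D * M * M * h^2) * P2
  obtain ⟨E, hE, eE⟩ : ∃ E, QRed (p^2) (∏ i ∈ range m, (3*(6*i+10)*(6*i+8)/(8*(4*i+5)*(4*i+3)) : ℚ)) E ∧
      E = (-1)^m * 2^m * C * ((m:ZMod (p^2))+1) * (1 + 2 * (p:ZMod (p^2)) * h) := by
    have hcl := EB_closed m
    have e : ∀ i ∈ range m, (((4*m+3:ℕ):ℚ) - (i+1)) = - ((-1) * p + ((i:ℚ)+1)) := by intro i _; rw [hpq]; push_cast; ring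
    rw [prod_congr rfl e, mul_assoc, hfac, prod_neg, card_range] at hcl
    have hb : QRed (p^2) ((-1)^m * (∏ i ∈ range m, ((-1) * (p:ℚ) + ((i:ℚ)+1))) * (m.factorial:ℚ)) ((-1)^m * (M * (1 + 2 * (-1) * (p:ZMod (p^2)) * h)) * M) := by
      rw [← h2]
      exact (((QRed.one.neg).pow m).mul (QRed.prod _ (fun i _ => (QRed.one.neg.mul (QRed.nat p)).add (((QRed.nat i).add QRed.one))))).mul (QRed.nat _)
    have hc : QRed (p^2) ((2:ℚ)^m * (((2*m+1).choose m * (m+1) * m.factorial * m.factorial : ℕ):ℚ)) _ := ((QRed.nat 2).pow m).mul (QRed.nat _)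
    have uh : IsUnit (1 + 2 * (-1) * (p:ZMod (p^2)) * h) := IsUnit.of_mul_eq_one (1 + 2 * p * h) (by linear_combination (-4*h^2) * P2)
    have hs : ((-1:ZMod (p^2))^m)^2 = 1 := by rw [← pow_mul, mul_comm, pow_mul]; simp
    obtain ⟨D, hD, e⟩ := rep_of_mul hp two_ne_zero hb hc ((((isUnit_one.neg).pow m).mul (uM.mul uh)).mul uM) (by
      apply mul_ne_zero
      · apply mul_ne_zero
        · exact pow_ne_zero _ (by norm_num)
        · rw [prod_ne_zero_iff]; intro i hi; rw [hpq]
          rw [mem_range] at hi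
          have : (i:ℚ) < m := by exact_mod_cast hi
          apply ne_of_lt; nlinarith
      · positivity) hcl
    refine ⟨D, hD, ?_⟩
    push_cast at e
    apply (uM.mul uM).mul_left_cancel
    linear_combination ((-1)^m * (1 + 2 * p * h)) * e + (4 * ((-1)^m)^2 * D * M * M * h^2) * P2 - (D * M * M) * hs
  have h9 := natRatio (r := 2) hp two_ne_zero 16 9 (by
      rw [show 9 = 3*3 by rfl]
      exact prime_not_dvd_mul hp (not_dvd_lt (by norm_num) (by omega)) (not_dvd_lt (by norm_num) (by omega)))
  have hA : QRed (p^2) (YA (2*m+1)) (D^2 * (16 * (9:ZMod (p^2))⁻¹)) := by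
    rw [YA_odd]
    have := (hD.pow 2).mul h9
    push_cast at this
    exact this
  have hB : QRed (p^2) (YB (2*m+1)) (E^2 * (16 * (9:ZMod (p^2))⁻¹)) := by
    rw [YB_odd]
    have := (hE.pow 2).mul h9
    push_cast at this
    exact this
  obtain ⟨y0, hy, hi⟩ := interp2 (n := 2*m+1) hp h3 (by omega) (fam_unit hp h3 2 (by norm_num) (by norm_num) (n := 2*m+1) (by omega)).2.2 hA hB
  refine ⟨y0, hy, ?_⟩
  have u9 : IsUnit ((9:ℕ) : ZMod (p^2)) := natUnit hp 2 (by
      rw [show 9 = 3*3 by rfl]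
      exact prime_not_dvd_mul hp (not_dvd_lt (by norm_num) (by omega)) (not_dvd_lt (by norm_num) (by omega)))
  have i9 := ZMod.mul_inv_of_unit _ u9
  push_cast at i9
  have hs : ((-1:ZMod (p^2))^m)^2 = 1 := by rw [← pow_mul, mul_comm, pow_mul]; simp
  rw [eD, eE] at hi
  have hs2 : (2:ZMod (p^2))^(2*m+1) = 2 * (2^m)^2 := by ring
  rw [hs2] at hkey ⊢
  set ζ := (-1:ZMod (p^2))^m
  set f := (2:ZMod (p^2))^m
  set P := (p:ZMod (p^2))
  have hm1 : 16 * ((m:ZMod (p^2))+1)^2 = 1 + 2 * P := by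
    have : P + 1 = 4 * ((m:ZMod (p^2)) + 1) := by rw [hpc]; ring
    linear_combination (-(P+1) - 4*(m+1)) * this + P2
  have e18 : 18 * y0 = f^2 * C^2 * (1 + 2 * P) * (2 + 2 * P * h) := by
    have hi' : 2 * y0 = f^2 * C^2 * (16 * ((m:ZMod (p^2))+1)^2) * ((1 - P * h)^2 + (1 + 2 * P * h)^2) * (9:ZMod (p^2))⁻¹ := by
      linear_combination hi + f^2 * C^2 * (16 * ((m:ZMod (p^2))+1)^2) * (1 + 2 * P * h)^2 * (9:ZMod (p^2))⁻¹ * hs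
    rw [hm1] at hi'
    linear_combination 9 * hi' + f^2 * C^2 * (1+2*P)* ((1 - P * h)^2 + (1 + 2 * P * h)^2) * i9 + 5 * h^2 * f^2 * C^2 * (1+2*P) * P2
  linear_combination ζ * e18 + C^2 * hkey

theorem case_three {p : ℕ} (hp : p.Prime) (h4 : p % 4 = 3) (hp3 : p ≠ 3) :
      (p:ℤ)^2 ∣ ((-1:ℚ)^(p/4) * SS p 2 - (-(1/18)*((2*(p:ℚ) + 2 - 2^(p-1)) * (((p-1)/2).choose (p/4) : ℚ)^2) - (p:ℚ)/27)).num ∧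
      (p:ℤ)^2 ∣ ((-1:ℚ)^(p/4) * SS p 3 - (1/108*((2*(p:ℚ) + 2 - 2^(p-1)) * (((p-1)/2).choose (p/4) : ℚ)^2) - 5/648*(p:ℚ))).num := by
  obtain ⟨m, hm⟩ : ∃ m, p = 4*m+3 := ⟨p/4, by omega⟩
  have h3 : 3 < p := by omega
  obtain ⟨x0, hX, ex⟩ := X_three hp h3 hm
  obtain ⟨q0, hQ, eq⟩ := Q_three hp h3 hm
  obtain ⟨y0, hY, ey⟩ := Y_three hp h3 hm
  have hn : (p-1)/2 = 2*m+1 := by omega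
  obtain ⟨s2, s3, hs2, hs3, e2, e3⟩ := S23 hp h3 two_ne_zero (by norm_num) x0 q0 y0 (by rw [hn]; exact hX) (by rw [hn]; exact hQ) (by rw [hn]; exact hY)
  have hd : p/4 = m := by omega
  have hp1 : p - 1 = (2*m+1)*2 := by omega
  have rη : QRed (p^2) ((-1:ℚ)^m) ((-1)^m) := QRed.one.neg.pow m
  have hR : QRed (p^2) ((2*(p:ℚ) + 2 - (2^(2*m+1))^2) * ((2*m+1).choose m : ℚ)^2) ((2*(p:ZMod (p^2)) + 2 - (2^(2*m+1))^2) * ((2*m+1).choose m : ZMod (p^2))^2) := by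
    have := (((((QRed.nat 2).mul (QRed.nat p)).add (QRed.nat 2)).sub (((QRed.nat 2).pow (2*m+1)).pow 2)).mul ((QRed.nat (N := p^2) ((2*m+1).choose m)).pow 2))
    push_cast at this
    exact this
  have hs : ((-1:ZMod (p^2))^m)^2 = 1 := by rw [← pow_mul, mul_comm, pow_mul]; simp
  rw [hd, hn, hp1, pow_mul]
  have n2 : ¬ p ∣ 2 := not_dvd_lt (by norm_num) (by omega)
  have n3 : ¬ p ∣ 3 := not_dvd_lt (by norm_num) (by omega)
  have n108 : ¬ p ∣ 108 := by
    rw [show 108 = 2*2*(3*3*3) by rfl]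
    exact prime_not_dvd_mul hp (prime_not_dvd_mul hp n2 n2) (prime_not_dvd_mul hp (prime_not_dvd_mul hp n3 n3) n3)
  have n648 : ¬ p ∣ 648 := by
    rw [show 648 = 2*3*108 by rfl]
    exact prime_not_dvd_mul hp (prime_not_dvd_mul hp n2 n3) n108
  set R := (2*(p:ℚ) + 2 - (2^(2*m+1))^2) * ((2*m+1).choose m : ℚ)^2
  set R' := (2*(p:ZMod (p^2)) + 2 - (2^(2*m+1))^2) * ((2*m+1).choose m : ZMod (p^2))^2
  set ζ := (-1:ZMod (p^2))^m
  constructor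
  · refine QRed.finish hp two_ne_zero 108 (by norm_num) n108 (rη.mul hs2) (β := -(((6:ℕ):ZMod (p^2)) * R') - ((4:ℕ):ZMod (p^2)) * (p:ZMod (p^2))) ?_ ?_
    · have := (((QRed.nat 6).mul hR).neg).sub ((QRed.nat 4).mul (QRed.nat (N := p^2) p))
      convert this using 1
      push_cast; ring
    · push_cast
      linear_combination ζ * e2 + 6 * ey - 4 * ζ * eq - 4 * p * hs + ζ * ex
  · refine QRed.finish hp two_ne_zero 648 (by norm_num) n648 (rη.mul hs3) (β := (((6:ℕ):ZMod (p^2)) * R') - ((5:ℕ):ZMod (p^2)) * (p:ZMod (p^2))) ?_ ?_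
    · have := (((QRed.nat 6).mul hR)).sub ((QRed.nat 5).mul (QRed.nat (N := p^2) p))
      convert this using 1
      push_cast; ring
    · push_cast
      linear_combination 9 * ζ * e3 - ζ * e2 - 6 * ey + 4 * ζ * eq + 4 * p * hs - ζ * ex - 9 * ζ * eq - 9 * p * hs

end ModM7c

section ModM8
open Finset

section GFun
variable {p : ℕ}

theorem isUnit_iff_P [Fact p.Prime] (x : ZMod (p^3)) : IsUnit x ↔ ¬ (p : ZMod (p^3)) ∣ x := by
  have hp : p.Prime := Fact.out
  haveI : Nontrivial (ZMod (p^3)) := ZMod.nontrivial_iff.2 (pr_ne hp (by norm_num))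
  constructor
  · intro h hd
    have : IsUnit (p : ZMod (p^3)) := isUnit_of_dvd_unit hd h
    have h3 := this.pow 3
    rw [pcube] at h3
    exact not_isUnit_zero h3
  · intro h
    have e : ((x.val : ℕ) : ZMod (p^3)) = x := ZMod.natCast_zmod_val x
    rw [← e]
    apply natUnit hp
    rintro ⟨c, hc⟩
    apply h
    rw [← e, hc]
    push_cast
    exact dvd_mul_right _ _

theorem P_isUnit_add [Fact p.Prime] (x y : ZMod (p^3)) : IsUnit (x + (p:ZMod (p^3)) * y) ↔ IsUnit x := by
  rw [isUnit_iff_P, isUnit_iff_P, dvd_add_left (dvd_mul_right _ _)]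

theorem P_prime [Fact p.Prime] {x y : ZMod (p^3)} (h : (p : ZMod (p^3)) ∣ x * y) :
    (p : ZMod (p^3)) ∣ x ∨ (p : ZMod (p^3)) ∣ y := by
  by_contra hc
  push Not at hc
  have := ((isUnit_iff_P x).2 hc.1).mul ((isUnit_iff_P y).2 hc.2)
  exact (isUnit_iff_P _).1 this h

open Classical in
noncomputable def hG (p : ℕ) (x : ZMod (p^3)) : ZMod (p^3) := if IsUnit x then -x else -1

theorem hG_unit {x : ZMod (p^3)} (h : IsUnit x) : hG p x = -x := by rw [hG, if_pos h]
theorem hG_non {x : ZMod (p^3)} (h : ¬ IsUnit x) : hG p x = -1 := by rw [hG, if_neg h]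
theorem hG_isUnit (x : ZMod (p^3)) : IsUnit (hG p x) := by
  by_cases h : IsUnit x
  · rw [hG_unit h]; exact h.neg
  · rw [hG_non h]; exact isUnit_one.neg

theorem sq_one_cases [Fact p.Prime] (h3 : 3 < p) {u : ZMod (p^3)} (h : u * u = 1) : u = 1 ∨ u = -1 := by
  have hp : p.Prime := Fact.out
  have e : (u - 1) * (u + 1) = 0 := by linear_combination h
  by_cases h1 : IsUnit (u - 1)
  · right
    have := h1.mul_left_cancel (e.trans (mul_zero _).symm)
    linear_combination this
  · left
    rw [isUnit_iff_P, not_not] at h1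
    obtain ⟨c, hc⟩ := h1
    have h2 : IsUnit ((2:ℕ) : ZMod (p^3)) := natUnit_lt hp 3 (by omega) (by omega)
    have : IsUnit (u + 1) := by
      have := (P_isUnit_add ((2:ℕ):ZMod (p^3)) c).2 h2
      rw [← hc] at this
      convert this using 1
      push_cast; ring
    have := this.mul_right_cancel (e.trans (zero_mul _).symm)
    linear_combination this

theorem hG_prod [Fact p.Prime] (h3 : 3 < p) : ∏ x : ZMod (p^3), hG p x = 1 := by
  classical
  have hp : p.Prime := Fact.out
  haveI : Nontrivial (ZMod (p^3)) := ZMod.nontrivial_iff.2 (pr_ne hp (by norm_num))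
  have h2 : IsUnit ((2:ℕ) : ZMod (p^3)) := natUnit_lt hp 3 (by omega) (by omega)
  have hinv : ∀ x : ZMod (p^3), IsUnit x → x * x⁻¹ = 1 := fun x h => ZMod.mul_inv_of_unit x h
  have hinvu : ∀ x : ZMod (p^3), IsUnit x → IsUnit x⁻¹ := fun x h =>
    IsUnit.of_mul_eq_one x (by rw [mul_comm]; exact hinv x h)
  let σ : ZMod (p^3) → ZMod (p^3) := fun x => if x = 0 then 1 else if x = 1 then 0 else
    if IsUnit x then x⁻¹ else -x
  refine Finset.prod_involution (fun x _ => σ x) ?_ ?_ (fun _ _ => mem_univ _) ?_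
  · intro x _
    by_cases h0 : x = 0
    · subst h0; simp only [σ, if_true]
      rw [hG_non not_isUnit_zero, hG_unit isUnit_one]; ring
    by_cases h1 : x = 1
    · subst h1; simp only [σ, if_true, one_ne_zero, if_false]
      rw [hG_non not_isUnit_zero, hG_unit isUnit_one]; ring
    by_cases hu : IsUnit x
    · simp only [σ, h0, h1, hu, if_false, if_true]
      rw [hG_unit hu, hG_unit (hinvu x hu)]; linear_combination hinv x hu
    · simp only [σ, h0, h1, hu, if_false]
      rw [hG_non hu, hG_non (fun h => hu (by simpa using h.neg))]; ring
  · intro x _ hx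
    by_cases h0 : x = 0
    · subst h0; simp [σ]
    by_cases h1 : x = 1
    · subst h1; simp [σ]
    by_cases hu : IsUnit x
    · simp only [σ, h0, h1, hu, if_false, if_true]
      intro h
      have := hinv x hu
      rw [h] at this
      rcases sq_one_cases h3 this with h | h
      · exact h1 h
      · apply hx; rw [hG_unit hu, h, neg_neg]
    · simp only [σ, h0, h1, hu, if_false]
      intro h
      apply h0
      apply h2.mul_left_cancel
      push_cast
      linear_combination -h
  · intro x _
    by_cases h0 : x = 0
    · subst h0; simp [σ]
    by_cases h1 : x = 1
    · subst h1; simp [σ]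
    by_cases hu : IsUnit x
    · have e := hinv x hu
      have a0 : x⁻¹ ≠ 0 := (hinvu x hu).ne_zero
      have a1 : x⁻¹ ≠ 1 := fun h => by rw [h, mul_one] at e; exact h1 e
      simp only [σ, h0, h1, hu, if_false, if_true, a0, a1, hinvu x hu]
      exact inv_eq_of_mul (by rw [mul_comm]; exact e)
    · have a0 : -x ≠ 0 := neg_ne_zero.2 h0
      have au : ¬ IsUnit (-x) := fun h => hu (by simpa using h.neg)
      have a1 : -x ≠ 1 := fun h => au (h ▸ isUnit_one)
      simp only [σ, h0, h1, hu, if_false, a0, a1, au, neg_neg]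

noncomputable def GG (p : ℕ) (x : ZMod (p^3)) : ZMod (p^3) := ∏ j ∈ range x.val, hG p (j : ZMod (p^3))

theorem GG_zero : GG p 0 = 1 := by simp [GG]

theorem GG_succ [Fact p.Prime] (h3 : 3 < p) (x : ZMod (p^3)) : GG p (x + 1) = GG p x * hG p x := by
  have hp : p.Prime := Fact.out
  haveI : Fact (1 < p^3) := ⟨Nat.one_lt_pow (by norm_num) hp.one_lt⟩
  have e : ((x.val : ℕ) : ZMod (p^3)) = x := ZMod.natCast_zmod_val x
  have key : ∏ j ∈ range (x.val+1), hG p (j : ZMod (p^3)) = GG p x * hG p x := by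
    rw [prod_range_succ, e]; rfl
  rw [← key]
  by_cases h : x.val + 1 < p^3
  · rw [GG, ZMod.val_add_of_lt (by rw [ZMod.val_one]; exact h), ZMod.val_one]
  · have hv : x.val + 1 = p^3 := by have := ZMod.val_lt x; omega
    have : x + 1 = 0 := by
      rw [← e]
      have := congrArg (Nat.cast : ℕ → ZMod (p^3)) hv
      push_cast at this
      rw [this, pcube]
    rw [this, GG_zero, hv, ← hG_prod h3]
    symm
    refine Finset.prod_bij (fun j _ => (j : ZMod (p^3))) (fun _ _ => mem_univ _) ?_ ?_ (fun _ _ => rfl)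
    · intro a ha b hb hab
      rw [mem_range] at ha hb
      rw [ZMod.natCast_eq_natCast_iff', Nat.mod_eq_of_lt ha, Nat.mod_eq_of_lt hb] at hab
      exact hab
    · intro b _
      exact ⟨b.val, mem_range.2 (ZMod.val_lt b), ZMod.natCast_zmod_val b⟩

theorem GG_isUnit (x : ZMod (p^3)) : IsUnit (GG p x) := by
  rw [GG, IsUnit.prod_iff]
  exact fun i _ => hG_isUnit _

theorem GG_add [Fact p.Prime] (h3 : 3 < p) (x : ZMod (p^3)) (k : ℕ) :
    GG p (x + (k:ZMod (p^3))) = GG p x * ∏ i ∈ range k, hG p (x + (i:ZMod (p^3))) := by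
  induction k with
  | zero => simp
  | succ k ih =>
    rw [prod_range_succ, ← mul_assoc, ← ih, ← GG_succ h3]
    push_cast; ring_nf

theorem GG_refl [Fact p.Prime] (h3 : 3 < p) (x : ZMod (p^3)) : (GG p x * GG p (1 - x))^2 = 1 := by
  have e : ((x.val : ℕ) : ZMod (p^3)) = x := ZMod.natCast_zmod_val x
  rw [← e]
  generalize x.val = k
  induction k with
  | zero =>
    have h1 := GG_succ h3 (0 : ZMod (p^3))
    rw [zero_add, GG_zero] at h1
    haveI : Nontrivial (ZMod (p^3)) := ZMod.nontrivial_iff.2 (pr_ne Fact.out (by norm_num))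
    simp [GG_zero, h1, hG_non (p := p) not_isUnit_zero]
  | succ k ih =>
    have a := GG_succ h3 (k : ZMod (p^3))
    have b := GG_succ h3 (-(k : ZMod (p^3)))
    have c : (1 - ((k+1 : ℕ) : ZMod (p^3))) = -k := by push_cast; ring
    have d : -(k : ZMod (p^3)) + 1 = 1 - k := by ring
    rw [c, Nat.cast_succ, a]
    rw [d] at b
    have f : hG p (-(k : ZMod (p^3)))^2 = hG p k ^ 2 := by
      by_cases hu : IsUnit (k : ZMod (p^3))
      · rw [hG_unit hu, hG_unit hu.neg]; ring
      · rw [hG_non hu, hG_non (fun h => hu (by simpa using h.neg))]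
    rw [← ih, b, mul_pow, mul_pow, mul_pow, mul_pow, f]; ring
end GFun

end ModM8

section ModM8b
open Finset

section GQuad
variable {p : ℕ}
open Polynomial in
theorem fermat_poly [Fact p.Prime] (h3 : 3 < p) :
    ∏ a : ZMod p, (if a = 0 then (-1 : (ZMod p)[X]) else -C a - X) = 1 - X^(p-1) := by
  classical
  have hp : p.Prime := Fact.out
  have h1 : ∏ a : ZMod p, (X - C a) = X^p - X := by
    have hr := FiniteField.roots_X_pow_card_sub_X (ZMod p)
    rw [ZMod.card] at hr
    have hd := FiniteField.X_pow_card_sub_X_natDegree_eq (ZMod p) hp.one_lt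
    have hm : (X^p - X : (ZMod p)[X]).Monic := by
      apply Polynomial.monic_X_pow_sub
      rw [degree_X]; exact_mod_cast hp.one_lt
    have := Polynomial.prod_multiset_X_sub_C_of_monic_of_roots_card_eq hm (by rw [hr, hd]; simp [ZMod.card])
    rw [hr] at this
    exact this
  have h2 : ∏ a ∈ univ.erase (0 : ZMod p), (X - C a) = X^(p-1) - 1 := by
    rw [← Finset.mul_prod_erase _ _ (mem_univ (0 : ZMod p)), C_0, sub_zero] at h1
    apply mul_left_cancel₀ (X_ne_zero (R := ZMod p))
    rw [h1, mul_sub, ← pow_succ', mul_one, Nat.sub_add_cancel hp.one_lt.le]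
  have h4 := congrArg (fun q => q.comp (-X)) h2
  simp only [Polynomial.prod_comp, sub_comp, X_comp, C_comp, pow_comp, one_comp] at h4
  rw [← Finset.mul_prod_erase _ _ (mem_univ (0 : ZMod p)), if_pos rfl]
  rw [Finset.prod_congr rfl (g := fun a => (-X - C a : (ZMod p)[X])), h4]
  · have : Even (p-1) := hp.even_sub_one (by omega)
    rw [this.neg_pow]; ring
  · intro a ha
    rw [if_neg (Finset.ne_of_mem_erase ha)]; ring

theorem dvd_cube (p : ℕ) : p ∣ p^3 := dvd_pow_self p (by norm_num)

theorem ker_cast [Fact p.Prime] (z : ZMod (p^3)) :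
    ZMod.castHom (dvd_cube p) (ZMod p) z = 0 ↔ (p : ZMod (p^3)) ∣ z := by
  constructor
  · intro h
    have e : ((z.val : ℕ) : ZMod (p^3)) = z := ZMod.natCast_zmod_val z
    rw [← e, map_natCast, ZMod.natCast_eq_zero_iff] at h
    obtain ⟨c, hc⟩ := h
    rw [← e, hc]; push_cast; exact dvd_mul_right _ _
  · rintro ⟨c, rfl⟩
    rw [map_mul, map_natCast, ZMod.natCast_self, zero_mul]

theorem isUnit_iff_cast [Fact p.Prime] (z : ZMod (p^3)) :
    IsUnit z ↔ ZMod.castHom (dvd_cube p) (ZMod p) z ≠ 0 := by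
  rw [isUnit_iff_P, Ne, ker_cast]

open Polynomial in
open Classical in
theorem B_form [Fact p.Prime] (h3 : 3 < p) (x : ZMod (p^3)) :
    ∃ β b : ZMod (p^3), ∀ y, ∏ j ∈ range p, hG p (x + (j:ZMod (p^3)) + (p:ZMod (p^3)) * y) =
      1 + (p:ZMod (p^3)) * β + (p:ZMod (p^3))^2 * b * y := by
  have hp : p.Prime := Fact.out
  set φ := ZMod.castHom (dvd_cube p) (ZMod p) with hφ
  let f : (ZMod (p^3))[X] := ∏ j ∈ range p, (if IsUnit (x + (j:ZMod (p^3))) then -C (x + (j:ZMod (p^3))) - X else -1)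
  have hev : ∀ y, ∏ j ∈ range p, hG p (x + (j:ZMod (p^3)) + (p:ZMod (p^3)) * y) = f.eval ((p:ZMod (p^3)) * y) := by
    intro y
    rw [Polynomial.eval_prod]
    refine Finset.prod_congr rfl fun j _ => ?_
    by_cases hu : IsUnit (x + (j:ZMod (p^3)))
    · rw [hG_unit ((P_isUnit_add _ _).2 hu), if_pos hu]; simp; ring
    · rw [hG_non (fun h => hu ((P_isUnit_add _ _).1 h)), if_neg hu]; simp
  have hmap : f.map φ = 1 - X^(p-1) := by
    rw [← fermat_poly h3, Polynomial.map_prod]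
    refine Finset.prod_bij (fun j _ => φ (x + (j:ZMod (p^3)))) (fun _ _ => mem_univ _) ?_ ?_ ?_
    · intro a ha b hb hab
      rw [mem_range] at ha hb
      rw [map_add, map_add, add_right_inj, map_natCast, map_natCast, ZMod.natCast_eq_natCast_iff', Nat.mod_eq_of_lt ha, Nat.mod_eq_of_lt hb] at hab
      exact hab
    · intro b _
      refine ⟨(b - φ x).val, mem_range.2 (ZMod.val_lt _), ?_⟩
      rw [map_add, map_natCast, ZMod.natCast_zmod_val]; ring
    · intro j _
      by_cases hu : IsUnit (x + (j:ZMod (p^3)))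
      · rw [if_pos hu, if_neg ((isUnit_iff_cast _).1 hu)]; simp [hφ]
      · have : φ (x + (j:ZMod (p^3))) = 0 := by
          rw [isUnit_iff_cast, not_not] at hu; exact hu
        rw [if_neg hu, if_pos this]; simp
  have hc : ∀ k, φ (f.coeff k) = (1 - X^(p-1) : (ZMod p)[X]).coeff k := fun k => by
    rw [← hmap, Polynomial.coeff_map]
  have c0 : (p : ZMod (p^3)) ∣ f.coeff 0 - 1 := by
    rw [← ker_cast, ← hφ, map_sub, hc, map_one]
    simp [Polynomial.coeff_X_pow, show (0:ℕ) ≠ p - 1 by omega]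
  have c1 : (p : ZMod (p^3)) ∣ f.coeff 1 := by
    rw [← ker_cast, ← hφ, hc]
    simp [Polynomial.coeff_X_pow, Polynomial.coeff_one, show (1:ℕ) ≠ p - 1 by omega]
  have c2 : (p : ZMod (p^3)) ∣ f.coeff 2 := by
    rw [← ker_cast, ← hφ, hc]
    simp [Polynomial.coeff_X_pow, Polynomial.coeff_one, show (2:ℕ) ≠ p - 1 by omega]
  obtain ⟨β, hβ⟩ := c0
  obtain ⟨b, hb⟩ := c1
  obtain ⟨d, hd⟩ := c2
  refine ⟨β, b, fun y => ?_⟩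
  rw [hev]
  have e0 := Polynomial.divX_mul_X_add f
  have e1 := Polynomial.divX_mul_X_add f.divX
  have e2 := Polynomial.divX_mul_X_add f.divX.divX
  have g0 := congrArg (Polynomial.eval ((p:ZMod (p^3)) * y)) e0
  have g1 := congrArg (Polynomial.eval ((p:ZMod (p^3)) * y)) e1
  have g2 := congrArg (Polynomial.eval ((p:ZMod (p^3)) * y)) e2
  simp only [eval_add, eval_mul, eval_X, eval_C, Polynomial.coeff_divX] at g0 g1 g2
  norm_num at g1 g2
  rw [← g0, ← g1, ← g2, hb, hd]
  have hP : (p:ZMod (p^3))^3 = 0 := pcube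
  linear_combination hβ + (d * y^2 + eval ((p:ZMod (p^3)) * y) f.divX.divX.divX * y^3) * hP

theorem GG_quad [Fact p.Prime] (h3 : 3 < p) (x : ZMod (p^3)) :
    Quad (p:ZMod (p^3)) (fun y => GG p (x + (p:ZMod (p^3)) * y)) := by
  have hp : p.Prime := Fact.out
  have hP : (p:ZMod (p^3))^3 = 0 := pcube
  obtain ⟨β, b, hB⟩ := B_form h3 x
  obtain ⟨h2, hh⟩ : ∃ h2 : ZMod (p^3), 2 * h2 = 1 := by
    have : IsUnit ((2:ℕ) : ZMod (p^3)) := natUnit_lt hp 3 (by omega) (by omega)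
    obtain ⟨c, hc⟩ := this.exists_right_inv
    exact ⟨c, by exact_mod_cast hc⟩
  have key : ∀ k : ℕ, GG p (x + (p:ZMod (p^3)) * (k:ZMod (p^3))) = GG p x * (1 + (k:ZMod (p^3)) * (p:ZMod (p^3)) * β
      + (k:ZMod (p^3)) * ((k:ZMod (p^3)) - 1) * h2 * (p:ZMod (p^3))^2 * (β^2 + b)) := by
    intro k
    induction k with
    | zero => simp
    | succ k ih =>
      have e : x + (p:ZMod (p^3)) * ((k+1:ℕ):ZMod (p^3)) = x + (p:ZMod (p^3)) * (k:ZMod (p^3)) + (p:ZMod (p^3)) := by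
        push_cast; ring
      rw [e, GG_add h3, ih]
      have : ∏ i ∈ range p, hG p (x + (p:ZMod (p^3)) * (k:ZMod (p^3)) + (i:ZMod (p^3))) =
          ∏ i ∈ range p, hG p (x + (i:ZMod (p^3)) + (p:ZMod (p^3)) * (k:ZMod (p^3))) :=
        Finset.prod_congr rfl fun i _ => by rw [add_right_comm]
      rw [this, hB]
      push_cast
      generalize (k:ZMod (p^3)) = K
      generalize (p:ZMod (p^3)) = P at *
      linear_combination (GG p x * (K*β*b*K + K*(K-1)*h2*(β^2+b)*(β + P*b*K))) * hP - GG p x * P^2*K*(β^2+b) * hh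
  refine ⟨GG p x, GG p x * (β - h2 * (p:ZMod (p^3)) * (β^2+b)), GG p x * h2 * (β^2+b), fun y => ?_⟩
  have e : ((y.val : ℕ) : ZMod (p^3)) = y := ZMod.natCast_zmod_val y
  have := key y.val
  rw [e] at this
  beta_reduce
  rw [this]; ring
end GQuad

end ModM8b

section ModM9
open Finset

/-- product of an arithmetic progression -/
def AP (c a k : ℕ) : ℕ := ∏ i ∈ range k, (a + c*i)

theorem AP_zero (c a : ℕ) : AP c a 0 = 1 := by simp [AP]
theorem AP_succ (c a k : ℕ) : AP c a (k+1) = AP c a k * (a + c*k) := by rw [AP, prod_range_succ]; rfl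
theorem AP_succ' (c a k : ℕ) : AP c a (k+1) = a * AP c (a+c) k := by
  rw [AP, prod_range_succ', mul_comm]
  simp only [mul_zero, add_zero, AP]
  congr 1
  exact prod_congr rfl fun i _ => by ring
theorem AP_fact (k : ℕ) : AP 1 1 k = k.factorial := by
  induction k with
  | zero => simp [AP]
  | succ k ih => rw [AP_succ, ih, Nat.factorial_succ]; ring
theorem AP_pos {c a k : ℕ} (ha : 0 < a) : AP c a k ≠ 0 := by
  rw [AP, prod_ne_zero_iff]; intro i _; omega
theorem AP_ndvd {p c a k : ℕ} (hp : p.Prime) (h : ∀ i < k, ¬ p ∣ a + c*i) : ¬ p ∣ AP c a k := by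
  rw [AP, hp.prime.dvd_finsetProd_iff]
  rintro ⟨i, hi, hd⟩
  exact h i (mem_range.1 hi) hd

theorem AP_xiA (m : ℕ) : (∏ i ∈ range m, (8*(4*i+5)*(4*i+3)/(3*(6*i+5)*(6*i+7)) : ℚ)) * (AP 2 (4*m+3) m : ℕ) = 8^m * (AP 2 1 m : ℕ) := by
  induction m with
  | zero => simp [AP]
  | succ m ih =>
    have e : AP 2 (4*m+3) (m+1+1+1) = AP 2 (4*m+3) (m+1+1+1) := rfl
    conv_rhs at e => rw [AP_succ', AP_succ']
    rw [AP_succ, AP_succ, AP_succ, show 4*m+3+2+2 = 4*(m+1)+3 by ring] at e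
    have e' := congrArg (Nat.cast : ℕ → ℚ) e
    push_cast at e'
    rw [prod_range_succ, AP_succ 2 1]
    push_cast
    have h1 : (4*(m:ℚ)+3) ≠ 0 := by positivity
    have h2 : (4*(m:ℚ)+5) ≠ 0 := by positivity
    have h3 : (6*(m:ℚ)+5) ≠ 0 := by positivity
    have h4 : (6*(m:ℚ)+7) ≠ 0 := by positivity
    generalize (∏ i ∈ range m, (8*(4*i+5)*(4*i+3)/(3*(6*i+5)*(6*i+7)) : ℚ)) = X at *
    generalize ((AP 2 (4*m+3) m : ℕ):ℚ) = D at *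
    generalize ((AP 2 (4*(m+1)+3) (m+1) : ℕ):ℚ) = D' at *
    generalize ((AP 2 1 m : ℕ):ℚ) = N at *
    rw [pow_succ]
    field_simp
    linear_combination (-X)*e' + (4*(m:ℚ)+3+2*m)*(4*(m:ℚ)+3+2*(m+1))*(4*(m:ℚ)+3+2*(m+1+1))*ih

theorem AP_xiB (m : ℕ) : (∏ i ∈ range m, (3*(6*i+4)*(6*i+2)/(8*(4*i+3)*(4*i+1)) : ℚ)) * ((2^m * m.factorial * AP 2 1 (2*m) : ℕ)) = ((3*m).factorial : ℕ) := by
  induction m with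
  | zero => simp [AP]
  | succ m ih =>
    rw [prod_range_succ, show 2*(m+1) = 2*m+1+1 by ring, AP_succ, AP_succ, show 3*(m+1) = 3*m+1+1+1 by ring]
    simp only [Nat.factorial_succ]
    push_cast at ih ⊢
    rw [← ih, pow_succ]
    have h3 : (4*(m:ℚ)+3) ≠ 0 := by positivity
    have h4 : (4*(m:ℚ)+1) ≠ 0 := by positivity
    field_simp
    ring

theorem AP_xiC1 (s : ℕ) : (∏ i ∈ range s, (27*(6*i+3)*(6*i+1)/(8*(12*i+7)*(12*i+1)) : ℚ)) * ((8^s * AP 6 1 (2*s) * AP 6 5 s : ℕ)) = ((27^s * AP 2 1 (3*s) : ℕ)) := by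
  induction s with
  | zero => simp [AP]
  | succ m ih =>
    rw [prod_range_succ, show 2*(m+1) = 2*m+1+1 by ring, AP_succ, AP_succ, AP_succ, show 3*(m+1) = 3*m+1+1+1 by ring, AP_succ, AP_succ, AP_succ]
    push_cast at ih ⊢
    have h3 : (12*(m:ℚ)+7) ≠ 0 := by positivity
    have h4 : (12*(m:ℚ)+1) ≠ 0 := by positivity
    generalize (∏ i ∈ range m, (27*(6*i+3)*(6*i+1)/(8*(12*i+7)*(12*i+1)) : ℚ)) = X at *
    rw [pow_succ, pow_succ]
    field_simp
    linear_combination ((6*(m:ℚ)+3)*(6*m+1)*(6*m+5)*(12*m+7)*(12*m+1)) * ih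

theorem AP_xiC2 (s : ℕ) : (∏ i ∈ range s, (27*(6*i+5)*(6*i+3)/(8*(12*i+11)*(12*i+5)) : ℚ)) * ((8^s * AP 6 5 (2*s) * AP 6 1 (s+1) : ℕ)) = ((27^s * AP 2 1 (3*s+1) : ℕ)) := by
  induction s with
  | zero => simp [AP]
  | succ m ih =>
    rw [prod_range_succ, show 2*(m+1) = 2*m+1+1 by ring, AP_succ, AP_succ, AP_succ 6 1 (m+1), show 3*(m+1)+1 = 3*m+1+1+1+1 by ring, AP_succ 2 1 (3*m+1+1+1), AP_succ 2 1 (3*m+1+1), AP_succ 2 1 (3*m+1)]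
    push_cast at ih ⊢
    have h3 : (12*(m:ℚ)+11) ≠ 0 := by positivity
    have h4 : (12*(m:ℚ)+5) ≠ 0 := by positivity
    generalize (∏ i ∈ range m, (27*(6*i+5)*(6*i+3)/(8*(12*i+11)*(12*i+5)) : ℚ)) = X at *
    rw [pow_succ, pow_succ]
    field_simp
    linear_combination ((6*(m:ℚ)+3)*(6*m+7)*(6*m+5)*(12*m+11)*(12*m+5)) * ih

section
variable {p : ℕ}
theorem GG_up [Fact p.Prime] (h3 : 3 < p) {c a k : ℕ} (hc : ¬ p ∣ c) {x : ZMod (p^3)}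
    (hx : (c:ZMod (p^3)) * x = (a:ZMod (p^3))) (hu : ∀ i < k, ¬ p ∣ a + c*i) :
    (c:ZMod (p^3))^k * GG p (x + (k:ZMod (p^3))) = GG p x * (-1)^k * (AP c a k : ℕ) := by
  have hp : p.Prime := Fact.out
  induction k with
  | zero => simp [AP]
  | succ k ih =>
    have ih := ih (fun i hi => hu i (by omega))
    have hk : (c:ZMod (p^3)) * (x + (k:ZMod (p^3))) = ((a + c*k : ℕ):ZMod (p^3)) := by
      push_cast; linear_combination hx
    have hun : IsUnit (x + (k:ZMod (p^3))) := by
      have := natUnit hp 3 (hu k (by omega))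
      rw [← hk] at this
      exact isUnit_of_mul_isUnit_right this
    have : x + ((k+1:ℕ):ZMod (p^3)) = x + (k:ZMod (p^3)) + 1 := by push_cast; ring
    rw [this, GG_succ h3, hG_unit hun, AP_succ, Nat.cast_mul, ← hk]
    linear_combination (-(c:ZMod (p^3)) * (x + (k:ZMod (p^3)))) * ih

theorem GG_dn [Fact p.Prime] (h3 : 3 < p) {c a k : ℕ} (hc : ¬ p ∣ c) {x : ZMod (p^3)}
    (hx : (c:ZMod (p^3)) * (1 - x) = (a:ZMod (p^3))) (hu : ∀ i < k, ¬ p ∣ a + c*i) :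
    (c:ZMod (p^3))^k * GG p x = GG p (x - (k:ZMod (p^3))) * (AP c a k : ℕ) := by
  have hp : p.Prime := Fact.out
  induction k with
  | zero => simp [AP]
  | succ k ih =>
    have ih := ih (fun i hi => hu i (by omega))
    have hk : (c:ZMod (p^3)) * -(x - ((k+1:ℕ):ZMod (p^3))) = ((a + c*k : ℕ):ZMod (p^3)) := by
      push_cast; linear_combination hx
    have hun : IsUnit (x - ((k+1:ℕ):ZMod (p^3))) := by
      have := natUnit hp 3 (hu k (by omega))
      rw [← hk] at this
      simpa using (isUnit_of_mul_isUnit_right this).neg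
    have : x - (k:ZMod (p^3)) = x - ((k+1:ℕ):ZMod (p^3)) + 1 := by push_cast; ring
    rw [this, GG_succ h3, hG_unit hun] at ih
    rw [AP_succ, Nat.cast_mul, ← hk]
    linear_combination (c:ZMod (p^3)) * ih
end

end ModM9

section ModM9b
open Finset

section Nodes
variable {p : ℕ}

theorem nodeA [Fact p.Prime] (h3 : 3 < p) {m : ℕ} (hm : p = 4*m+1) {h : ZMod (p^3)} (hh : 2 * h = 1) :
    ∃ xa : ZMod (p^3), QRed (p^3) (XA (2*m)) xa ∧
      xa * GG p h ^ 2 * GG p (3*h*h + (p:ZMod (p^3))*(3*h*h))^2 =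
        (2^(2*m))^3 * (GG p (1 + (p:ZMod (p^3))*h) * GG p (h*h + (p:ZMod (p^3))*(h*h)))^2 := by
  have hp : p.Prime := Fact.out
  have hPm : (p:ZMod (p^3)) = 4*(m:ZMod (p^3))+1 := by
    have := congrArg (Nat.cast : ℕ → ZMod (p^3)) hm; push_cast at this; exact this
  have u1 : ∀ i < m, ¬ p ∣ 1 + 2*i := fun i hi => not_dvd_lt (by omega) (by omega)
  have u2 : ∀ i < m, ¬ p ∣ (4*m+3) + 2*i := fun i hi => not_dvd_2lt (by omega) (by omega) (by omega)
  have n2 : ¬ p ∣ 2 := not_dvd_lt (by omega) (by omega)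
  have D := natUnit hp 3 (AP_ndvd hp u2)
  have two := natUnit hp 3 n2
  obtain ⟨α, hα, e⟩ := rep_of_mul hp (r := 3) (by norm_num) (QRed.nat _) (((QRed.nat 8).pow m).mul (QRed.nat (AP 2 1 m))) D
    (by exact_mod_cast AP_pos (by omega)) (by have := AP_xiA m; push_cast at this ⊢; exact this)
  refine ⟨α^2, by rw [XA_even]; exact hα.pow 2, ?_⟩
  have a1 := GG_up h3 (k := m) (c := 2) (a := 1) n2 (x := h) (by push_cast; exact hh) u1
  have a2 := GG_up h3 (k := m) (c := 2) (a := 4*m+3) n2 (x := 1 + (p:ZMod (p^3))*h) (by push_cast; linear_combination (p:ZMod (p^3))*hh + hPm) u2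
  have E1 : h*h + (p:ZMod (p^3))*(h*h) = h + (m:ZMod (p^3)) := by
    linear_combination h*h*hPm + ((m:ZMod (p^3))*(2*h+1)+h)*hh
  have E2 : 3*h*h + (p:ZMod (p^3))*(3*h*h) = 1 + (p:ZMod (p^3))*h + (m:ZMod (p^3)) := by
    linear_combination (3*h*h-h)*hPm + (3*(m:ZMod (p^3))*(2*h+1)+3*h-2*(m:ZMod (p^3))+1)*hh
  rw [E1, E2]
  generalize GG p (1 + (p:ZMod (p^3))*h + (m:ZMod (p^3))) = x1 at *
  generalize GG p (1 + (p:ZMod (p^3))*h) = x2 at *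
  generalize GG p (h + (m:ZMod (p^3))) = x3 at *
  generalize GG p h = x4 at *
  push_cast at *
  have key : α * x4 * x1 = 8^m * x2 * x3 := by
    apply (two.pow m).mul_left_cancel
    linear_combination α*x4*a2 + x4*x2*(-1)^m*e - x2*8^m*a1
  calc α^2 * x4^2 * x1^2 = (α * x4 * x1)^2 := by ring
    _ = _ := by rw [key, show (8:ZMod (p^3)) = 2^3 by norm_num, ← pow_mul]; ring

theorem nodeB [Fact p.Prime] (h3 : 3 < p) {m : ℕ} (hm : p = 4*m+1) {h : ZMod (p^3)} (hh : 2 * h = 1) :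
    ∃ xb : ZMod (p^3), QRed (p^3) (XB (2*m)) xb ∧
      (2^(2*m))^3 * xb * GG p h ^ 2 * GG p (3*h*h + (p:ZMod (p^3))*(3*h*(-h)))^2 =
        (GG p (1 + (p:ZMod (p^3))*(-h)) * GG p (h*h + (p:ZMod (p^3))*(h*(-h))))^2 := by
  have hp : p.Prime := Fact.out
  have hPm : (p:ZMod (p^3)) = 4*(m:ZMod (p^3))+1 := by
    have := congrArg (Nat.cast : ℕ → ZMod (p^3)) hm; push_cast at this; exact this
  have u1 : ∀ i < 2*m, ¬ p ∣ 1 + 2*i := fun i hi => not_dvd_lt (by omega) (by omega)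
  have u2 : ∀ i < m, ¬ p ∣ 1 + 1*i := fun i hi => not_dvd_lt (by omega) (by omega)
  have u3 : ∀ i < 3*m, ¬ p ∣ 1 + 1*i := fun i hi => not_dvd_lt (by omega) (by omega)
  have n1 : ¬ p ∣ 1 := not_dvd_lt (by omega) (by omega)
  have n2 : ¬ p ∣ 2 := not_dvd_lt (by omega) (by omega)
  have F1 := AP_ndvd hp u2
  rw [AP_fact] at F1
  have F3 := AP_ndvd hp u3
  rw [AP_fact] at F3
  have F3u := natUnit hp 3 F3
  have F1u := natUnit hp 3 F1
  have D := natUnit hp 3 (prime_not_dvd_mul hp (prime_not_dvd_mul hp (fun hd => n2 (hp.dvd_of_dvd_pow hd)) F1) (AP_ndvd hp u1) : ¬ p ∣ 2^m * m.factorial * AP 2 1 (2*m))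
  have two := natUnit hp 3 n2
  obtain ⟨α, hα, e⟩ := rep_of_mul hp (r := 3) (by norm_num) (QRed.nat _) (QRed.nat _) D
    (Nat.cast_ne_zero.2 (by have := AP_pos (c := 2) (a := 1) (k := 2*m) (by omega); positivity)) (AP_xiB m)
  refine ⟨α^2, by rw [XB_even]; exact hα.pow 2, ?_⟩
  have a1 := GG_dn h3 (k := 2*m) (c := 2) (a := 1) n2 (x := h) (by push_cast; linear_combination -hh) u1
  have a2 := GG_dn h3 (k := m) (c := 1) (a := 1) n1 (x := 0) (by push_cast; ring) u2
  have a3 := GG_dn h3 (k := 3*m) (c := 1) (a := 1) n1 (x := 0) (by push_cast; ring) u3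
  have E1 : h*h + (p:ZMod (p^3))*(h*(-h)) = 0 - (m:ZMod (p^3)) := by
    linear_combination -h*h*hPm - (m:ZMod (p^3))*(2*h+1)*hh
  have E2 : 3*h*h + (p:ZMod (p^3))*(3*h*(-h)) = 0 - ((3*m:ℕ):ZMod (p^3)) := by
    push_cast; linear_combination (-3*h*h)*hPm -3*(m:ZMod (p^3))*(2*h+1)*hh
  have E3 : 1 + (p:ZMod (p^3))*(-h) = h - ((2*m:ℕ):ZMod (p^3)) := by
    push_cast; linear_combination (-h)*hPm - (2*(m:ZMod (p^3))+1)*hh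
  rw [E1, E2, E3]
  rw [AP_fact, GG_zero] at a2 a3
  generalize GG p (h - ((2*m:ℕ):ZMod (p^3))) = x1 at *
  generalize GG p (0 - (m:ZMod (p^3))) = x2 at *
  generalize GG p (0 - ((3*m:ℕ):ZMod (p^3))) = x3 at *
  generalize GG p h = x4 at *
  push_cast at *
  have h8 : (8:ZMod (p^3))^m = (2^m)^3 := by rw [← pow_mul, mul_comm, pow_mul]; norm_num
  have key : 8^m * α * x4 * x3 = x1 * x2 := by
    apply D.mul_left_cancel
    apply F3u.mul_left_cancel
    apply F1u.mul_left_cancel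
    simp only [one_pow, mul_one] at a2 a3
    generalize ((m.factorial:ℕ):ZMod (p^3)) = M at *
    generalize (((3*m).factorial:ℕ):ZMod (p^3)) = F at *
    rw [pow_mul'] at a1
    rw [h8]
    generalize (2:ZMod (p^3))^m = T at *
    linear_combination F*M*T^3*x4*x3*e - F*M*T^3*x4*a3 + T*M*F*M*x2*a1 + T^3*F*M*x4*a2
  rw [← key, h8]; ring
end Nodes

end ModM9b

section ModM9c
open Finset

section NodesC
variable {p : ℕ}

theorem nodeC1 [Fact p.Prime] (h3 : 3 < p) {s : ℕ} (hm : p = 12*s+1) {h g : ZMod (p^3)} (hh : 2 * h = 1) (hg : 6 * g = 1) :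
    ∃ xc : ZMod (p^3), QRed (p^3) (XC (6*s)) xc ∧
      2^(6*s) * xc * GG p (3*h*h + (p:ZMod (p^3))*(3*h*(-g)))^2 =
        GG p h ^ 2 * (GG p (1 + (p:ZMod (p^3))*(-g)) * GG p (h*h + (p:ZMod (p^3))*(h*(-g))))^2 := by
  have hp : p.Prime := Fact.out
  have hPm : (p:ZMod (p^3)) = 12*(s:ZMod (p^3))+1 := by
    have := congrArg (Nat.cast : ℕ → ZMod (p^3)) hm; push_cast at this; exact this
  have hhg : h = 3 * g := by linear_combination (3*g)*hh - h*hg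
  have u1 : ∀ i < 2*s, ¬ p ∣ 1 + 6*i := fun i hi => not_dvd_lt (by omega) (by omega)
  have u2 : ∀ i < s, ¬ p ∣ 5 + 6*i := fun i hi => not_dvd_lt (by omega) (by omega)
  have u3 : ∀ i < 3*s, ¬ p ∣ 1 + 2*i := fun i hi => not_dvd_lt (by omega) (by omega)
  have n2 : ¬ p ∣ 2 := not_dvd_lt (by omega) (by omega)
  have n6 : ¬ p ∣ 6 := not_dvd_lt (by omega) (by omega)
  have n8 : ¬ p ∣ 8 := not_dvd_lt (by omega) (by omega)
  have D := natUnit hp 3 (prime_not_dvd_mul hp (prime_not_dvd_mul hp (fun hd => n8 (hp.dvd_of_dvd_pow hd)) (AP_ndvd hp u1)) (AP_ndvd hp u2) : ¬ p ∣ 8^s * AP 6 1 (2*s) * AP 6 5 s)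
  have O := natUnit hp 3 (AP_ndvd hp u3)
  obtain ⟨α, hα, e⟩ := rep_of_mul hp (r := 3) (by norm_num) (QRed.nat _) (QRed.nat _) D
    (Nat.cast_ne_zero.2 (by
      have := AP_pos (c := 6) (a := 1) (k := 2*s) (by omega)
      have := AP_pos (c := 6) (a := 5) (k := s) (by omega)
      positivity)) (AP_xiC1 s)
  refine ⟨α^2, by rw [XC_six]; exact hα.pow 2, ?_⟩
  have a1 := GG_dn h3 (k := 2*s) (c := 6) (a := 1) n6 (x := 1 - g) (by push_cast; linear_combination hg) u1
  have a2 := GG_dn h3 (k := s) (c := 6) (a := 5) n6 (x := g) (by push_cast; linear_combination -hg) u2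
  have a3 := GG_dn h3 (k := 3*s) (c := 2) (a := 1) n2 (x := h) (by push_cast; linear_combination -hh) u3
  have E1 : h*h + (p:ZMod (p^3))*(h*(-g)) = g - (s:ZMod (p^3)) := by
    rw [hPm, hhg]; linear_combination (g - (s:ZMod (p^3))*(6*g+1))*hg
  have E2 : 3*h*h + (p:ZMod (p^3))*(3*h*(-g)) = h - ((3*s:ℕ):ZMod (p^3)) := by
    push_cast; rw [hPm, hhg]; linear_combination 3*(g - (s:ZMod (p^3))*(6*g+1))*hg
  have E3 : 1 + (p:ZMod (p^3))*(-g) = 1 - g - ((2*s:ℕ):ZMod (p^3)) := by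
    push_cast; rw [hPm]; linear_combination -2*(s:ZMod (p^3))*hg
  have rf := GG_refl h3 g
  rw [E1, E2, E3]
  generalize GG p (1 - g - ((2*s:ℕ):ZMod (p^3))) = x1 at *
  generalize GG p (g - (s:ZMod (p^3))) = x2 at *
  generalize GG p (h - ((3*s:ℕ):ZMod (p^3))) = x3 at *
  generalize GG p h = H at *
  generalize GG p (1 - g) = A at *
  generalize GG p g = B at *
  push_cast at *
  have q8 : (8:ZMod (p^3))^s = (2^s)^3 := by rw [← pow_mul, mul_comm, pow_mul]; norm_num
  have q27 : (27:ZMod (p^3))^s = (3^s)^3 := by rw [← pow_mul, mul_comm, pow_mul]; norm_num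
  have q6 : (6:ZMod (p^3))^s = 2^s*3^s := by rw [← mul_pow]; norm_num
  have q66 : (6:ZMod (p^3))^(2*s) = (2^s*3^s)^2 := by rw [← q6, ← pow_mul, mul_comm]
  have q222 : (2:ZMod (p^3))^(3*s) = (2^s)^3 := by rw [← pow_mul, mul_comm]
  have q2 : (2:ZMod (p^3))^(6*s) = (2^s)^6 := by rw [← pow_mul, mul_comm]
  rw [q66] at a1
  rw [q6] at a2
  rw [q222] at a3
  rw [q8, q27] at e
  rw [q8] at D
  rw [q2]
  generalize (2:ZMod (p^3))^s = t at *
  generalize (3:ZMod (p^3))^s = v at *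
  generalize ((AP 6 1 (2*s):ℕ):ZMod (p^3)) = W at *
  generalize ((AP 6 5 s:ℕ):ZMod (p^3)) = V at *
  generalize ((AP 2 1 (3*s):ℕ):ZMod (p^3)) = o at *
  have key : x1 * x2 * H = t^3 * A * B * α * x3 := by
    have D' : IsUnit (W * V * o) := by
      have := (isUnit_of_mul_isUnit_right (show IsUnit (t^3 * (W * V)) by rwa [← mul_assoc]))
      exact this.mul O
    apply D'.mul_left_cancel
    linear_combination (-x2*V*H*o)*a1 - (t*v)^2*A*H*o*a2 + (A*B*v^3*o)*a3 - A*B*x3*o*e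
  linear_combination (-(x1*x2*H + t^3 * A * B * α * x3))*key - (t^6*α^2*x3^2)*rf

theorem nodeC2 [Fact p.Prime] (h3 : 3 < p) {s : ℕ} (hm : p = 12*s+5) {h g : ZMod (p^3)} (hh : 2 * h = 1) (hg : 6 * g = 1) :
    ∃ xc : ZMod (p^3), QRed (p^3) (XC (6*s+2)) xc ∧
      2^(6*s+2) * xc * GG p (3*h*h + (p:ZMod (p^3))*(3*h*(-g)))^2 =
        GG p h ^ 2 * (GG p (1 + (p:ZMod (p^3))*(-g)) * GG p (h*h + (p:ZMod (p^3))*(h*(-g))))^2 := by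
  have hp : p.Prime := Fact.out
  have hPm : (p:ZMod (p^3)) = 12*(s:ZMod (p^3))+5 := by
    have := congrArg (Nat.cast : ℕ → ZMod (p^3)) hm; push_cast at this; exact this
  have hhg : h = 3 * g := by linear_combination (3*g)*hh - h*hg
  have u1 : ∀ i < 2*s, ¬ p ∣ 5 + 6*i := fun i hi => not_dvd_lt (by omega) (by omega)
  have u2 : ∀ i < s+1, ¬ p ∣ 1 + 6*i := fun i hi => not_dvd_lt (by omega) (by omega)
  have u3 : ∀ i < 3*s+1, ¬ p ∣ 1 + 2*i := fun i hi => not_dvd_lt (by omega) (by omega)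
  have n2 : ¬ p ∣ 2 := not_dvd_lt (by omega) (by omega)
  have n4 : ¬ p ∣ 4 := not_dvd_lt (by omega) (by omega)
  have n6 : ¬ p ∣ 6 := by
    have : ¬ p ∣ 3 := not_dvd_lt (by omega) (by omega)
    exact prime_not_dvd_mul hp n2 this
  have n8 : ¬ p ∣ 8 := prime_not_dvd_mul hp n2 n4
  have D := natUnit hp 3 (prime_not_dvd_mul hp (prime_not_dvd_mul hp (fun hd => n8 (hp.dvd_of_dvd_pow hd)) (AP_ndvd hp u1)) (AP_ndvd hp u2) : ¬ p ∣ 8^s * AP 6 5 (2*s) * AP 6 1 (s+1))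
  have O := natUnit hp 3 (AP_ndvd hp u3)
  obtain ⟨α, hα, e⟩ := rep_of_mul hp (r := 3) (by norm_num) (QRed.nat _) (QRed.nat _) D
    (Nat.cast_ne_zero.2 (by
      have := AP_pos (c := 6) (a := 5) (k := 2*s) (by omega)
      have := AP_pos (c := 6) (a := 1) (k := s+1) (by omega)
      positivity)) (AP_xiC2 s)
  obtain ⟨γ, hγ, eγ⟩ := rep_of_mul hp (r := 3) (a := 9/4) (by norm_num) (QRed.nat 4) (QRed.nat 9) (natUnit hp 3 n4) (by norm_num) (by norm_num)
  refine ⟨α^2 * γ, by rw [XC_six2]; exact (hα.pow 2).mul hγ, ?_⟩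
  have a1 := GG_dn h3 (k := 2*s) (c := 6) (a := 5) n6 (x := g) (by push_cast; linear_combination -hg) u1
  have a2 := GG_dn h3 (k := s+1) (c := 6) (a := 1) n6 (x := 1-g) (by push_cast; linear_combination hg) u2
  have a3 := GG_dn h3 (k := 3*s+1) (c := 2) (a := 1) n2 (x := h) (by push_cast; linear_combination -hh) u3
  have E1 : h*h + (p:ZMod (p^3))*(h*(-g)) = 1 - g - ((s+1:ℕ):ZMod (p^3)) := by
    push_cast; rw [hPm, hhg]; linear_combination -(g + (s:ZMod (p^3))*(6*g+1))*hg
  have E2 : 3*h*h + (p:ZMod (p^3))*(3*h*(-g)) = h - ((3*s+1:ℕ):ZMod (p^3)) := by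
    push_cast; rw [hPm, hhg]; linear_combination (-(3*g+1) - 3*(s:ZMod (p^3))*(6*g+1))*hg
  have E3 : 1 + (p:ZMod (p^3))*(-g) = g - ((2*s:ℕ):ZMod (p^3)) := by
    push_cast; rw [hPm]; linear_combination -(1+2*(s:ZMod (p^3)))*hg
  have rf := GG_refl h3 g
  rw [E1, E2, E3]
  generalize GG p (1 - g - ((s+1:ℕ):ZMod (p^3))) = x2 at *
  generalize GG p (g - ((2*s:ℕ):ZMod (p^3))) = x1 at *
  generalize GG p (h - ((3*s+1:ℕ):ZMod (p^3))) = x3 at *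
  generalize GG p h = H at *
  generalize GG p (1 - g) = A at *
  generalize GG p g = B at *
  push_cast at *
  have q8 : (8:ZMod (p^3))^s = (2^s)^3 := by rw [← pow_mul, mul_comm, pow_mul]; norm_num
  have q27 : (27:ZMod (p^3))^s = (3^s)^3 := by rw [← pow_mul, mul_comm, pow_mul]; norm_num
  have q6 : (6:ZMod (p^3))^s = 2^s*3^s := by rw [← mul_pow]; norm_num
  have q66 : (6:ZMod (p^3))^(2*s) = (2^s*3^s)^2 := by rw [← q6, ← pow_mul, mul_comm]
  have q222 : (2:ZMod (p^3))^(3*s) = (2^s)^3 := by rw [← pow_mul, mul_comm]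
  have q2 : (2:ZMod (p^3))^(6*s) = (2^s)^6 := by rw [← pow_mul, mul_comm]
  rw [q66] at a1
  rw [pow_succ (6:ZMod (p^3)) s, q6] at a2
  rw [pow_succ (2:ZMod (p^3)) (3*s), q222] at a3
  rw [q8, q27] at e
  rw [q8] at D
  rw [pow_add (2:ZMod (p^3)) (6*s), q2]
  generalize (2:ZMod (p^3))^s = t at *
  generalize (3:ZMod (p^3))^s = v at *
  generalize ((AP 6 5 (2*s):ℕ):ZMod (p^3)) = W at *
  generalize ((AP 6 1 (s+1):ℕ):ZMod (p^3)) = V at *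
  generalize ((AP 2 1 (3*s+1):ℕ):ZMod (p^3)) = o at *
  have key : x1 * x2 * H = 3 * t^3 * A * B * α * x3 := by
    have D' : IsUnit (W * V * o) := by
      have := (isUnit_of_mul_isUnit_right (show IsUnit (t^3 * (W * V)) by rwa [← mul_assoc]))
      exact this.mul O
    apply D'.mul_left_cancel
    linear_combination (-x2*V*H*o)*a1 - (t*v)^2*B*H*o*a2 + (3*A*B*v^3*o)*a3 - 3*A*B*x3*o*e
  linear_combination (-(x1*x2*H + 3 * t^3 * A * B * α * x3))*key - (9*t^6*α^2*x3^2)*rf + t^6*α^2*x3^2*eγ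
end NodesC

end ModM9c

section ModM9d
open Finset

section XOne
variable {p : ℕ}

theorem one_add_mod [Fact p.Prime] {m : ℕ} (hm : p = 4*m+1) : (∃ s, p = 12*s+1 ∧ m = 3*s) ∨ (∃ s, p = 12*s+5 ∧ m = 3*s+1) := by
  have hp : p.Prime := Fact.out
  have : m % 3 ≠ 2 := by
    intro h
    have : 3 ∣ p := by omega
    have := (Nat.prime_dvd_prime_iff_eq Nat.prime_three hp).1 this
    omega
  rcases (by omega : m % 3 = 0 ∨ m % 3 = 1) with h | h
  · left; exact ⟨m/3, by omega, by omega⟩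
  · right; exact ⟨m/3, by omega, by omega⟩

theorem nodeC [Fact p.Prime] (h3 : 3 < p) {m : ℕ} (hm : p = 4*m+1) {h g : ZMod (p^3)} (hh : 2 * h = 1) (hg : 6 * g = 1) :
    ∃ xc : ZMod (p^3), QRed (p^3) (XC (2*m)) xc ∧
      2^(2*m) * xc * GG p (3*h*h + (p:ZMod (p^3))*(3*h*(-g)))^2 =
        GG p h ^ 2 * (GG p (1 + (p:ZMod (p^3))*(-g)) * GG p (h*h + (p:ZMod (p^3))*(h*(-g))))^2 := by
  rcases one_add_mod hm with ⟨s, hs, hms⟩ | ⟨s, hs, hms⟩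
  · have := nodeC1 h3 hs hh hg
    rw [hms, show 2*(3*s) = 6*s by ring]; exact this
  · have := nodeC2 h3 hs hh hg
    rw [hms, show 2*(3*s+1) = 6*s+2 by ring]; exact this

theorem C_zero [Fact p.Prime] {m : ℕ} (hm : p = 4*m+1) : QC (2*m) = 0 ∧ YC (2*m) = 0 := by
  rcases one_add_mod hm with ⟨s, hs, hms⟩ | ⟨s, hs, hms⟩
  · rw [hms, show 2*(3*s) = 6*s by ring]; exact ⟨QC_six s, YC_six s⟩
  · rw [hms, show 2*(3*s+1) = 6*s+2 by ring]; exact ⟨QC_six2 s, YC_six2 s⟩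

theorem GG_one_sq [Fact p.Prime] (h3 : 3 < p) : GG p 1 ^ 2 = 1 := by
  have := GG_refl h3 (0 : ZMod (p^3))
  rwa [GG_zero, sub_zero, one_mul] at this

theorem X_one [Fact p.Prime] (h3 : 3 < p) {m : ℕ} (hm : p = 4*m+1) {h : ZMod (p^3)} (hh : 2 * h = 1) :
    ∃ x0 : ZMod (p^3), QRed (p^3) (TX 0 (2*m+1)) x0 ∧ x0 * GG p (3*h*h)^4 = (-1)^m * GG p h ^ 2 := by
  have hp : p.Prime := Fact.out
  obtain ⟨g, hg⟩ : ∃ g : ZMod (p^3), 6 * g = 1 := by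
    have : IsUnit ((6:ℕ) : ZMod (p^3)) := natUnit hp 3 (prime_not_dvd_mul hp (not_dvd_lt (by omega) (by omega) : ¬ p ∣ 2) (not_dvd_lt (by omega) (by omega) : ¬ p ∣ 3))
    obtain ⟨c, hc⟩ := this.exists_right_inv
    exact ⟨c, by exact_mod_cast hc⟩
  obtain ⟨xa, qa, ea⟩ := nodeA h3 hm hh
  obtain ⟨xb, qb, eb⟩ := nodeB h3 hm hh
  obtain ⟨xc, qc, ec⟩ := nodeC h3 hm hh hg
  obtain ⟨x0, q0, e0⟩ := interp3 (n := 2*m) hp h3 (by omega) (fam_unit hp h3 3 (by norm_num) (by norm_num) (n := 2*m) (by omega)).1 qa qb qc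
  refine ⟨x0, q0, ?_⟩
  obtain ⟨w, hw⟩ := euler2Z (n := 2*m) hp (by omega) 3
  rw [show (2*m+1)/2 = m by omega] at hw
  have hP : (p:ZMod (p^3))^3 = 0 := pcube
  -- the quad function
  obtain ⟨k, hk, hkk⟩ := ((GG_quad h3 (3*h*h)).comp (3*h)).exists_inv hP (GG_isUnit _)
  have Q1 := GG_quad h3 (1 : ZMod (p^3))
  have Q2 := (GG_quad h3 (h*h)).comp h
  have QE : Quad (p:ZMod (p^3)) (fun y => 1 + (6*((-1)^m*w)) * (p:ZMod (p^3)) * y + (18*y*y - 3*y)*(p:ZMod (p^3))^2*((-1)^m*w)^2) :=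
    ⟨1, 6*((-1)^m*w) - 3*(p:ZMod (p^3))*((-1)^m*w)^2, 18*((-1)^m*w)^2, fun y => by ring⟩
  have QF := QE.mul hP (((Q1.mul hP Q2).mul hP hk).pow hP 2)
  have L := QF.lagrange3 hP hh hg
  have kh := hkk h
  have kmh := hkk (-h)
  have kmg := hkk (-g)
  have k0 := hkk 0
  have gs : (GG p h ^2)^2 = 1 := by
    have := GG_refl h3 h
    rw [show 1 - h = h by linear_combination -hh] at this
    rw [← this]; ring
  have r4 := GG_refl h3 (h*h)
  rw [show 1 - h*h = 3*h*h by linear_combination -(2*h+1)*hh] at r4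
  have g1 := GG_one_sq h3
  simp only [mul_zero, add_zero] at L k0
  have eta : ((-1:ZMod (p^3))^m)^2 = 1 := by rw [← pow_mul, mul_comm, pow_mul]; norm_num
  rw [hw] at ea eb ec
  generalize (-1:ZMod (p^3))^m = η at *
  have hw' : η + (p:ZMod (p^3))*w = η*(1 + (p:ZMod (p^3))*(η*w)) := by linear_combination -(p:ZMod (p^3))*w*eta
  rw [hw'] at ea eb ec
  generalize η*w = δ at *
  generalize GG p (1 + (p:ZMod (p^3))*h) = A1 at *
  generalize GG p (h*h + (p:ZMod (p^3))*(h*h)) = A2 at *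
  generalize GG p (3*h*h + (p:ZMod (p^3))*(3*h*h)) = A3 at *
  generalize GG p (1 + (p:ZMod (p^3))*(-h)) = B1 at *
  generalize GG p (h*h + (p:ZMod (p^3))*(h*(-h))) = B2 at *
  generalize GG p (3*h*h + (p:ZMod (p^3))*(3*h*(-h))) = B3 at *
  generalize GG p (1 + (p:ZMod (p^3))*(-g)) = C1 at *
  generalize GG p (h*h + (p:ZMod (p^3))*(h*(-g))) = C2 at *
  generalize GG p (3*h*h + (p:ZMod (p^3))*(3*h*(-g))) = C3 at *
  generalize GG p (h*h) = D2 at *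
  generalize GG p (3*h*h) = D3 at *
  generalize GG p 1 = D1 at *
  generalize k h = Kh at *
  generalize k (-h) = Kmh at *
  generalize k (-g) = Kmg at *
  generalize k 0 = K0 at *
  generalize GG p h = H at *
  have n8 : ¬ p ∣ 2*2*2 := prime_not_dvd_mul hp (prime_not_dvd_mul hp (not_dvd_lt (by omega) (by omega)) (not_dvd_lt (by omega) (by omega))) (not_dvd_lt (by omega) (by omega))
  generalize (p:ZMod (p^3)) = P at *
  have e6 : h = 3*g := by linear_combination (3*g)*hh - h*hg
  have fa : η * xa * H^2 = (1 + P*δ)^3 * (A1*A2*Kh)^2 := by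
    linear_combination (-(η*xa*H^2*(A3*Kh+1)))*kh + η*Kh^2*ea + (1+P*δ)^3*(A1*A2*Kh)^2*(η^2+1)*eta
  have fb : η * xb * H^2 * (1+P*δ)^3 = (B1*B2*Kmh)^2 := by
    linear_combination (-(η*xb*H^2*(1+P*δ)^3*(B3*Kmh+1)))*kmh + Kmh^2*eb - η*xb*H^2*(1+P*δ)^3*(B3*Kmh)^2*eta
  have fc : η * xc * (1+P*δ) = H^2 * (C1*C2*Kmg)^2 := by
    linear_combination (-(η*xc*(1+P*δ)*(C3*Kmg+1)))*kmg + Kmg^2*ec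
  have la : (1 + 6*δ*P*h + (18*h*h-3*h)*P^2*δ^2) = (1+P*δ)^3 := by
    linear_combination (3*δ*P + (9*h+3)*P^2*δ^2)*hh - δ^3*hP
  have lb : (1 + 6*δ*P*(-h) + (18*(-h)*(-h)-3*(-h))*P^2*δ^2) * (1+P*δ)^3 = 1 := by
    have : (1 + 6*δ*P*(-h) + (18*(-h)*(-h)-3*(-h))*P^2*δ^2) = 1 - 3*P*δ + 6*P^2*δ^2 := by
      linear_combination (-3*δ*P + (9*h+6)*P^2*δ^2)*hh
    rw [this]
    linear_combination (δ^3*10 + 15*P*δ^4 + 6*P^2*δ^5)*hP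
  have lc : (1 + 6*δ*P*(-g) + (18*(-g)*(-g)-3*(-g))*P^2*δ^2) * (1+P*δ) = 1 := by
    have : (1 + 6*δ*P*(-g) + (18*(-g)*(-g)-3*(-g))*P^2*δ^2) = 1 - P*δ + P^2*δ^2 := by
      linear_combination (-δ*P + (3*g+1)*P^2*δ^2)*hg
    rw [this]
    linear_combination δ^3*hP
  rw [la] at L
  generalize (1 + 6*δ*P*(-h) + (18*(-h)*(-h)-3*(-h))*P^2*δ^2) = Eb at *
  generalize (1 + 6*δ*P*(-g) + (18*(-g)*(-g)-3*(-g))*P^2*δ^2) = Ec at *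
  have fb' : η * xb * H^2 = Eb * (B1*B2*Kmh)^2 := by
    linear_combination Eb*fb - η*xb*H^2*lb
  have fc' : η * xc * H^2 = Ec * (C1*C2*Kmg)^2 := by
    linear_combination Ec*H^2*fc - η*xc*H^2*lc + Ec*(C1*C2*Kmg)^2*gs
  have fin : (D1*D2*K0)^2 = η*H^2*x0 := by
    apply cancelN hp n8
    push_cast
    linear_combination L - fa + 2*fb' - 9*fc' - η*H^2*e0
  linear_combination (-η*H^2*D3^4)*fin + (-x0*D3^4)*(H^4*eta + gs) + η*H^2*(D3^2*D1^2*D2^2*(D3*K0+1)*k0 + g1*(D2*D3)^2 + r4)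
end XOne

end ModM9d

section ModM9e
open Finset

section YOne
variable {p : ℕ}

theorem xiY (m : ℕ) : (∏ i ∈ range m, (8*(4*i+5)*(4*i+3)/(3*(6*i+2)*(6*i+4)) : ℚ)) * ((2^m * (2*m).factorial * (3*m).factorial : ℕ)) = ((4*m+1).factorial * m.factorial : ℕ) := by
  induction m with
  | zero => simp
  | succ m ih =>
    rw [prod_range_succ, show 2*(m+1) = 2*m+1+1 by ring, show 3*(m+1) = 3*m+1+1+1 by ring, show 4*(m+1)+1 = 4*m+1+1+1+1+1 by ring]
    rw [Nat.factorial_succ (4*m+1+1+1+1), Nat.factorial_succ (4*m+1+1+1), Nat.factorial_succ (4*m+1+1), Nat.factorial_succ (4*m+1)]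
    simp only [Nat.factorial_succ (2*m+1), Nat.factorial_succ (3*m+1+1), Nat.factorial_succ (3*m+1), Nat.factorial_succ (3*m), Nat.factorial_succ (2*m), Nat.factorial_succ m]
    push_cast at ih ⊢
    have h3 : (6*(m:ℚ)+2) ≠ 0 := by positivity
    have h4 : (6*(m:ℚ)+4) ≠ 0 := by positivity
    rw [pow_succ, div_eq_mul_inv]
    have k : (3*(6*(m:ℚ)+2)*(6*m+4)) * (3*(6*(m:ℚ)+2)*(6*m+4))⁻¹ = 1 := mul_inv_cancel₀ (by positivity)
    generalize (∏ i ∈ range m, (8*(4*i+5)*(4*i+3)/(3*(6*i+2)*(6*i+4)) : ℚ)) = X at *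
    generalize (3*(6*(m:ℚ)+2)*(6*m+4))⁻¹ = J at *
    linear_combination (8*(4*(m:ℚ)+5)*(4*m+3)*(2*m+1)*(m+1)^2)*ih + X*8*(4*(m:ℚ)+5)*(4*m+3)*2^m*(2*m+1)*(m+1)^2*(2*m).factorial*(3*m).factorial*k

theorem GG_P2 [Fact p.Prime] (h3 : 3 < p) (x y : ZMod (p^3)) :
    (p:ZMod (p^3))^2 * GG p (x + (p:ZMod (p^3)) * y) = (p:ZMod (p^3))^2 * GG p x := by
  have hP : (p:ZMod (p^3))^3 = 0 := pcube
  obtain ⟨c, a, b, e⟩ := GG_quad h3 x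
  have e0 := e 0
  have ey := e y
  simp only [mul_zero, add_zero] at e0
  beta_reduce at ey
  rw [ey, e0]
  generalize (p:ZMod (p^3)) = P at *
  linear_combination (a*y + b*P*y^2 )*hP

theorem GG_fact [Fact p.Prime] (h3 : 3 < p) {k : ℕ} (hk : k < p) :
    GG p (1 + (k:ZMod (p^3)))^2 = ((k.factorial:ℕ):ZMod (p^3))^2 := by
  have := GG_up h3 (c := 1) (a := 1) (k := k) (not_dvd_lt (by omega) (by omega)) (x := 1) (by push_cast; ring) (fun i hi => not_dvd_lt (by omega) (by omega))
  rw [AP_fact] at this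
  simp only [Nat.cast_one, one_pow, one_mul] at this
  rw [this, mul_pow, mul_pow, GG_one_sq h3, ← pow_mul, mul_comm k, pow_mul]
  norm_num

theorem Y_one [Fact p.Prime] (h3 : 3 < p) {m : ℕ} (hm : p = 4*m+1) {h : ZMod (p^3)} (hh : 2 * h = 1) :
    ∃ y0 : ZMod (p^3), QRed (p^3) (TY 0 (2*m+1)) y0 ∧ 36 * y0 = (p:ZMod (p^3))^2 * (-1)^m * GG p h ^ 2 * GG p (3*h*h)^4 := by
  have hp : p.Prime := Fact.out
  have hP : (p:ZMod (p^3))^3 = 0 := pcube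
  have hPm : (p:ZMod (p^3)) = 4*(m:ZMod (p^3))+1 := by
    have := congrArg (Nat.cast : ℕ → ZMod (p^3)) hm; push_cast at this; exact this
  have n2 : ¬ p ∣ 2 := not_dvd_lt (by omega) (by omega)
  have n3 : ¬ p ∣ 3 := not_dvd_lt (by omega) (by omega)
  have nf : ∀ k < p, ¬ p ∣ k.factorial := fun k hk hd => by
    rw [hp.dvd_factorial] at hd; omega
  have D := natUnit hp 3 (prime_not_dvd_mul hp (prime_not_dvd_mul hp (fun hd => n2 (hp.dvd_of_dvd_pow hd)) (nf (2*m) (by omega))) (nf (3*m) (by omega)) : ¬ p ∣ 2^m * (2*m).factorial * (3*m).factorial)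
  obtain ⟨α, hα, e⟩ := rep_of_mul hp (r := 3) (by norm_num) (QRed.nat _) (QRed.nat _) D
    (Nat.cast_ne_zero.2 (by positivity)) (xiY m)
  obtain ⟨γ, hγ, eγ⟩ := rep_of_mul hp (r := 3) (a := 2/9) (by norm_num) (QRed.nat (3*3)) (QRed.nat 2) (natUnit hp 3 (prime_not_dvd_mul hp n3 n3)) (by norm_num) (by norm_num)
  have qa : QRed (p^3) (YA (2*m)) (α^2*γ) := by rw [YA_even]; exact (hα.pow 2).mul hγ
  have qb : QRed (p^3) (YB (2*m)) 0 := by rw [YB_even]; exact QRed.zero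
  have qc : QRed (p^3) (YC (2*m)) 0 := by rw [(C_zero hm).2]; exact QRed.zero
  obtain ⟨y0, q0, e0⟩ := interp3 (n := 2*m) hp h3 (by omega) (fam_unit hp h3 3 (by norm_num) (by norm_num) (n := 2*m) (by omega)).2.2 qa qb qc
  refine ⟨y0, q0, ?_⟩
  obtain ⟨w, hw⟩ := euler2Z (n := 2*m) hp (by omega) 3
  rw [show (2*m+1)/2 = m by omega] at hw
  have f1 := GG_fact h3 (k := m) (by omega)
  have f2 := GG_fact h3 (k := 2*m) (by omega)
  have f3 := GG_fact h3 (k := 3*m) (by omega)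
  have f4 := GG_fact h3 (k := 4*m) (by omega)
  have E1 : 1 + (m:ZMod (p^3)) = 3*h*h + (p:ZMod (p^3)) * (h*h) := by
    linear_combination -h*h*hPm - (2*h+1)*(1+(m:ZMod (p^3)))*hh
  have E2 : 1 + ((2*m:ℕ):ZMod (p^3)) = h + (p:ZMod (p^3)) * h := by
    push_cast; linear_combination -h*hPm - (1+2*(m:ZMod (p^3)))*hh
  have E3 : 1 + ((3*m:ℕ):ZMod (p^3)) = h*h + (p:ZMod (p^3)) * (3*h*h) := by
    push_cast; linear_combination -3*h*h*hPm - (2*h+1)*(1+3*(m:ZMod (p^3)))*hh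
  have E4 : 1 + ((4*m:ℕ):ZMod (p^3)) = 0 + (p:ZMod (p^3)) * 1 := by
    push_cast; linear_combination -hPm
  rw [E1] at f1
  rw [E2] at f2
  rw [E3] at f3
  rw [E4] at f4
  have g1 := GG_P2 h3 (3*h*h) (h*h)
  have g2 := GG_P2 h3 h h
  have g3 := GG_P2 h3 (h*h) (3*h*h)
  have g4 := GG_P2 h3 (0:ZMod (p^3)) 1
  rw [GG_zero] at g4
  have gs : (GG p h ^2)^2 = 1 := by
    have := GG_refl h3 h
    rw [show 1 - h = h by linear_combination -hh] at this
    rw [← this]; ring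
  have r4 := GG_refl h3 (h*h)
  rw [show 1 - h*h = 3*h*h by linear_combination -(2*h+1)*hh] at r4
  have eta : ((-1:ZMod (p^3))^m)^2 = 1 := by rw [← pow_mul, mul_comm, pow_mul]; norm_num
  rw [Nat.factorial_succ] at e
  have c1 : ((4*m+1:ℕ):ZMod (p^3)) = (p:ZMod (p^3)) := congrArg (Nat.cast : ℕ → ZMod (p^3)) hm.symm
  rw [Nat.cast_mul ((4*m+1)*(4*m).factorial), Nat.cast_mul (4*m+1), c1] at e
  rw [Nat.cast_mul (2^m * (2*m).factorial), Nat.cast_mul (2^m), Nat.cast_pow] at e D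
  rw [pow_mul'] at hw
  push_cast at e eγ hw D
  generalize GG p (3*h*h + (p:ZMod (p^3)) * (h*h)) = A1 at *
  generalize GG p (h + (p:ZMod (p^3)) * h) = A2 at *
  generalize GG p (h*h + (p:ZMod (p^3)) * (3*h*h)) = A3 at *
  generalize GG p (0 + (p:ZMod (p^3)) * 1) = A4 at *
  generalize GG p (h*h) = D2 at *
  generalize GG p (3*h*h) = D3 at *
  generalize GG p h = H at *
  generalize (-1:ZMod (p^3))^m = η at *
  generalize ((m.factorial:ℕ):ZMod (p^3)) = F1 at *
  generalize (((2*m).factorial:ℕ):ZMod (p^3)) = F2 at *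
  generalize (((3*m).factorial:ℕ):ZMod (p^3)) = F3 at *
  generalize (((4*m).factorial:ℕ):ZMod (p^3)) = F4 at *
  generalize (2:ZMod (p^3))^m = T at *
  have n8 : ¬ p ∣ 2 := n2
  generalize (p:ZMod (p^3)) = P at *
  -- squares times P^2
  obtain ⟨j, hj⟩ := D.exists_right_inv
  have ht : α = P * (F4 * F1 * j) := by linear_combination j * e - α*hj
  have htt : (F4*F1*j) * (T*F2*F3) = F4*F1 := by linear_combination F4*F1*hj
  generalize F4*F1*j = t at *
  have s1 : P^2*F1^2 = P^2*D3^2 := by linear_combination -P^2*f1 + (A1+D3)*g1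
  have s2 : P^2*F2^2 = P^2*H^2 := by linear_combination -P^2*f2 + (A2+H)*g2
  have s3 : P^2*F3^2 = P^2*D2^2 := by linear_combination -P^2*f3 + (A3+D2)*g3
  have s4 : P^2*F4^2 = P^2 := by linear_combination -P^2*f4 + (A4+1)*g4
  have sT : P^2*T^2 = P^2*η := by linear_combination P^2*hw + w*hP
  have main : P^2*t^2*η*H^2*D2^2 = P^2*D3^2 := by
    have q : P^2*(t^2*(T^2*F2^2*F3^2)) = P^2*(F4^2*F1^2) := by
      have := congrArg (fun z => P^2*z^2) htt
      linear_combination this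
    linear_combination q - t^2*F2^2*F3^2*sT - t^2*η*F3^2*s2 - t^2*η*H^2*s3 + F1^2*s4 + s1
  have main2 : P^2*t^2 = P^2*η*H^2*D3^4 := by
    linear_combination η*H^2*D3^2*main - P^2*t^2*(eta*H^4*(D2*D3)^2 + gs*(D2*D3)^2 + r4)
  subst ht
  apply cancelN hp n2
  push_cast
  linear_combination 9*e0 + (P*t)^2*eγ + 2*main2
end YOne

end ModM9e

section ModM10a
open Finset

section Teich
variable {p : ℕ}

theorem pow_sq_congr {a b : ZMod (p^3)} (h : (p:ZMod (p^3)) ∣ a - b) : a^(p^2) = b^(p^2) := by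
  have := dvd_sub_pow_of_dvd_sub h 2
  rw [show 2+1 = 3 from rfl, pcube] at this
  exact sub_eq_zero.1 (zero_dvd_iff.1 this)

/-- the reduction map -/
noncomputable def red (p : ℕ) : ZMod (p^3) →+* ZMod p := ZMod.castHom (dvd_cube p) (ZMod p)

theorem pow_sq_red [Fact p.Prime] {a b : ZMod (p^3)} (h : red p a = red p b) : a^(p^2) = b^(p^2) :=
  pow_sq_congr ((ker_cast _).1 (by rw [map_sub]; exact sub_eq_zero.2 h))

/-- The Teichmüller character. -/
noncomputable def om (p : ℕ) [Fact p.Prime] : MulChar (ZMod p) (ZMod (p^3)) where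
  toFun t := ((t.val:ℕ):ZMod (p^3))^(p^2)
  map_one' := by
    refine (pow_sq_red (b := 1) ?_).trans (one_pow _)
    rw [map_natCast, ZMod.natCast_zmod_val, map_one]
  map_mul' s t := by
    rw [← mul_pow]
    apply pow_sq_red
    rw [map_natCast, map_mul, map_natCast, map_natCast, ZMod.natCast_zmod_val, ZMod.natCast_zmod_val, ZMod.natCast_zmod_val]
  map_nonunit' t ht := by
    have hp : p.Prime := Fact.out
    have : t = 0 := by
      by_contra h; exact ht (isUnit_iff_ne_zero.2 h)
    subst this
    simp [hp.ne_zero]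

theorem om_apply [Fact p.Prime] (t : ZMod p) : om p t = ((t.val:ℕ):ZMod (p^3))^(p^2) := rfl

theorem red_om [Fact p.Prime] (t : ZMod p) : red p (om p t) = t := by
  rw [om_apply, map_pow, map_natCast, ZMod.natCast_zmod_val, pow_two, pow_mul, ZMod.pow_card, ZMod.pow_card]

theorem om_eq [Fact p.Prime] {t : ZMod p} {a : ZMod (p^3)} (h : red p a = t) : om p t = a^(p^2) := by
  rw [om_apply]
  apply pow_sq_red
  rw [map_natCast, ZMod.natCast_zmod_val, h]

theorem om_neg_one [Fact p.Prime] (h3 : 3 < p) : om p (-1) = -1 := by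
  have hp : p.Prime := Fact.out
  rw [om_eq (a := -1) (by rw [map_neg, map_one])]
  exact Odd.neg_one_pow ((hp.odd_of_ne_two (by omega)).pow)

/-- main local expansion -/
theorem om_one_sub [Fact p.Prime] (h3 : 3 < p) {m : ℕ} (hm : p = 4*m+1) (t : ZMod p) :
    8 * om p (1-t)^(2*m) = 15*(1-om p t)^(2*m) - 10*(1-om p t)^(6*m) + 3*(1-om p t)^(10*m) := by
  have hp : p.Prime := Fact.out
  by_cases ht : t = 1
  · subst ht
    rw [sub_self, map_one, sub_self, MulChar.map_zero, zero_pow (by omega), zero_pow (by omega), zero_pow (by omega)]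
    ring
  have hP : (p:ZMod (p^3))^3 = 0 := pcube
  rw [om_eq (t := 1-t) (a := 1 - om p t) (by rw [map_sub, map_one, red_om])]
  set u := 1 - om p t with hu
  have hr : red p u ≠ 0 := by
    rw [hu, map_sub, map_one, red_om]; exact sub_ne_zero.2 (Ne.symm ht)
  obtain ⟨v, hv⟩ : (p:ZMod (p^3)) ∣ u^(4*m) - 1 := by
    apply (ker_cast _).1
    change red p _ = 0
    have := ZMod.pow_card_sub_one_eq_one hr
    rw [show p - 1 = 4*m by omega] at this
    rw [map_sub, map_pow, this, map_one, sub_self]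
  have hv' : u^(4*m) = 1 + (p:ZMod (p^3))*v := by linear_combination hv
  have e1 : (u^(p^2))^(2*m) = u^(2*m) * (u^(4*m))^(2*m*(p+1)) := by
    rw [← pow_mul, ← pow_mul, ← pow_add]
    congr 1
    have : p^2 = 1 + 4*m*(p+1) := by rw [hm]; ring
    rw [this]; ring
  have e2 : u^(6*m) = u^(2*m) * u^(4*m) := by rw [← pow_add]; congr 1; ring
  have e3 : u^(10*m) = u^(2*m) * (u^(4*m))^2 := by rw [← pow_mul, ← pow_add]; congr 1; ring
  have hN : ((2*m*(p+1):ℕ):ZMod (p^3)) * 2 = (p:ZMod (p^3))^2 - 1 := by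
    have : 2*m*(p+1)*2 + 1 = p^2 := by rw [hm]; ring
    have := congrArg (Nat.cast : ℕ → ZMod (p^3)) this
    push_cast at this ⊢
    linear_combination this
  rw [e1, e2, e3, hv']
  generalize 2*m*(p+1) = N at *
  have key : ∀ N : ℕ, 2*(1+(p:ZMod (p^3))*v)^N = 2 + 2*(N:ZMod (p^3))*(p:ZMod (p^3))*v + (N:ZMod (p^3))*((N:ZMod (p^3))-1)*(p:ZMod (p^3))^2*v^2 := by
    intro N
    induction N with
    | zero => simp
    | succ n ih =>
      rw [pow_succ (1+(p:ZMod (p^3))*v) n]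
      push_cast
      linear_combination (1+(p:ZMod (p^3))*v)*ih + (n:ZMod (p^3))*((n:ZMod (p^3))-1)*v^3*hP
  have k := key N
  generalize (p:ZMod (p^3)) = P at *
  generalize (N:ZMod (p^3)) = n at *
  generalize (1+P*v)^N = Z at *
  generalize u^(2*m) = U at *
  linear_combination 4*U*k + U*(4*P*v + (2*n+P^2-1-2)*P^2*v^2)*hN + U*(4*v+P*v^2*(P^2-4))*hP
end Teich

end ModM10a

section ModM10b
open Finset

section TeichSum
variable {p : ℕ}

theorem om_sum [Fact p.Prime] {j : ℕ} (hj : j ≠ 0) {n : ℕ} (hn : p = n+1) :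
    ∑ t : ZMod p, om p t ^ j = if n ∣ j then (p:ZMod (p^3)) - 1 else 0 := by
  have hp : p.Prime := Fact.out
  split_ifs with hd
  · have e : ∀ t : ZMod p, om p t ^ j = 1 - if t = 0 then 1 else 0 := by
      intro t
      split_ifs with h0
      · rw [h0, MulChar.map_zero, zero_pow hj, sub_self]
      · obtain ⟨c, rfl⟩ := hd
        have := ZMod.pow_card_sub_one_eq_one h0
        rw [show p - 1 = n by omega] at this
        rw [pow_mul, ← map_pow, this, map_one, one_pow, sub_zero]
    simp_rw [e, sum_sub_distrib]
    simp [ZMod.card]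
  · obtain ⟨g, hg⟩ := IsCyclic.exists_generator (α := (ZMod p)ˣ)
    have hgj : ((g:ZMod p))^j ≠ 1 := by
      intro h
      have h' : g^j = 1 := Units.ext (by simpa using h)
      have := orderOf_dvd_of_pow_eq_one h'
      rw [orderOf_eq_card_of_forall_mem_zpowers hg, Nat.card_eq_fintype_card, ZMod.card_units_eq_totient, Nat.totient_prime hp, show p - 1 = n by omega] at this
      exact hd this
    have e : om p (g:ZMod p) ^ j * ∑ t : ZMod p, om p t ^ j = ∑ t : ZMod p, om p t ^ j := by
      rw [mul_sum]
      rw [← Equiv.sum_comp (Units.mulLeft g) (fun t => om p t ^ j)]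
      apply sum_congr rfl
      intro t _
      simp [mul_pow]
    have u : IsUnit (om p (g:ZMod p) ^ j - 1) := by
      rw [isUnit_iff_cast]
      change red p _ ≠ 0
      rw [map_sub, map_pow, red_om, map_one]
      exact sub_ne_zero.2 hgj
    apply u.mul_right_eq_zero.1
    linear_combination e

theorem om_sum_binom [Fact p.Prime] {m : ℕ} (h0 : 0 < m) (hm : p = 4*m+1) (K : ℕ) :
    ∑ t : ZMod p, om p t ^ (3*m) * (1 - om p t)^K =
      ((p:ZMod (p^3)) - 1) * ∑ j ∈ (range (K+1)).filter (fun j => 4*m ∣ 3*m+j), (-1)^j * ((K.choose j : ℕ):ZMod (p^3)) := by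
  have e : ∀ t : ZMod p, om p t ^ (3*m) * (1 - om p t)^K = ∑ j ∈ range (K+1), om p t ^ (3*m+j) * ((-1)^j * ((K.choose j : ℕ):ZMod (p^3))) := by
    intro t
    rw [sub_eq_add_neg, add_comm, add_pow, mul_sum]
    apply sum_congr rfl
    intro j _
    rw [one_pow, neg_pow, pow_add (om p t) (3*m) j]
    ring
  simp_rw [e]
  rw [sum_comm, mul_sum, sum_filter]
  apply sum_congr rfl
  intro j _
  rw [← sum_mul, om_sum (by omega) hm]
  split_ifs <;> simp

theorem filt (m K : ℕ) (h0 : 0 < m) (hK : K ≤ 10) (s : Finset ℕ) (hs : ∀ c, 0 < c → (4*c - 3 ≤ K ↔ 4*c-3 ∈ s)) (hs' : ∀ a ∈ s, a = 1 ∨ a = 5 ∨ a = 9) :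
    (range (K*m+1)).filter (fun j => 4*m ∣ 3*m+j) = s.image (fun a => a*m) := by
  ext j
  simp only [mem_filter, mem_range, mem_image]
  constructor
  · rintro ⟨h1, c, hc⟩
    have hc0 : 0 < c := by
      rcases Nat.eq_zero_or_pos c with h | h
      · subst h; omega
      · exact h
    have hj : (4*c-3)*m = j := by
      obtain ⟨d, rfl⟩ : ∃ d, c = d+1 := ⟨c-1, by omega⟩
      have : 4*(d+1)-3 = 4*d+1 := by omega
      rw [this]; nlinarith
    refine ⟨4*c-3, (hs c hc0).1 ?_, hj⟩
    rw [← hj] at h1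
    exact Nat.le_of_mul_le_mul_right (Nat.lt_succ_iff.1 h1) h0
  · rintro ⟨a, ha, rfl⟩
    have hle : a ≤ K := by
      rcases hs' a ha with h | h | h
      · have := (hs 1 (by norm_num)); subst h; exact this.2 ha
      · have := (hs 2 (by norm_num)); subst h; exact this.2 ha
      · have := (hs 3 (by norm_num)); subst h; exact this.2 ha
    refine ⟨Nat.lt_succ_iff.2 (Nat.mul_le_mul_right _ hle), ?_⟩
    rcases hs' a ha with h | h | h
    · exact ⟨1, by subst h; ring⟩
    · exact ⟨2, by subst h; ring⟩
    · exact ⟨3, by subst h; ring⟩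

/-- The Jacobi sum in R, in terms of binomials -/
theorem jac_binom [Fact p.Prime] (h3 : 3 < p) {m : ℕ} (h0 : 0 < m) (hm : p = 4*m+1) :
    8 * ∑ t : ZMod p, om p t ^ (3*m) * om p (1-t) ^ (2*m) = ((p:ZMod (p^3)) - 1) * (-1)^m *
     (15 * (((2*m).choose m : ℕ):ZMod (p^3)) - 20 * (((6*m).choose m : ℕ):ZMod (p^3)) + 6 * (((10*m).choose m : ℕ):ZMod (p^3))
       + 3 * (((10*m).choose (5*m) : ℕ):ZMod (p^3))) := by
  have e : 8 * ∑ t : ZMod p, om p t ^ (3*m) * om p (1-t) ^ (2*m) =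
     15 * (∑ t : ZMod p, om p t ^ (3*m) * (1 - om p t)^(2*m)) - 10 * (∑ t : ZMod p, om p t ^ (3*m) * (1 - om p t)^(6*m))
      + 3 * (∑ t : ZMod p, om p t ^ (3*m) * (1 - om p t)^(10*m)) := by
    simp_rw [mul_sum]
    rw [← sum_sub_distrib, ← sum_add_distrib]
    apply sum_congr rfl
    intro t _
    linear_combination om p t ^ (3*m) * om_one_sub h3 hm t
  have inj : Function.Injective (fun a => a*m) := fun a b h => Nat.eq_of_mul_eq_mul_right h0 h
  rw [e, om_sum_binom h0 hm, om_sum_binom h0 hm, om_sum_binom h0 hm,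
    filt m 2 h0 (by norm_num) {1} (by intro c hc; simp; omega) (by simp),
    filt m 6 h0 (by norm_num) {1,5} (by intro c hc; simp; omega) (by simp),
    filt m 10 h0 (by norm_num) {1,5,9} (by intro c hc; simp; omega) (by simp),
    sum_image inj.injOn, sum_image inj.injOn, sum_image inj.injOn]
  have c1 : (6*m).choose (5*m) = (6*m).choose m := Nat.choose_symm_of_eq_add (by ring)
  have c2 : (10*m).choose (9*m) = (10*m).choose m := Nat.choose_symm_of_eq_add (by ring)
  have s5 : (-1:ZMod (p^3))^(5*m) = (-1)^m := by rw [pow_mul]; norm_num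
  have s9 : (-1:ZMod (p^3))^(9*m) = (-1)^m := by rw [pow_mul]; norm_num
  rw [sum_singleton, sum_pair (by norm_num), sum_insert (by simp), sum_pair (by norm_num), c1, c2, s5, s9, one_mul]
  ring
end TeichSum

end ModM10b

section ModM10c
open Finset

section Gauss
variable {p : ℕ}

theorem two_sq_unique (hp : p.Prime) {A B x y : ℤ} (h1 : A^2+B^2 = p) (h2 : (p:ℤ) = x^2+4*y^2) (hA : Odd A) (hp2 : p ≠ 2) :
    A^2 = x^2 := by
  have hpo : Odd (p:ℤ) := by exact_mod_cast hp.odd_of_ne_two hp2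
  have hx : Odd x := by
    by_contra h
    rw [Int.not_odd_iff_even] at h
    obtain ⟨c, rfl⟩ := h
    obtain ⟨d, hd⟩ := hpo
    have : 2*d+1 = 2*(2*c^2+2*y^2) := by rw [← hd, h2]; ring
    omega
  have hB : Even B := by
    by_contra h
    rw [Int.not_even_iff_odd] at h
    obtain ⟨c, rfl⟩ := h
    obtain ⟨d, hd⟩ := hpo
    obtain ⟨e, rfl⟩ := hA
    have : 2*d+1 = 2*(2*e^2+2*e+2*c^2+2*c+1) := by rw [← hd, ← h1]; ring
    omega
  have hodd : ∀ s : ℤ, A*x + s*(B*(2*y)) ≠ 0 := by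
    intro s h
    have o := hA.mul hx
    have ev : Even (s*(B*(2*y))) := (hB.mul_right _).mul_left _
    have := o.add_even ev
    rw [h] at this
    exact absurd this (by decide)
  have hpp : (p:ℤ) ≠ 0 := by exact_mod_cast hp.ne_zero
  have hpr : Prime (p:ℤ) := Nat.prime_iff_prime_int.1 hp
  have prod : (A*(2*y) - B*x)*(A*(2*y)+B*x) = p*(A^2-x^2) := by
    have e : (A*(2*y) - B*x)*(A*(2*y)+B*x) = A^2*(4*y^2) - B^2*x^2 := by ring
    rw [e]
    linear_combination -A^2*h2 - x^2*h1
  have fin : ∀ s : ℤ, s^2 = 1 → (p:ℤ) ∣ A*(2*y) - s*(B*x) → A*(2*y) - s*(B*x) = 0 := by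
    rintro s hs ⟨c, hc⟩
    have q : (p:ℤ)^2 = (A*x + s*(B*(2*y)))^2 + (A*(2*y) - s*(B*x))^2 := by
      have : (p:ℤ)^2 = (A^2+B^2)*(x^2+4*y^2) := by rw [h1, ← h2]; ring
      rw [this]
      linear_combination -(B^2*(4*y^2) + B^2*x^2)*hs
    rw [hc] at q
    have hn := hodd s
    have pos : 0 < (A*x + s*(B*(2*y)))^2 := by positivity
    have hp2 : 0 < (p:ℤ)^2 := by positivity
    have : c^2 < 1 := by nlinarith
    have : c = 0 := by nlinarith [sq_nonneg c, sq_abs c, abs_nonneg c, pow_eq_zero_iff (two_ne_zero) |>.1 (show c^2 = 0 by nlinarith [sq_nonneg c])]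
    rw [hc, this, mul_zero]
  have z : (A*(2*y) - B*x)*(A*(2*y)+B*x) = 0 := by
    rcases hpr.dvd_or_dvd (Dvd.intro _ prod.symm) with h | h
    · have := fin 1 (by norm_num) (by simpa using h)
      rw [one_mul] at this; rw [this, zero_mul]
    · have := fin (-1) (by norm_num) (by rw [neg_one_mul, sub_neg_eq_add]; exact h)
      rw [neg_one_mul, sub_neg_eq_add] at this; rw [this, mul_zero]
  rw [prod] at z
  rcases mul_eq_zero.1 z with h | h
  · exact absurd h hpp
  · linarith

theorem prim_i : IsPrimitiveRoot (⟨0,1⟩ : GaussianInt) 4 := by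
  refine IsPrimitiveRoot.mk_of_lt _ (by norm_num) (by decide) ?_
  intro l h0 h4
  interval_cases l <;> decide

theorem gauss_jac [Fact p.Prime] (h3 : 3 < p) {m : ℕ} (h0 : 0 < m) (hm : p = 4*m+1) :
    ∃ A B : ℤ, Odd A ∧ A^2 + B^2 = p ∧ ∃ π' : ZMod (p^3),
      (∑ t : ZMod p, om p t ^ (3*m) * om p (1-t) ^ (2*m)) * π' = (p:ZMod (p^3)) ∧
      2 * (A:ZMod (p^3)) = (∑ t : ZMod p, om p t ^ (3*m) * om p (1-t) ^ (2*m)) + π' := by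
  classical
  have hp : p.Prime := Fact.out
  obtain ⟨g, hg⟩ := IsCyclic.exists_generator (α := (ZMod p)ˣ)
  have hcard : Fintype.card (ZMod p)ˣ = 4*m := by
    rw [ZMod.card_units_eq_totient, Nat.totient_prime hp]; omega
  let iu : GaussianIntˣ := ⟨⟨0,1⟩, ⟨0,-1⟩, by decide, by decide⟩
  have hi4 : iu^4 = 1 := by
    apply Units.ext; decide
  have hi : iu ∈ rootsOfUnity (Fintype.card (ZMod p)ˣ) GaussianInt := by
    rw [mem_rootsOfUnity, hcard, pow_mul, hi4, one_pow]
  set χ := MulChar.ofRootOfUnity hi hg with hχ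
  have χg : χ (g:ZMod p) = (iu : GaussianInt) := MulChar.ofRootOfUnity_spec hi hg
  have χ4 : χ^4 = 1 := by
    rw [MulChar.eq_iff hg, MulChar.pow_apply_coe, χg, MulChar.one_apply_coe]
    decide
  have χne : χ ≠ 1 := by
    rw [Ne, MulChar.eq_iff hg, χg, MulChar.one_apply_coe]; decide
  have χ2ne : χ^2 ≠ 1 := by
    rw [Ne, MulChar.eq_iff hg, MulChar.pow_apply_coe, χg, MulChar.one_apply_coe]; decide
  have χ3ne : χ*χ^2 ≠ 1 := by
    rw [← pow_succ', Ne, MulChar.eq_iff hg, MulChar.pow_apply_coe, χg, MulChar.one_apply_coe]; decide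
  set J := jacobiSum χ (χ^2) with hJ
  -- norm
  have hnorm : J.re^2 + J.im^2 = p := by
    have inj : Function.Injective GaussianInt.toComplex := by
      intro a b hab
      exact GaussianInt.toComplex_inj.1 hab
    have k := jacobiSum_mul_jacobiSum_inv (F := ZMod p) (F' := ℂ) (χ := χ.ringHomComp GaussianInt.toComplex) (φ := (χ^2).ringHomComp GaussianInt.toComplex)
      (by rw [ZMod.ringChar_zmod_n, ringChar.eq_zero]; exact hp.ne_zero.symm)
      ((MulChar.ringHomComp_ne_one_iff inj).2 χne) ((MulChar.ringHomComp_ne_one_iff inj).2 χ2ne)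
      (by rw [← MulChar.ringHomComp_mul]; exact (MulChar.ringHomComp_ne_one_iff inj).2 χ3ne)
    rw [← MulChar.star_eq_inv, ← MulChar.star_eq_inv] at k
    have st : ∀ ψ : MulChar (ZMod p) ℂ, star ψ = ψ.ringHomComp (starRingEnd ℂ) := fun ψ => rfl
    rw [st, st, jacobiSum_ringHomComp, jacobiSum_ringHomComp, jacobiSum_ringHomComp, ← hJ, Complex.mul_conj, ZMod.card, GaussianInt.toComplex_def₂, Complex.normSq_mk] at k
    have k2 : ((J.re:ℝ) * J.re + (J.im:ℝ)*J.im) = (p:ℝ) := by exact_mod_cast k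
    have k3 : J.re*J.re+J.im*J.im = (p:ℤ) := by exact_mod_cast k2
    linarith
  have hodd : Odd J.re := by
    obtain ⟨z, -, hz⟩ := exists_jacobiSum_eq_neg_one_add (n := 4) (by norm_num) χ4 (show (χ^2)^4 = 1 by rw [← pow_mul, mul_comm, pow_mul, χ4, one_pow]) (by rw [ZMod.card]; exact ⟨m, by omega⟩) prim_i
    rw [← hJ] at hz
    have : ((⟨0,1⟩:GaussianInt) - 1)^2 = ⟨0,-2⟩ := by decide
    rw [this] at hz
    have h := congrArg Zsqrtd.re hz
    simp at h
    exact ⟨z.im - 1, by rw [h]; ring⟩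
  -- map to R
  have ρ2 : (om p (g:ZMod p))^(3*m) * (om p (g:ZMod p))^(3*m) = ((-1:ℤ):ZMod (p^3)) := by
    have hg2 : (g:ZMod p)^(2*m) = -1 := by
      have h1 : ((g:ZMod p)^(2*m) - 1)*((g:ZMod p)^(2*m) + 1) = 0 := by
        have := ZMod.pow_card_sub_one_eq_one (Units.ne_zero g)
        rw [show p - 1 = 2*m + 2*m by omega, pow_add] at this
        linear_combination this
      rcases mul_eq_zero.1 h1 with h | h
      · exfalso
        have h' : g^(2*m) = 1 := Units.ext (by simpa using sub_eq_zero.1 h)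
        have := orderOf_dvd_of_pow_eq_one h'
        rw [orderOf_eq_card_of_forall_mem_zpowers hg, Nat.card_eq_fintype_card, hcard] at this
        have := Nat.le_of_dvd (by omega) this
        omega
      · exact eq_neg_of_add_eq_zero_left h
    rw [← pow_add, show 3*m+3*m = 2*m*3 by ring, pow_mul, ← map_pow, hg2, om_neg_one h3]
    norm_num
  set φ : GaussianInt →+* ZMod (p^3) := Zsqrtd.lift ⟨_, ρ2⟩ with hφ
  have φ_apply : ∀ a : GaussianInt, φ a = (a.re:ZMod (p^3)) + (a.im:ZMod (p^3)) * (om p (g:ZMod p))^(3*m) := fun a => rfl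
  have c1 : χ.ringHomComp φ = (om p)^(3*m) := by
    rw [MulChar.eq_iff hg, MulChar.pow_apply_coe, MulChar.ringHomComp_apply, χg, φ_apply]
    simp [iu]
  have c2 : (χ^2).ringHomComp φ = (om p)^(2*m) := by
    rw [← MulChar.ringHomComp_pow, c1, ← pow_mul, show 3*m*2 = 4*m + 2*m by ring, pow_add, ← hcard, MulChar.pow_card_eq_one, one_mul]
  have hS : φ J = ∑ t : ZMod p, om p t ^ (3*m) * om p (1-t) ^ (2*m) := by
    rw [hJ, ← jacobiSum_ringHomComp, c1, c2, jacobiSum]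
    apply sum_congr rfl
    intro t _
    rw [MulChar.pow_apply' _ (by omega), MulChar.pow_apply' _ (by omega)]
  refine ⟨J.re, J.im, hodd, hnorm, (J.re:ZMod (p^3)) - (J.im:ZMod (p^3)) * (om p (g:ZMod p))^(3*m), ?_, ?_⟩
  · rw [← hS, φ_apply]
    have := congrArg (Int.cast : ℤ → ZMod (p^3)) hnorm
    push_cast at this ρ2
    linear_combination this - (J.im:ZMod (p^3))^2*ρ2
  · rw [← hS, φ_apply]; ring
end Gauss

end ModM10c

section ModM10d
open Finset

section Binom
variable {p : ℕ}

/-- prime-free factorial -/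
def PF (p N : ℕ) : ℕ := ∏ i ∈ range N, if p ∣ i+1 then 1 else i+1

theorem PF_succ (p N : ℕ) : PF p (N+1) = PF p N * if p ∣ N+1 then 1 else N+1 := prod_range_succ _ _

theorem PF_fact (hp : 0 < p) (N : ℕ) : N.factorial = PF p N * p^(N/p) * (N/p).factorial := by
  induction N with
  | zero => simp [PF]
  | succ N ih =>
    rw [Nat.factorial_succ, PF_succ, ih, Nat.succ_div]
    split_ifs with h
    · rw [Nat.factorial_succ, pow_succ]
      have : N + 1 = p * (N/p+1) := by
        have h2 := Nat.succ_div_of_dvd h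
        have h1 := Nat.mul_div_cancel' h
        rw [h2] at h1
        exact h1.symm
      generalize N/p = q at *
      generalize PF p N = F at *
      calc (N+1) * (F*p^q*q.factorial) = (p*(q+1)) * (F*p^q*q.factorial) := by rw [← this]
        _ = _ := by ring
    · rw [add_zero]; ring

theorem GG_PF [Fact p.Prime] (h3 : 3 < p) (N : ℕ) :
    GG p (1 + (N:ZMod (p^3))) = -((-1)^N * ((PF p N:ℕ):ZMod (p^3))) := by
  have hp : p.Prime := Fact.out
  haveI : Nontrivial (ZMod (p^3)) := ZMod.nontrivial_iff.2 (pr_ne hp (by norm_num))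
  induction N with
  | zero =>
    have := GG_succ h3 (0:ZMod (p^3))
    rw [GG_zero, hG_non (by simp), zero_add] at this
    simp [PF, this]
  | succ N ih =>
    have e : 1 + ((N+1:ℕ):ZMod (p^3)) = 1 + (N:ZMod (p^3)) + 1 := by push_cast; ring
    have c : 1 + (N:ZMod (p^3)) = ((N+1:ℕ):ZMod (p^3)) := by push_cast; ring
    rw [e, GG_succ h3, ih, PF_succ]
    split_ifs with h
    · have : ¬ IsUnit (1 + (N:ZMod (p^3))) := by
        rw [isUnit_iff_P, not_not, c]
        obtain ⟨d, hd⟩ := h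
        exact ⟨(d:ZMod (p^3)), by rw [hd]; push_cast; ring⟩
      rw [hG_non this, mul_one, pow_succ (-1:ZMod (p^3)) N]; ring
    · have : IsUnit (1 + (N:ZMod (p^3))) := by rw [c]; exact natUnit hp 3 h
      rw [hG_unit this, pow_succ (-1:ZMod (p^3)) N]; push_cast; ring

theorem choose_PF [Fact p.Prime] (h3 : 3 < p) (a b i j : ℕ) (hi : a/p = i) (hj : b/p = j) (hij : (a+b)/p = i+j) :
    (((a+b).choose a : ℕ):ZMod (p^3)) * (GG p (1+(a:ZMod (p^3))) * GG p (1+(b:ZMod (p^3)))) =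
      -((((i+j).choose i : ℕ):ZMod (p^3)) * GG p (1+((a+b:ℕ):ZMod (p^3)))) := by
  have hp : p.Prime := Fact.out
  have e := Nat.add_choose_mul_factorial_mul_factorial a b
  have f := Nat.add_choose_mul_factorial_mul_factorial i j
  rw [PF_fact hp.pos (a+b), PF_fact hp.pos a, PF_fact hp.pos b, hi, hj, hij, ← f] at e
  have key : (a+b).choose a * (PF p a * PF p b) = (i+j).choose i * PF p (a+b) := by
    have pos : 0 < p^i * p^j * i.factorial * j.factorial := by
      have := hp.pos; positivity
    apply Nat.eq_of_mul_eq_mul_right pos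
    rw [pow_add, ← Nat.choose_symm_add, ← Nat.choose_symm_add (a := i)] at e
    linarith
  have key' := congrArg (Nat.cast : ℕ → ZMod (p^3)) key
  rw [GG_PF h3, GG_PF h3, GG_PF h3, pow_add (-1:ZMod (p^3)) a b]
  push_cast at key' ⊢
  linear_combination (-1)^a*(-1)^b*key'

theorem GG_step [Fact p.Prime] (h3 : 3 < p) (x : ZMod (p^3)) {a : ℕ} (ha : ¬ p ∣ a) (c y : ZMod (p^3)) (h : c * x = -(a:ZMod (p^3)) + (p:ZMod (p^3)) * y) :
    c * GG p (x+1) = GG p x * ((a:ZMod (p^3)) - (p:ZMod (p^3)) * y) := by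
  have hp : p.Prime := Fact.out
  have u : IsUnit (c * x) := by
    rw [h, P_isUnit_add]; exact (natUnit hp 3 ha).neg
  rw [GG_succ h3, hG_unit (isUnit_of_mul_isUnit_right u)]
  linear_combination -GG p x * h

/-- The binomials in terms of G-values at 1/2+.. and 3/4+..; `Q = p/4`. -/
theorem binoms [Fact p.Prime] {m : ℕ} (h0 : 2 < m) (hm : p = 4*m+1) {h Q : ZMod (p^3)} (hh : 2*h = 1) (hQ : 4*Q = (p:ZMod (p^3))) :
    (((2*m).choose m : ℕ):ZMod (p^3)) * GG p (3*h*h+Q)^2 = - GG p (h+2*Q) ∧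
    (((6*m).choose m : ℕ):ZMod (p^3)) * (GG p (3*h*h+Q) * GG p (3*h*h+5*Q)) * 2 * (1 - 12*Q) = - GG p (h+6*Q) * (1-20*Q) ∧
    (((10*m).choose m : ℕ):ZMod (p^3)) * (GG p (3*h*h+Q) * GG p (3*h*h+9*Q)) * 4 * (3 - 20*Q) * (1-20*Q) = - GG p (h+10*Q) * (5-36*Q)*(1-36*Q) ∧
    (((10*m).choose (5*m) : ℕ):ZMod (p^3)) * GG p (3*h*h+5*Q)^2 * 2 * (3 - 20*Q) * (1-20*Q) = - GG p (h+10*Q) * (1-20*Q)^2 := by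
  have hp : p.Prime := Fact.out
  have h3 : 3 < p := by omega
  have hPm : (p:ZMod (p^3)) = 4*(m:ZMod (p^3))+1 := by
    have := congrArg (Nat.cast : ℕ → ZMod (p^3)) hm; push_cast at this; exact this
  have n2 : ¬ p ∣ 2 := not_dvd_lt (by omega) (by omega)
  have n4 : ¬ p ∣ 4 := not_dvd_lt (by omega) (by omega)
  have hQm : (m:ZMod (p^3)) = Q - h*h := by
    apply cancelN hp n4; push_cast; linear_combination -hQ - hPm + (2*h+1)*hh
  have d0 : m/p = 0 := Nat.div_eq_of_lt (by omega)
  have d5 : 5*m/p = 1 := Nat.div_eq_of_lt_le (by omega) (by omega)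
  have d9 : 9*m/p = 2 := Nat.div_eq_of_lt_le (by omega) (by omega)
  have B2 := choose_PF h3 m m 0 0 d0 d0 (Nat.div_eq_of_lt (by omega))
  have B6 := choose_PF h3 m (5*m) 0 1 d0 d5 (Nat.div_eq_of_lt_le (by omega) (by omega))
  have B10 := choose_PF h3 m (9*m) 0 2 d0 d9 (Nat.div_eq_of_lt_le (by omega) (by omega))
  have D10 := choose_PF h3 (5*m) (5*m) 1 1 d5 d5 (Nat.div_eq_of_lt_le (by omega) (by omega))
  rw [show m + m = 2*m by ring] at B2
  rw [show m + 5*m = 6*m by ring] at B6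
  rw [show m + 9*m = 10*m by ring] at B10
  rw [show 5*m + 5*m = 10*m by ring] at D10
  have a1 : 1 + (m:ZMod (p^3)) = 3*h*h+Q := by linear_combination hQm - (2*h+1)*hh
  have a2 : 1 + ((2*m:ℕ):ZMod (p^3)) = h+2*Q := by push_cast; linear_combination 2*hQm - (h+1)*hh
  have a5 : GG p (3*h*h+5*Q) * 4 = GG p (1 + ((5*m:ℕ):ZMod (p^3))) * (1 - 20*Q) := by
    have := GG_step h3 (1 + ((5*m:ℕ):ZMod (p^3))) (a := 1) (not_dvd_lt (by omega) (by omega)) 4 5 (by push_cast; linear_combination -5*hPm)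
    rw [show 1 + ((5*m:ℕ):ZMod (p^3)) + 1 = 3*h*h+5*Q by push_cast; linear_combination 5*hQm - 2*(2*h+1)*hh] at this
    push_cast at this ⊢
    linear_combination this + 5*GG p (1 + 5*(m:ZMod (p^3)))*hQ
  have a6 : GG p (h+6*Q) * 2 = GG p (1 + ((6*m:ℕ):ZMod (p^3))) * (1 - 12*Q) := by
    have := GG_step h3 (1 + ((6*m:ℕ):ZMod (p^3))) (a := 1) (not_dvd_lt (by omega) (by omega)) 2 3 (by push_cast; linear_combination -3*hPm)
    rw [show 1 + ((6*m:ℕ):ZMod (p^3)) + 1 = h+6*Q by push_cast; linear_combination 6*hQm - (3*h+2)*hh] at this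
    push_cast at this ⊢
    linear_combination this + 3*GG p (1 + 6*(m:ZMod (p^3)))*hQ
  have a9 : GG p (3*h*h+9*Q) * 16 = GG p (1 + ((9*m:ℕ):ZMod (p^3))) * (5 - 36*Q) * (1 - 36*Q) := by
    have e1 := GG_step h3 (1 + ((9*m:ℕ):ZMod (p^3))) (a := 5) (not_dvd_lt (by omega) (by omega)) 4 9 (by push_cast; linear_combination -9*hPm)
    have e2 := GG_step h3 (1 + ((9*m:ℕ):ZMod (p^3)) + 1) (a := 1) (not_dvd_lt (by omega) (by omega)) 4 9 (by push_cast; linear_combination -9*hPm)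
    rw [show 1 + ((9*m:ℕ):ZMod (p^3)) + 1 + 1 = 3*h*h+9*Q by push_cast; linear_combination 9*hQm - 3*(2*h+1)*hh] at e2
    generalize GG p (1 + ((9*m:ℕ):ZMod (p^3)) + 1) = X at *
    generalize GG p (1 + ((9*m:ℕ):ZMod (p^3))) = Y at *
    rw [← hQ] at e1 e2
    push_cast at e1 e2
    linear_combination 4*e2 + (1-36*Q)*e1
  have a10 : GG p (h+10*Q) * 4 = GG p (1 + ((10*m:ℕ):ZMod (p^3))) * (3 - 20*Q) * (1 - 20*Q) := by
    have e1 := GG_step h3 (1 + ((10*m:ℕ):ZMod (p^3))) (a := 3) (not_dvd_lt (by omega) (by omega)) 2 5 (by push_cast; linear_combination -5*hPm)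
    have e2 := GG_step h3 (1 + ((10*m:ℕ):ZMod (p^3)) + 1) (a := 1) (not_dvd_lt (by omega) (by omega)) 2 5 (by push_cast; linear_combination -5*hPm)
    rw [show 1 + ((10*m:ℕ):ZMod (p^3)) + 1 + 1 = h+10*Q by push_cast; linear_combination 10*hQm - (5*h+3)*hh] at e2
    generalize GG p (1 + ((10*m:ℕ):ZMod (p^3)) + 1) = X at *
    generalize GG p (1 + ((10*m:ℕ):ZMod (p^3))) = Y at *
    rw [← hQ] at e1 e2
    push_cast at e1 e2
    linear_combination 2*e2 + (1-20*Q)*e1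
  rw [a1] at B2 B6 B10
  rw [a2] at B2
  generalize GG p (3*h*h+Q) = b1 at *
  generalize GG p (3*h*h+5*Q) = b5 at *
  generalize GG p (3*h*h+9*Q) = b9 at *
  generalize GG p (h+2*Q) = t2 at *
  generalize GG p (h+6*Q) = t6 at *
  generalize GG p (h+10*Q) = t10 at *
  generalize GG p (1 + ((5*m:ℕ):ZMod (p^3))) = g5 at *
  generalize GG p (1 + ((6*m:ℕ):ZMod (p^3))) = g6 at *
  generalize GG p (1 + ((9*m:ℕ):ZMod (p^3))) = g9 at *
  generalize GG p (1 + ((10*m:ℕ):ZMod (p^3))) = g10 at *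
  generalize (((2*m).choose m : ℕ):ZMod (p^3)) = C2 at *
  generalize (((6*m).choose m : ℕ):ZMod (p^3)) = C6 at *
  generalize (((10*m).choose m : ℕ):ZMod (p^3)) = C10 at *
  generalize (((10*m).choose (5*m) : ℕ):ZMod (p^3)) = C15 at *
  norm_num at B2 B6 B10 D10
  refine ⟨by linear_combination B2, ?_, ?_, ?_⟩
  · apply cancelN hp n2
    push_cast
    linear_combination (1-20*Q)*(1-12*Q)*B6 + C6*b1*(1-12*Q)*a5 + (1-20*Q)*a6
  · apply cancelN hp n4
    push_cast
    linear_combination (5-36*Q)*(1-36*Q)*(3-20*Q)*(1-20*Q)*B10 + C10*b1*(3-20*Q)*(1-20*Q)*a9 + (5-36*Q)*(1-36*Q)*a10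
  · apply cancelN hp (prime_not_dvd_mul hp n4 n2)
    push_cast
    linear_combination (1-20*Q)^2*(3-20*Q)*(1-20*Q)*D10 + C15*(3-20*Q)*(1-20*Q)*(4*b5+g5*(1-20*Q))*a5 + 2*(1-20*Q)^2*a10
end Binom

end ModM10d

section ModM10e
open Finset

section JacFinal
variable {p : ℕ}

theorem expand_id {R : Type*} [CommRing R] {Q A0 A1 A2 C0 C1 C2 : R} (hQ : Q^3 = 0) :
    (1-4*Q)*(15*(4*(1-12*Q)*(3-20*Q)*(1-20*Q))*(A0+A1*(2*Q)+A2*(2*Q)^2)*(C0+C1*(1*Q)+C2*(1*Q)^2)^2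
      - 40*(3-20*Q)*(1-20*Q)^2*(A0+A1*(6*Q)+A2*(6*Q)^2)*(C0+C1*(1*Q)+C2*(1*Q)^2)*(C0+C1*(5*Q)+C2*(5*Q)^2)
      + 6*(1-12*Q)*(5-36*Q)*(1-36*Q)*(A0+A1*(10*Q)+A2*(10*Q)^2)*(C0+C1*(1*Q)+C2*(1*Q)^2)*(C0+C1*(9*Q)+C2*(9*Q)^2)
      + 6*(1-12*Q)*(1-20*Q)^2*(A0+A1*(10*Q)+A2*(10*Q)^2)*(C0+C1*(5*Q)+C2*(5*Q)^2)^2)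
    = 8*(4*(1-12*Q)*(3-20*Q)*(1-20*Q))*A0*C0^2 := by
  linear_combination (A2*C2^2*((510720)*Q^3 + (-29944320)*Q^4 + (558888960)*Q^5 + (-4058112000)*Q^6 + (9075916800)*Q^7)
    + A2*C1*C2*((291840)*Q^2 + (-17879040)*Q^3 + (323051520)*Q^4 + (-2241331200)*Q^5 + (4866048000)*Q^6)
    + A2*C1^2*((21120)*Q^1 + (-1374720)*Q^2 + (25282560)*Q^3 + (-180019200)*Q^4 + (398131200)*Q^5)
    + A2*C0*C2*((165120)*Q^1 + (-10613760)*Q^2 + (183275520)*Q^3 + (-1185792000)*Q^4 + (2447769600)*Q^5)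
    + A2*C0*C1*((11520) + (-860160)*Q^1 + (15237120)*Q^2 + (-103219200)*Q^3 + (221184000)*Q^4)
    + A2*C0^2*((-23040) + (399360)*Q^1 + (-3072000)*Q^2 + (7372800)*Q^3)
    + A1*C2^2*((44160)*Q^2 + (-2641920)*Q^3 + (49920000)*Q^4 + (-368394240)*Q^5 + (832634880)*Q^6)
    + A1*C1*C2*((21120)*Q^1 + (-1374720)*Q^2 + (25282560)*Q^3 + (-180019200)*Q^4 + (398131200)*Q^5)
    + A1*C1^2*((960) + (-76800)*Q^1 + (1474560)*Q^2 + (-11304960)*Q^3 + (26296320)*Q^4)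
    + A1*C0*C2*((9600) + (-706560)*Q^1 + (12288000)*Q^2 + (-80609280)*Q^3 + (168591360)*Q^4)
    + A1*C0*C1*((-23040) + (399360)*Q^1 + (-3072000)*Q^2 + (7372800)*Q^3)
    + A1*C0^2*((-30720) + (245760)*Q^1 + (-491520)*Q^2)
    + A0*C2^2*((3360)*Q^1 + (-209536)*Q^2 + (4055552)*Q^3 + (-30930944)*Q^4 + (71385088)*Q^5)
    + A0*C1*C2*((960) + (-76800)*Q^1 + (1474560)*Q^2 + (-11304960)*Q^3 + (26296320)*Q^4)
    + A0*C1^2*((-1664) + (30208)*Q^1 + (-342016)*Q^2 + (991232)*Q^3)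
    + A0*C0*C2*((-19712) + (338944)*Q^1 + (-2387968)*Q^2 + (5390336)*Q^3)
    + A0*C0*C1*((-30720) + (245760)*Q^1 + (-491520)*Q^2)
    + A0*C0^2*((-57344) + (360448)*Q^1))*hQ

theorem jac_value [Fact p.Prime] {m : ℕ} (h0 : 2 < m) (hm : p = 4*m+1) {h : ZMod (p^3)} (hh : 2*h = 1) :
    (∑ t : ZMod p, om p t ^ (3*m) * om p (1-t) ^ (2*m)) * GG p (3*h*h)^2 = (-1)^m * GG p h := by
  have hp : p.Prime := Fact.out
  have h3 : 3 < p := by omega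
  have hP : (p:ZMod (p^3))^3 = 0 := pcube
  obtain ⟨Q, hQd⟩ : ∃ Q : ZMod (p^3), Q = (p:ZMod (p^3))*(h*h) := ⟨_, rfl⟩
  have hQ : 4*Q = (p:ZMod (p^3)) := by rw [hQd]; linear_combination (p:ZMod (p^3))*(2*h+1)*hh
  have hQ3 : Q^3 = 0 := by rw [hQd]; linear_combination h^6*hP
  have fA := GG_quad h3 h
  have fB := GG_quad h3 (3*h*h)
  obtain ⟨c, fC, hc⟩ := fB.exists_inv hP (GG_isUnit _)
  obtain ⟨A0, A1, A2, eA⟩ := fA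
  obtain ⟨C0, C1, C2, eC⟩ := fC
  have vA : ∀ n : ZMod (p^3), GG p (h + n*Q) = A0 + A1*(n*Q)+A2*(n*Q)^2 := by
    intro n
    have := eA (n*(h*h))
    beta_reduce at this
    rw [show h + n*Q = h + (p:ZMod (p^3))*(n*(h*h)) by rw [hQd]; ring, this, hQd]
    ring
  have vC : ∀ n : ZMod (p^3), GG p (3*h*h + n*Q) * (C0 + C1*(n*Q)+C2*(n*Q)^2) = 1 := by
    intro n
    have := hc (n*(h*h))
    beta_reduce at this
    rw [eC] at this
    rw [show 3*h*h + n*Q = 3*h*h + (p:ZMod (p^3))*(n*(h*h)) by rw [hQd]; ring, ← this, hQd]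
    ring
  have v0 := vA 0
  have w0 := vC 0
  rw [zero_mul, add_zero] at v0 w0
  obtain ⟨B2, B6, B10, B15⟩ := binoms h0 hm hh hQ
  have J := jac_binom h3 (by omega) hm
  have X := expand_id (A0 := A0) (A1 := A1) (A2 := A2) (C0 := C0) (C1 := C1) (C2 := C2) hQ3
  have w1 := vC 1
  rw [show 3*h*h + 1*Q = 3*h*h + Q by ring] at w1
  have w5 := vC 5
  have w9 := vC 9
  rw [vA] at B2 B6 B10 B15
  rw [v0]
  have u2 : IsUnit ((2:ℕ):ZMod (p^3)) := natUnit hp 3 (not_dvd_lt (by omega) (by omega))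
  have u3 : IsUnit ((3:ℕ):ZMod (p^3)) := natUnit hp 3 (not_dvd_lt (by omega) (by omega))
  have hU2 : IsUnit (8*(4*(1-12*Q)*(3-20*Q)*(1-20*Q))) := by
    have e : 8*(4*(1-12*Q)*(3-20*Q)*(1-20*Q)) = ((2:ℕ):ZMod (p^3))^5 * (1 + (p:ZMod (p^3))*(-3)) * (((3:ℕ):ZMod (p^3)) + (p:ZMod (p^3))*(-5)) * (1 + (p:ZMod (p^3))*(-5)) := by
      rw [← hQ]; push_cast; ring
    rw [e]
    exact (((u2.pow 5).mul ((P_isUnit_add _ _).2 isUnit_one)).mul ((P_isUnit_add _ _).2 u3)).mul ((P_isUnit_add _ _).2 isUnit_one)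
  apply hU2.mul_left_cancel
  rw [← hQ] at J
  generalize (∑ t : ZMod p, om p t ^ (3*m) * om p (1-t) ^ (2*m)) = S at *
  generalize GG p (3*h*h+Q) = b1 at *
  generalize GG p (3*h*h+5*Q) = b5 at *
  generalize GG p (3*h*h+9*Q) = b9 at *
  generalize GG p (3*h*h) = b0 at *
  generalize (A0+A1*(2*Q)+A2*(2*Q)^2) = t2 at *
  generalize (A0+A1*(6*Q)+A2*(6*Q)^2) = t6 at *
  generalize (A0+A1*(10*Q)+A2*(10*Q)^2) = t10 at *
  generalize (C0+C1*(1*Q)+C2*(1*Q)^2) = c1 at *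
  generalize (C0+C1*(5*Q)+C2*(5*Q)^2) = c5 at *
  generalize (C0+C1*(9*Q)+C2*(9*Q)^2) = c9 at *
  generalize (((2*m).choose m : ℕ):ZMod (p^3)) = D2 at *
  generalize (((6*m).choose m : ℕ):ZMod (p^3)) = D6 at *
  generalize (((10*m).choose m : ℕ):ZMod (p^3)) = D10 at *
  generalize (((10*m).choose (5*m) : ℕ):ZMod (p^3)) = D15 at *
  generalize (-1:ZMod (p^3))^m = η at *
  have k0 : b0*C0 = 1 := by linear_combination w0
  have k2 : D2 = -t2*c1^2 := by linear_combination c1^2*B2 - D2*(b1*c1+1)*w1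
  have k6 : D6*2*(1-12*Q) = -t6*(1-20*Q)*(c1*c5) := by linear_combination (c1*c5)*B6 - D6*2*(1-12*Q)*(w1*(b5*c5)+w5)
  have k10 : D10*4*(3-20*Q)*(1-20*Q) = -t10*(5-36*Q)*(1-36*Q)*(c1*c9) := by linear_combination (c1*c9)*B10 - D10*4*(3-20*Q)*(1-20*Q)*(w1*(b9*c9)+w9)
  have k15 : D15*2*(3-20*Q)*(1-20*Q) = -t10*(1-20*Q)^2*c5^2 := by linear_combination c5^2*B15 - D15*2*(3-20*Q)*(1-20*Q)*(b5*c5+1)*w5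
  have T : 8*(4*(1-12*Q)*(3-20*Q)*(1-20*Q))*S = 8*(4*(1-12*Q)*(3-20*Q)*(1-20*Q))*A0*C0^2*η := by
    linear_combination (4*(1-12*Q)*(3-20*Q)*(1-20*Q))*J + η*X + (4*Q-1)*η*(15*(4*(1-12*Q)*(3-20*Q)*(1-20*Q))*k2 - 40*(3-20*Q)*(1-20*Q)*k6 + 6*(1-12*Q)*k10 + 6*(1-12*Q)*k15)
  linear_combination b0^2*T + 8*(4*(1-12*Q)*(3-20*Q)*(1-20*Q))*A0*η*(b0*C0+1)*k0
end JacFinal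

end ModM10e

section ModM11
open Finset

section CaseOne
variable {p : ℕ}

theorem case_five (x y : ℤ) (h : (5:ℤ) = x^2+4*y^2) :
    ((5:ℕ):ℤ)^3 ∣ ((-1:ℚ)^(5/4) * SS 5 2 - ((x:ℚ)^2/27 - ((5:ℕ):ℚ)/18 + ((5:ℕ):ℚ)^2/(216*(x:ℚ)^2))).num ∧
    ((5:ℕ):ℤ)^3 ∣ ((-1:ℚ)^(5/4) * SS 5 3 - (-(x:ℚ)^2/162 - ((5:ℕ):ℚ)/216 - ((5:ℕ):ℚ)^2/(1296*(x:ℚ)^2))).num := by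
  have hx : x^2 = 1 := by
    have : y^2 ≤ 1 := by nlinarith [sq_nonneg x]
    have : y ≤ 1 := by nlinarith
    have : -1 ≤ y := by nlinarith
    have : x ≤ 2 := by nlinarith
    have : -2 ≤ x := by nlinarith
    interval_cases y <;> interval_cases x <;> simp_all
  have hx' : (x:ℚ)^2 = 1 := by exact_mod_cast hx
  rw [neg_div, hx']
  constructor
  · have : ((-1:ℚ)^(5/4) * SS 5 2 - (1/27 - ((5:ℕ):ℚ)/18 + ((5:ℕ):ℚ)^2/(216*1))) = (mkRat (73973125) 536870912) := by
      rw [Rat.mkRat_eq_div]; norm_num [SS, sum_range_succ, Nat.choose]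
    rw [this]; decide +kernel
  · have : ((-1:ℚ)^(5/4) * SS 5 3 - (-(1/162) - ((5:ℕ):ℚ)/216 - ((5:ℕ):ℚ)^2/(1296*1))) = (mkRat (71190125) 1207959552) := by
      rw [Rat.mkRat_eq_div]; norm_num [SS, sum_range_succ, Nat.choose]
    rw [this]; decide +kernel

theorem case_one [Fact p.Prime] {m : ℕ} (h0 : 2 < m) (hm : p = 4*m+1) (x y : ℤ) (h : (p:ℤ) = x^2+4*y^2) :
    (p:ℤ)^3 ∣ ((-1:ℚ)^m * SS p 2 - ((x:ℚ)^2/27 - (p:ℚ)/18 + (p:ℚ)^2/(216*(x:ℚ)^2))).num ∧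
    (p:ℤ)^3 ∣ ((-1:ℚ)^m * SS p 3 - (-(x:ℚ)^2/162 - (p:ℚ)/216 - (p:ℚ)^2/(1296*(x:ℚ)^2))).num := by
  have hp : p.Prime := Fact.out
  have h3 : 3 < p := by omega
  have n2 : ¬ p ∣ 2 := not_dvd_lt (by norm_num) (by omega)
  have n3 : ¬ p ∣ 3 := not_dvd_lt (by norm_num) (by omega)
  have n216 : ¬ p ∣ 216 := by
    rw [show 216 = (2*3)*(2*3)*(2*3) by rfl]
    have := prime_not_dvd_mul hp n2 n3
    exact prime_not_dvd_mul hp (prime_not_dvd_mul hp this this) this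
  have n1296 : ¬ p ∣ 1296 := by
    rw [show 1296 = (2*3)*216 by rfl]
    exact prime_not_dvd_mul hp (prime_not_dvd_mul hp n2 n3) n216
  obtain ⟨H, hH⟩ : ∃ H : ZMod (p^3), 2*H = 1 := by
    obtain ⟨w, hw⟩ := (natUnit hp 3 n2).exists_right_inv
    exact ⟨w, by push_cast at hw; exact hw⟩
  obtain ⟨x0, hX, ex⟩ := X_one h3 hm hH
  obtain ⟨q0, hQ, eq⟩ := Q_one hp h3 hm (C_zero hm).1
  obtain ⟨y0, hY, ey⟩ := Y_one h3 hm hH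
  have hn : (p-1)/2 = 2*m := by omega
  obtain ⟨s2, s3, hs2, hs3, e2, e3⟩ := S23 hp h3 three_ne_zero (by norm_num) x0 q0 y0 (by rw [hn]; exact hX) (by rw [hn]; exact hQ) (by rw [hn]; exact hY)
  have rη : QRed (p^3) ((-1:ℚ)^m) ((-1)^m) := QRed.one.neg.pow m
  have hs : ((-1:ZMod (p^3))^m)^2 = 1 := by rw [← pow_mul, mul_comm, pow_mul]; simp
  have jv := jac_value h0 hm hH
  obtain ⟨A, B, hA, hAB, π', e1, e4⟩ := gauss_jac h3 (by omega) hm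
  have hAx := two_sq_unique hp hAB h hA (by omega)
  -- x is a unit
  have hxne : (x:ℤ) ≠ 0 := by
    rintro rfl
    obtain ⟨c, hc⟩ := hA
    have : A = 0 := by nlinarith
    omega
  have ub := GG_isUnit (3*H*H : ZMod (p^3))
  have ua := GG_isUnit (H : ZMod (p^3))
  have gs : GG p H ^4 = 1 := by
    have := GG_refl h3 H
    rw [show 1 - H = H by linear_combination -hH] at this
    rw [← this]; ring
  have hxA : (A:ZMod (p^3))^2 = (x:ZMod (p^3))^2 := by exact_mod_cast congrArg (Int.cast : ℤ → ZMod (p^3)) hAx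
  have hP : (p:ZMod (p^3))^3 = 0 := pcube
  generalize (∑ t : ZMod p, om p t ^ (3*m) * om p (1-t) ^ (2*m)) = S at *
  obtain ⟨b', hb⟩ := ub.exists_right_inv
  obtain ⟨s', hss⟩ : ∃ s', S * s' = 1 := by
    refine ⟨GG p (3*H*H)^2 * ((-1)^m * GG p H^3), ?_⟩
    linear_combination (-1)^m*GG p H^3 * jv + GG p H^4*hs + gs
  have eπ : π' = (p:ZMod (p^3)) * s' := by linear_combination s'*e1 - π'*hss
  have ux : IsUnit ((x:ZMod (p^3))^2) := by
    have e : ((2:ℕ):ZMod (p^3))^2 * (x:ZMod (p^3))^2 = S^2 + (p:ZMod (p^3))*(2 + (p:ZMod (p^3))*s'^2) := by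
      rw [← hxA]; push_cast
      rw [eπ] at e1 e4
      linear_combination (2*(A:ZMod (p^3)) + S + (p:ZMod (p^3))*s')*e4 + 2*e1
    have : IsUnit (S^2 + (p:ZMod (p^3))*(2 + (p:ZMod (p^3))*s'^2)) := by
      rw [P_isUnit_add]; exact (IsUnit.of_mul_eq_one _ hss).pow 2
    rw [← e] at this
    exact isUnit_of_mul_isUnit_right this
  have hxq : ((x:ℚ)^2) ≠ 0 := pow_ne_zero 2 (by exact_mod_cast hxne)
  obtain ⟨ι, hι, eι⟩ := rep_of_mul (a := 1/(x:ℚ)^2) hp (r := 3) (by norm_num) ((QRed.int x).pow 2) QRed.one ux hxq (by field_simp)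
  have hXr : QRed (p^3) ((x:ℚ)^2) ((x:ZMod (p^3))^2) := (QRed.int x).pow 2
  have hPr : QRed (p^3) (p:ℚ) (p:ZMod (p^3)) := QRed.nat p
  have key : 4*(x:ZMod (p^3))^2 = S^2 + 2*(p:ZMod (p^3)) + (p:ZMod (p^3))^2*s'^2 := by
    rw [← hxA]
    rw [eπ] at e1 e4
    linear_combination (2*(A:ZMod (p^3)) + S + (p:ZMod (p^3))*s')*e4 + 2*e1
  have hx0 : x0 = (-1)^m*S^2 := by
    generalize (-1:ZMod (p^3))^m = η at *
    generalize GG p (3*H*H) = b at *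
    generalize GG p H = a at *
    have : x0*b^4 = η*S^2*b^4 := by
      linear_combination ex - η*(S*b^2+η*a)*jv - η*a^2*hs
    linear_combination b'^4*this - (x0-η*S^2)*(b^3*b'^3+b^2*b'^2+b*b'+1)*hb
  have hy0 : 36*y0 = (-1)^m*(p:ZMod (p^3))^2*s'^2 := by
    generalize (-1:ZMod (p^3))^m = η at *
    generalize GG p (3*H*H) = b at *
    generalize GG p H = a at *
    have k1 : b^4*a^2 = s'^2 := by
      have k : S^2*b^4 = a^2 := by linear_combination (S*b^2+η*a)*jv + a^2*hs
      linear_combination s'^2*a^2*k - b^4*a^2*(S*s'+1)*hss + s'^2*gs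
    linear_combination ey + (p:ZMod (p^3))^2*η*k1
  have kι : (p:ZMod (p^3))^2*ι = 4*(p:ZMod (p^3))^2*s'^2 := by
    generalize (p:ZMod (p^3)) = P at *
    generalize (x:ZMod (p^3)) = X at *
    linear_combination -ι*s'^2*P^2*key - P^2*ι*(S*s'+1)*hss + 4*P^2*s'^2*eι - ι*s'^2*(2+P*s'^2)*hP
  subst hx0
  generalize (-1:ZMod (p^3))^m = ζ at *
  constructor
  · refine QRed.finish hp three_ne_zero 216 (by norm_num) n216 (rη.mul hs2) (β := ((8:ℕ):ZMod (p^3)) * (x:ZMod (p^3))^2 - ((12:ℕ):ZMod (p^3)) * (p:ZMod (p^3)) + (p:ZMod (p^3))^2*ι) ?_ ?_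
    · have := (((QRed.nat 8).mul hXr).sub ((QRed.nat 12).mul hPr)).add ((hPr.pow 2).mul hι)
      convert this using 1
      push_cast; field_simp; ring
    · push_cast
      linear_combination 2*ζ*e2 - 8*ζ*eq + 6*ζ*hy0 - 2*key - kι + (2*S^2 - 8*(p:ZMod (p^3)) + 6*(p:ZMod (p^3))^2*s'^2)*hs
  · refine QRed.finish hp three_ne_zero 1296 (by norm_num) n1296 (rη.mul hs3) (β := -(((8:ℕ):ZMod (p^3)) * (x:ZMod (p^3))^2) - ((6:ℕ):ZMod (p^3)) * (p:ZMod (p^3)) - (p:ZMod (p^3))^2*ι) ?_ ?_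
    · have := ((((QRed.nat 8).mul hXr).neg).sub ((QRed.nat 6).mul hPr)).sub ((hPr.pow 2).mul hι)
      convert this using 1
      push_cast; field_simp; ring
    · push_cast
      linear_combination 18*ζ*e3 - 18*ζ*eq - 18*(p:ZMod (p^3))*hs - 2*ζ*e2 + 8*ζ*eq - 6*ζ*hy0 + 2*key + kι - (2*S^2 - 8*(p:ZMod (p^3)) + 6*(p:ZMod (p^3))^2*s'^2)*hs
end CaseOne

end ModM11

theorem statement2 (p : ℕ) (hp : p.Prime) (hp2 : p ≠ 2) :
    (∀ x y : ℤ, p % 4 = 1 → (p : ℤ) = x^2 + 4*y^2 →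
      ratCongr p 3
        ((-1:ℚ)^(p/4) *
          ∑ k ∈ Finset.range p, (k:ℚ)^2 * ((2*k).choose k : ℚ)^3 / (-512)^k)
        ((x:ℚ)^2/27 - (p:ℚ)/18 + (p:ℚ)^2/(216*(x:ℚ)^2)) ∧
      ratCongr p 3
        ((-1:ℚ)^(p/4) *
          ∑ k ∈ Finset.range p, (k:ℚ)^3 * ((2*k).choose k : ℚ)^3 / (-512)^k)
        (-(x:ℚ)^2/162 - (p:ℚ)/216 - (p:ℚ)^2/(1296*(x:ℚ)^2))) ∧
    (p % 4 = 3 → p ≠ 3 →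
      ratCongr p 2
        ((-1:ℚ)^(p/4) *
          ∑ k ∈ Finset.range p, (k:ℚ)^2 * ((2*k).choose k : ℚ)^3 / (-512)^k)
        (-(1/18)*R1 p - (p:ℚ)/27) ∧
      ratCongr p 2
        ((-1:ℚ)^(p/4) *
          ∑ k ∈ Finset.range p, (k:ℚ)^3 * ((2*k).choose k : ℚ)^3 / (-512)^k)
        (1/108*R1 p - 5/648*(p:ℚ))) := by
  refine ⟨fun x y h1 h => ?_, fun h3 hp3 => case_three hp h3 hp3⟩
  haveI := Fact.mk hp
  by_cases h5 : p = 5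
  · subst h5
    exact case_five x y h
  · have hm : p = 4*(p/4)+1 := by omega
    have h9 : p ≠ 9 := by
      rintro rfl
      norm_num at hp
    have h2 := hp.two_le
    exact case_one (by omega) hm x y h
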